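/- arXiv:2511.05322 — 3 statements merged into one kernel-verified Lean document; each statement's English description precedes it below -/
import Mathlib

section
/- With F = ℚ(ζ_m), F₀ its maximal totally real subfield, and λ ∈ O_{F₀} totally positive, coprime to m, prime, of odd norm, with −λ a square mod 4·O_{F₀}, and inert in F/F₀: if the class number of F is odd, then the class numbers of E = F(√(−λ)) and of its maximal totally real subfield E₀ are both odd. -/
open NumberField

theorem index_two_range_prod {H A T : Type*} [AddCommGroup H] [AddCommGroup A] [AddCommGroup T]
    [Module.Finite ℤ A] [Module.Free ℤ A] [Finite T] (f : H ≃+ A × T) :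
    (nsmulAddMonoidHom 2 : H →+ H).range.index
      = 2 ^ Module.finrank ℤ H * Nat.card (nsmulAddMonoidHom 2 : H →+ H).ker := by
  have h1 : (nsmulAddMonoidHom 2 : H →+ H).range.index
      = (nsmulAddMonoidHom 2 : A × T →+ A × T).range.index := by
    simpa [AddEquiv.map_range_nsmulAddMonoidHom]
        using (AddSubgroup.index_map_equiv (nsmulAddMonoidHom (α := H) 2).range f).symm
  have h2 : (nsmulAddMonoidHom 2 : A × T →+ A × T).range
      = AddSubgroup.prod (nsmulAddMonoidHom 2 : A →+ A).range (nsmulAddMonoidHom 2 : T →+ T).range := by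
    ext ⟨a, t⟩
    simp [AddSubgroup.mem_prod]
  have h3 : Nat.card (nsmulAddMonoidHom 2 : H →+ H).ker
      = Nat.card (nsmulAddMonoidHom 2 : T →+ T).ker := by
    refine Nat.card_congr ⟨fun x => ⟨(f x.1).2, ?_⟩, fun t => ⟨f.symm (0, t.1), ?_⟩, ?_, ?_⟩
    · have := x.2
      rw [AddMonoidHom.mem_ker, nsmulAddMonoidHom_apply] at this ⊢
      rw [← Prod.smul_snd, ← map_nsmul, this]; simp
    · have := t.2
      rw [AddMonoidHom.mem_ker, nsmulAddMonoidHom_apply] at this ⊢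
      rw [← map_nsmul, Prod.smul_mk, this]; simp
    · intro x
      ext
      have := x.2
      rw [AddMonoidHom.mem_ker, nsmulAddMonoidHom_apply] at this
      have h4 : (f x.1).1 = 0 := by
        have h5 : 2 • (f x.1).1 = 0 := by
          rw [← Prod.smul_fst, ← map_nsmul, this]; simp
        have : IsAddTorsionFree A := Module.isTorsionFree_int_iff_isAddTorsionFree.mp inferInstance
        simpa using h5
      simp only
      rw [AddEquiv.symm_apply_eq]
      ext <;> simp [h4]
    · intro t
      ext
      simp
  have h4 : Module.finrank ℤ H = Module.finrank ℤ A := by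
    rw [LinearEquiv.finrank_eq f.toIntLinearEquiv]
    have hle : LinearMap.ker (LinearMap.fst ℤ A T) ≤ Submodule.torsion ℤ (A × T) := by
      rintro ⟨a, t⟩ hx
      have ha : a = 0 := by simpa using hx
      rw [Submodule.mem_torsion_iff]
      refine ⟨⟨(Nat.card T : ℤ), mem_nonZeroDivisors_of_ne_zero (by have : Nonempty T := ⟨t⟩; exact_mod_cast Nat.card_pos.ne')⟩, ?_⟩
      have : (Nat.card T : ℤ) • t = 0 := by
        rw [natCast_zsmul, card_nsmul_eq_zero']
      simp only [Submonoid.mk_smul, Prod.smul_mk, this, ha, smul_zero]; rfl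
    rw [← finrank_quotient_eq_of_le_torsion hle]
    exact (LinearMap.quotKerEquivOfSurjective (LinearMap.fst ℤ A T)
      LinearMap.fst_surjective).finrank_eq
  rw [h1, h2, AddSubgroup.index_prod, AddSubgroup.index_range_nsmul, h3, h4,
    AddSubgroup.index_range]

theorem index_two_range {H : Type*} [AddCommGroup H] [Module.Finite ℤ H] :
    (nsmulAddMonoidHom 2 : H →+ H).range.index
      = 2 ^ Module.finrank ℤ H * Nat.card (nsmulAddMonoidHom 2 : H →+ H).ker := by
  have hfg : AddGroup.FG H := Module.Finite.iff_addGroup_fg.mp inferInstance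
  obtain ⟨n, ι, fι, p, hp, e, ⟨f⟩⟩ := AddCommGroup.equiv_free_prod_directSum_zmod H
  have hTfin : Finite (DirectSum ι fun i : ι => ZMod (p i ^ e i)) := by
    classical
    have : ∀ i, NeZero (p i ^ e i) := fun i => ⟨(pow_pos (hp i).pos _).ne'⟩
    exact Finite.of_equiv _ (DirectSum.addEquivProd fun i : ι => ZMod (p i ^ e i)).symm.toEquiv
  exact index_two_range_prod f
theorem finrank_range_ker_int {M N : Type*} [AddCommGroup M] [AddCommGroup N] [Module.Finite ℤ M]
    (g : M →ₗ[ℤ] N) : Module.finrank ℤ (LinearMap.range g) + Module.finrank ℤ (LinearMap.ker g)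
      = Module.finrank ℤ M := by
  rw [← (LinearMap.ker g).finrank_quotient_add_finrank, g.quotKerEquivRange.finrank_eq]

theorem herbrand_half {M : Type*} [AddCommGroup M] [Module.Finite ℤ M] (f f' : M →+ M)
    (hsumm : ∀ x, f x + f' x = 2 • x) (h0 : ∀ x, f' (f x) = 0) :
    (f'.ker ⊔ f.ker).index * f.range.relIndex f'.ker
      = 2 ^ Module.finrank ℤ f'.ker * Nat.card {x : M // f' x = 0 ∧ 2 • x = 0} := by
  have : Module.Finite ℤ f'.ker :=
    inferInstanceAs (Module.Finite ℤ (AddSubgroup.toIntSubmodule f'.ker))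
  have h1 : f'.ker.map f = f'.ker.map (nsmulAddMonoidHom 2) := by
    ext y
    simp only [AddSubgroup.mem_map, AddMonoidHom.mem_ker, nsmulAddMonoidHom_apply]
    refine exists_congr fun x => and_congr_right fun hx => ?_
    rw [← hsumm x, hx, add_zero]
  have h2 : (f'.ker.map f).relIndex f.range = (f'.ker ⊔ f.ker).index := by
    rw [AddMonoidHom.range_eq_map, AddSubgroup.relIndex_map_map, top_sup_eq,
      AddSubgroup.relIndex_top_right]
  have h3 : f.range ≤ f'.ker := by
    rintro _ ⟨x, rfl⟩
    exact h0 x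
  have h4 : f'.ker.map f ≤ f.range := by
    rw [AddMonoidHom.range_eq_map]; exact AddSubgroup.map_mono le_top
  rw [← h2, AddSubgroup.relIndex_mul_relIndex _ _ _ h4 h3, h1, AddSubgroup.relIndex,
    AddSubgroup.addSubgroupOf_map_nsmulAddMonoidHom_eq_range, index_two_range]
  congr 1
  refine Nat.card_congr ⟨fun x => ⟨x.1.1, x.1.2, ?_⟩, fun x => ⟨⟨x.1, x.2.1⟩, ?_⟩, ?_, ?_⟩
  · have := x.2
    rw [AddMonoidHom.mem_ker, nsmulAddMonoidHom_apply] at this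
    exact congrArg Subtype.val this
  · rw [AddMonoidHom.mem_ker, nsmulAddMonoidHom_apply]
    exact Subtype.ext x.2.2
  · intro x; rfl
  · intro x; rfl

theorem finite_two_torsion {M : Type*} [AddCommGroup M] [Module.Finite ℤ M] :
    Finite {x : M // 2 • x = 0} := by
  have : Module.Finite ℤ (AddSubgroup.toIntSubmodule (nsmulAddMonoidHom 2 : M →+ M).ker) := inferInstance
  have h := Module.finite_of_fg_torsion (AddSubgroup.toIntSubmodule (nsmulAddMonoidHom 2 : M →+ M).ker) ?_
  · exact h
  · intro x
    refine ⟨⟨2, by simp⟩, ?_⟩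
    have : 2 • x.1 = 0 := x.2
    ext
    exact (ofNat_zsmul x.1 2).trans this

theorem finrank_range_norm {M : Type*} [AddCommGroup M] [Module.Finite ℤ M] (f f' : M →+ M)
    (hsumm : ∀ x, f x + f' x = 2 • x) (h0 : ∀ x, f' (f x) = 0) :
    Module.finrank ℤ f'.ker + Module.finrank ℤ f.ker = Module.finrank ℤ M := by
  have h1 := finrank_range_ker_int f.toIntLinearMap
  have h2 : Module.finrank ℤ f'.ker = Module.finrank ℤ (LinearMap.range f.toIntLinearMap) := by
    have : Module.Finite ℤ f'.ker :=
      inferInstanceAs (Module.Finite ℤ (AddSubgroup.toIntSubmodule f'.ker))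
    apply le_antisymm
    · let g : f'.ker →ₗ[ℤ] M := f.toIntLinearMap ∘ₗ f'.ker.subtype.toIntLinearMap
      have h3 := finrank_range_ker_int g
      have h4 : Module.finrank ℤ (LinearMap.ker g) = 0 := by
        rw [Module.finrank_eq_zero_iff_isTorsion]
        intro x
        refine ⟨⟨2, by simp⟩, ?_⟩
        have hx : f x.1.1 = 0 := x.2
        have hx' : f' x.1.1 = 0 := x.1.2
        have := hsumm x.1.1
        rw [hx, hx'] at this
        ext
        have h5 : (2:ℤ) • x.1.1 = 0 := by
          rw [add_zero] at this
          rw [this]; exact ofNat_zsmul _ _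
        exact h5
      have h5 : LinearMap.range g ≤ LinearMap.range f.toIntLinearMap := by
        rintro _ ⟨x, rfl⟩; exact ⟨x.1, rfl⟩
      have := Submodule.finrank_mono h5
      omega
    · have h5 : LinearMap.range f.toIntLinearMap ≤ AddSubgroup.toIntSubmodule f'.ker := by
        rintro _ ⟨x, rfl⟩; exact h0 x
      exact Submodule.finrank_mono h5
  rw [h2]
  exact h1

theorem herbrand_add {M : Type*} [AddCommGroup M] [Module.Finite ℤ M] (f f' : M →+ M)
    (hsumm : ∀ x, f x + f' x = 2 • x) (h0 : ∀ x, f' (f x) = 0) (h0' : ∀ x, f (f' x) = 0)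
    (hrank : Module.finrank ℤ M = 2 * Module.finrank ℤ f'.ker + 1) :
    2 * f.range.relIndex f'.ker = f'.range.relIndex f.ker ∧ f.range.relIndex f'.ker ≠ 0 := by
  have h1 := herbrand_half f f' hsumm h0
  have h2 := herbrand_half f' f (fun x => by rw [add_comm, hsumm]) h0'
  have h3 := finrank_range_norm f f' hsumm h0
  have h4 : {x : M // f' x = 0 ∧ 2 • x = 0} ≃ {x : M // f x = 0 ∧ 2 • x = 0} :=
    Equiv.subtypeEquivRight fun x => by
      refine and_congr_left fun hx => ?_
      have := hsumm x
      rw [hx] at this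
      constructor
      · intro h; rwa [h, add_zero] at this
      · intro h; rwa [h, zero_add] at this
  have h5 : Finite {x : M // f x = 0 ∧ 2 • x = 0} := by
    have := finite_two_torsion (M := M)
    exact Finite.of_injective (fun x => (⟨x.1, x.2.2⟩ : {x : M // 2 • x = 0}))
      (fun a b h => Subtype.ext (congrArg (fun z => z.1) h))
  have h6 : 0 < Nat.card {x : M // f x = 0 ∧ 2 • x = 0} := by
    have : Nonempty {x : M // f x = 0 ∧ 2 • x = 0} := ⟨⟨0, by simp⟩⟩
    exact Nat.card_pos
  rw [Nat.card_congr h4] at h1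
  have h7 : Module.finrank ℤ f.ker = Module.finrank ℤ f'.ker + 1 := by omega
  rw [h7, sup_comm, pow_succ] at h2
  have h8 : (f'.ker ⊔ f.ker).index * f.range.relIndex f'.ker ≠ 0 := by
    rw [h1]; positivity
  refine ⟨?_, right_ne_zero_of_mul h8⟩
  apply Nat.eq_of_mul_eq_mul_left (Nat.pos_of_ne_zero (left_ne_zero_of_mul h8))
  rw [h2, ← mul_assoc, mul_comm _ 2, mul_assoc, h1]
  ring
theorem herbrand_mul {G : Type*} [CommGroup G] [Module.Finite ℤ (Additive G)] (f f' : G →* G)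
    (hsumm : ∀ x, f x * f' x = x ^ 2) (h0 : ∀ x, f' (f x) = 1) (h0' : ∀ x, f (f' x) = 1)
    (hrank : Module.finrank ℤ (Additive G) = 2 * Module.finrank ℤ (Additive f'.ker) + 1) :
    2 * f.range.relIndex f'.ker = f'.range.relIndex f.ker ∧ f.range.relIndex f'.ker ≠ 0 := by
  have := herbrand_add (M := Additive G) (MonoidHom.toAdditive f) (MonoidHom.toAdditive f')
    hsumm h0 h0' hrank
  exact this
section cls
open nonZeroDivisors

/-- class of a nonzero ideal -/
noncomputable def cls {R : Type*} [CommRing R] [IsDedekindDomain R] (I : Ideal R) (h : I ≠ ⊥) :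
    ClassGroup R := ClassGroup.mk0 ⟨I, mem_nonZeroDivisors_of_ne_zero h⟩

variable {R : Type*} [CommRing R] [IsDedekindDomain R]

theorem cls_eq_iff {I J : Ideal R} (hI : I ≠ ⊥) (hJ : J ≠ ⊥) :
    cls I hI = cls J hJ ↔ ∃ x y : R, x ≠ 0 ∧ y ≠ 0 ∧ Ideal.span {x} * I = Ideal.span {y} * J := by
  rw [cls, cls, ClassGroup.mk0_eq_mk0_iff]
  simp only [exists_prop]

theorem cls_eq_one_iff {I : Ideal R} (hI : I ≠ ⊥) :
    cls I hI = 1 ↔ ∃ x : R, x ≠ 0 ∧ I = Ideal.span {x} := by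
  rw [cls, ClassGroup.mk0_eq_one_iff]
  constructor
  · rintro ⟨x, hx⟩
    refine ⟨x, ?_, hx⟩
    rintro rfl
    apply hI
    simpa using hx
  · rintro ⟨x, -, hx⟩
    exact ⟨x, hx⟩

theorem cls_mul {I J : Ideal R} (hI : I ≠ ⊥) (hJ : J ≠ ⊥) (hIJ : I * J ≠ ⊥) :
    cls (I * J) hIJ = cls I hI * cls J hJ := by
  rw [cls, cls, cls, ← map_mul]; rfl

theorem cls_pow {I : Ideal R} (hI : I ≠ ⊥) (n : ℕ) (hn : I ^ n ≠ ⊥) :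
    cls (I ^ n) hn = cls I hI ^ n := by
  rw [cls, cls, ← map_pow]; rfl

theorem cls_surj (c : ClassGroup R) : ∃ (I : Ideal R) (h : I ≠ ⊥), cls I h = c := by
  obtain ⟨I, rfl⟩ := ClassGroup.mk0_surjective c
  exact ⟨I.1, nonZeroDivisors.ne_zero I.2, rfl⟩

theorem mul_ne_bot {I J : Ideal R} (hI : I ≠ ⊥) (hJ : J ≠ ⊥) : I * J ≠ ⊥ := by
  rw [← Ideal.zero_eq_bot] at *; exact mul_ne_zero hI hJ

theorem span_ne_bot {x : R} (hx : x ≠ 0) : Ideal.span {x} ≠ ⊥ := by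
  simpa using hx

theorem ideal_cancel {I J K : Ideal R} (hI : I ≠ ⊥) (h : I * J = I * K) : J = K :=
  mul_left_cancel₀ (by rwa [← Ideal.zero_eq_bot] at hI) h

theorem map_ne_bot {A B : Type*} [CommRing A] [CommRing B] [IsDomain A] [IsDomain B] [Algebra A B]
    [FaithfulSMul A B] {J : Ideal A} (hJ : J ≠ ⊥) : J.map (algebraMap A B) ≠ ⊥ := by
  rwa [Ne, Ideal.map_eq_bot_iff_of_injective (FaithfulSMul.algebraMap_injective A B)]

theorem eq_one_of_odd {G : Type*} [Group G] {c : G} {n : ℕ} (hn : Odd n) (h : c ^ n = 1)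
    (h2 : c ^ 2 = 1) : c = 1 := by
  have h3 : orderOf c ∣ Nat.gcd n 2 :=
    Nat.dvd_gcd (orderOf_dvd_of_pow_eq_one h) (orderOf_dvd_of_pow_eq_one h2)
  rw [(Nat.coprime_two_right.mpr hn : Nat.gcd n 2 = 1), Nat.dvd_one, orderOf_eq_one_iff] at h3
  exact h3

theorem cls_map_pow {A B : Type*} [CommRing A] [CommRing B] [IsDedekindDomain A]
    [IsDedekindDomain B] [Algebra A B] [FaithfulSMul A B] {J : Ideal A} (hJ : J ≠ ⊥)
    (hJ' : J.map (algebraMap A B) ≠ ⊥) :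
    cls (J.map (algebraMap A B)) hJ' ^ Nat.card (ClassGroup A) = 1 := by
  have h1 : cls J hJ ^ Nat.card (ClassGroup A) = 1 := pow_card_eq_one'
  have hne : J ^ Nat.card (ClassGroup A) ≠ ⊥ := by
    rw [← Ideal.zero_eq_bot] at *; exact pow_ne_zero _ hJ
  have hne' : (J.map (algebraMap A B)) ^ Nat.card (ClassGroup A) ≠ ⊥ := by
    rw [← Ideal.zero_eq_bot] at *; exact pow_ne_zero _ hJ'
  rw [← cls_pow hJ _ hne, cls_eq_one_iff] at h1
  obtain ⟨x, hx, hx'⟩ := h1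
  rw [← cls_pow hJ' _ hne', cls_eq_one_iff]
  refine ⟨algebraMap A B x, ?_, ?_⟩
  · rwa [Ne, FaithfulSMul.algebraMap_eq_zero_iff]
  · rw [← Ideal.map_pow, hx', Ideal.map_span, Set.image_singleton]

end cls

/-- a quadratic involution -/
structure QuadInv (A B : Type*) [CommRing A] [CommRing B] [Algebra A B] (τ : B ≃ₐ[A] B) (s : B) :
    Prop where
  inv : ∀ b, τ (τ b) = b
  fix : ∀ b, τ b = b → ∃ a, algebraMap A B a = b
  s_ne : s ≠ 0
  omega : ∃ w, w - τ w = s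

section quad

variable {A B : Type*} [CommRing A] [CommRing B] [IsDedekindDomain A]
    [IsDedekindDomain B] [Algebra A B] [FaithfulSMul A B] {τ : B ≃ₐ[A] B} {s : B}

theorem QuadInv.tau_s (h : QuadInv A B τ s) : τ s = -s := by
  obtain ⟨w, rfl⟩ := h.omega
  rw [map_sub, h.inv]; ring

theorem QuadInv.ambig (h : QuadInv A B τ s) {I : Ideal B} (hI : I ≠ ⊥) (hτ : ∀ x ∈ I, τ x ∈ I) :
    ∃ (D : Ideal B) (J : Ideal A), D ∣ Ideal.span {s} ∧ J ≠ ⊥ ∧ D * I = J.map (algebraMap A B) := by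
  obtain ⟨w, hw⟩ := h.omega
  set J := I.comap (algebraMap A B) with hJ
  have h1 : J.map (algebraMap A B) ≤ I := Ideal.map_comap_le
  have hmem : ∀ b ∈ I, τ b = b → b ∈ J.map (algebraMap A B) := by
    intro b hb hb'
    obtain ⟨a, rfl⟩ := h.fix b hb'
    exact Ideal.mem_map_of_mem _ hb
  have h2 : Ideal.span {s} * I ≤ J.map (algebraMap A B) := by
    rw [Ideal.span_singleton_mul_le_iff]
    intro a ha
    have e : s * a = w * (a + τ a) - (a * τ w + τ a * w) := by rw [← hw]; ring
    rw [e]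
    refine Ideal.sub_mem _ (Ideal.mul_mem_left _ _ (hmem _ ?_ ?_)) (hmem _ ?_ ?_)
    · exact I.add_mem ha (hτ a ha)
    · rw [map_add, h.inv]; ring
    · exact I.add_mem (I.mul_mem_right _ ha) (I.mul_mem_right _ (hτ a ha))
    · rw [map_add, map_mul, map_mul, h.inv, h.inv]; ring
  obtain ⟨D, hD⟩ := Ideal.dvd_iff_le.mpr h1
  refine ⟨D, J, ?_, ?_, by rw [hD, mul_comm]⟩
  · rw [hD, ← Ideal.dvd_iff_le, mul_comm] at h2
    exact (mul_dvd_mul_iff_right (by rwa [← Ideal.zero_eq_bot] at hI)).mp h2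
  · intro hbot
    rw [hbot, Ideal.map_bot, le_bot_iff] at h2
    exact mul_ne_bot (span_ne_bot h.s_ne) hI h2

theorem QuadInv.hilbert90 (h : QuadInv A B τ s) {x y : B} (hx : x ≠ 0) (hxy : y * τ y = x * τ x) :
    ∃ γ : B, γ ≠ 0 ∧ τ γ * y = γ * x := by
  by_cases h0 : x + y = 0
  · refine ⟨s, h.s_ne, ?_⟩
    rw [h.tau_s, eq_neg_of_add_eq_zero_right h0]; ring
  · refine ⟨(x + y) * τ x, mul_ne_zero h0 ?_, ?_⟩
    · simpa using hx
    · rw [map_mul, h.inv, map_add]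
      linear_combination x * hxy

theorem QuadInv.stable_span (h : QuadInv A B τ s) {γ : B} {e : Bˣ} (hγ : τ γ * e = γ) :
    ∀ x ∈ Ideal.span {γ}, τ x ∈ Ideal.span {γ} := by
  intro x hx
  rw [Ideal.mem_span_singleton] at *
  obtain ⟨c, rfl⟩ := hx
  refine ⟨↑e⁻¹ * τ c, ?_⟩
  have : τ γ = γ * ↑e⁻¹ := by rw [← hγ, hγ, Units.eq_mul_inv_iff_mul_eq, hγ]
  rw [map_mul, this]; ring

theorem QuadInv.norm_mem (h : QuadInv A B τ s) (x : B) : ∃ a, algebraMap A B a = x * τ x := by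
  apply h.fix; rw [map_mul, h.inv, mul_comm]

theorem QuadInv.h1_inj [Module.FaithfullyFlat A B] (h : QuadInv A B τ s) (hodd : Odd (Nat.card (ClassGroup A)))
    {e e' : Bˣ} {γ γ' : B} (hγ : γ ≠ 0) (hγ' : γ' ≠ 0) (he : τ γ * e = γ) (he' : τ γ' * e' = γ')
    {D : Ideal B} (hD : D ≠ ⊥) {J J' : Ideal A} (hJ : J ≠ ⊥) (hJ' : J' ≠ ⊥)
    (h1 : D * Ideal.span {γ} = J.map (algebraMap A B))
    (h2 : D * Ideal.span {γ'} = J'.map (algebraMap A B)) :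
    ∃ η : Bˣ, (e : B) * τ η = η * e' := by
  have h3 : Ideal.span {γ} * J'.map (algebraMap A B) = Ideal.span {γ'} * J.map (algebraMap A B) := by
    rw [← h1, ← h2]; ring
  obtain ⟨g, hg⟩ := h.norm_mem γ
  obtain ⟨g', hg'⟩ := h.norm_mem γ'
  have key : ∀ (γ : B) (e : Bˣ) (g : A), τ γ * e = γ → algebraMap A B g = γ * τ γ →
      Ideal.span {γ} ^ 2 = (Ideal.span {g}).map (algebraMap A B) := by
    intro γ e g he hg
    rw [Ideal.map_span, Set.image_singleton, Ideal.span_singleton_pow, hg,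
      Ideal.span_singleton_eq_span_singleton]
    refine Associated.symm ⟨e, ?_⟩
    rw [mul_assoc, he]; ring
  have hg0 : g ≠ 0 := by
    rintro rfl
    rw [map_zero] at hg
    exact mul_ne_zero hγ (by simpa using hγ) hg.symm
  have hg0' : g' ≠ 0 := by
    rintro rfl
    rw [map_zero] at hg'
    exact mul_ne_zero hγ' (by simpa using hγ') hg'.symm
  have h4 : (Ideal.span {g} * J' ^ 2).map (algebraMap A B)
      = (Ideal.span {g'} * J ^ 2).map (algebraMap A B) := by
    rw [Ideal.map_mul, Ideal.map_mul, Ideal.map_pow, Ideal.map_pow, ← key γ e g he hg,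
      ← key γ' e' g' he' hg', ← mul_pow, ← mul_pow, h3]
  have h5 := Ideal.map_injective_of_faithfullyFlat (A := A) (B := B) h4
  have hp : ∀ {J : Ideal A}, J ≠ ⊥ → J ^ 2 ≠ ⊥ := by
    intro J hJ
    rw [← Ideal.zero_eq_bot] at *; exact pow_ne_zero _ hJ
  have h6 : cls J' hJ' ^ 2 = cls J hJ ^ 2 := by
    rw [← cls_pow hJ' 2 (hp hJ'), ← cls_pow hJ 2 (hp hJ), cls_eq_iff]
    exact ⟨g, g', hg0, hg0', h5⟩
  have h7 : cls J' hJ' = cls J hJ := by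
    rw [← div_eq_one]
    refine eq_one_of_odd hodd pow_card_eq_one' ?_
    rw [div_pow, h6, div_self']
  obtain ⟨a, a', ha, ha', haa⟩ := (cls_eq_iff hJ' hJ).mp h7
  have haB : algebraMap A B a ≠ 0 := by rwa [Ne, FaithfulSMul.algebraMap_eq_zero_iff]
  have haB' : algebraMap A B a' ≠ 0 := by rwa [Ne, FaithfulSMul.algebraMap_eq_zero_iff]
  have h8 := congrArg (Ideal.map (algebraMap A B)) haa
  simp only [Ideal.map_mul, Ideal.map_span, Set.image_singleton] at h8
  have h9 : Ideal.span {γ * algebraMap A B a'} = Ideal.span {γ' * algebraMap A B a} := by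
    apply ideal_cancel (map_ne_bot (B := B) hJ)
    rw [← Ideal.span_singleton_mul_span_singleton, ← Ideal.span_singleton_mul_span_singleton]
    calc _ = Ideal.span {γ} * (Ideal.span {algebraMap A B a'} * J.map (algebraMap A B)) := by ring
      _ = (Ideal.span {γ} * J'.map (algebraMap A B)) * Ideal.span {algebraMap A B a} := by
        rw [← h8]; ring
      _ = _ := by rw [h3]; ring
  rw [Ideal.span_singleton_eq_span_singleton] at h9
  obtain ⟨η, hη⟩ := h9.symm
  refine ⟨η, ?_⟩
  have h10 := congrArg τ hη
  simp only [map_mul, AlgEquiv.commutes] at h10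
  have hne : τ γ' * algebraMap A B a ≠ 0 := mul_ne_zero (by simpa using hγ') haB
  apply mul_left_cancel₀ hne
  linear_combination (e : B) * h10 + algebraMap A B a' * he - hη + algebraMap A B a * η * (-he')

end quad
section gt
open Module

variable {A B : Type*} [CommRing A] [CommRing B] [IsDedekindDomain A]
    [IsDedekindDomain B] [Algebra A B] [Module.FaithfullyFlat A B] {τ : B ≃ₐ[A] B} {s : B}

theorem QuadInv.count (h : QuadInv A B τ s) (hodd : Odd (Nat.card (ClassGroup A)))
    [Module.Finite ℤ (Additive Bˣ)]
    (hrank : finrank ℤ (Additive Bˣ) = 2 * finrank ℤ (Additive Aˣ) + 1)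
    (V : Subgroup Aˣ) (hδ : Nat.card {D : Ideal B // D ∣ Ideal.span {s}} ≤ 2 * V.index)
    (hV : ∀ (u : Aˣ) (x y : B), x ≠ 0 → algebraMap A B u * (x * τ x) = y * τ y → u ∈ V) :
    (∀ u ∈ V, ∃ e : Bˣ, algebraMap A B u = e * τ e) ∧
    ∀ D : Ideal B, D ∣ Ideal.span {s} → ∃ (γ : B) (J : Ideal A), γ ≠ 0 ∧ J ≠ ⊥ ∧
      D * Ideal.span {γ} = J.map (algebraMap A B) := by
  classical
  let T : Bˣ →* Bˣ := Units.map (τ : B →* B)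
  have hT : ∀ x : Bˣ, ((T x : Bˣ) : B) = τ x := fun x => rfl
  have hTT : ∀ x, T (T x) = x := fun x => Units.ext (by rw [hT, hT, h.inv])
  let f : Bˣ →* Bˣ := MonoidHom.id _ * T
  let f' : Bˣ →* Bˣ := MonoidHom.id _ / T
  have hf : ∀ x, f x = x * T x := fun x => rfl
  have hf' : ∀ x, f' x = x / T x := fun x => rfl
  let ι : Aˣ →* Bˣ := Units.map (algebraMap A B : A →* B)
  have hinjA := FaithfulSMul.algebraMap_injective A B
  have hι : Function.Injective ι := Units.map_injective hinjA
  have hkerf' : f'.ker = ι.range := by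
    ext x
    rw [MonoidHom.mem_ker, hf', div_eq_one, MonoidHom.mem_range]
    constructor
    · intro hx
      have hx1 : τ (x : B) = x := by rw [← hT, ← hx]
      have hx2 : τ ((x⁻¹ : Bˣ) : B) = (x⁻¹ : Bˣ) := by rw [← hT, map_inv, ← hx]
      obtain ⟨a, ha⟩ := h.fix _ hx1
      obtain ⟨b, hb⟩ := h.fix _ hx2
      have hab : a * b = 1 := hinjA (by rw [map_mul, ha, hb, map_one, Units.mul_inv])
      refine ⟨⟨a, b, hab, by rw [mul_comm, hab]⟩, Units.ext ha⟩
    · rintro ⟨u, rfl⟩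
      refine Units.ext ?_
      rw [hT]
      exact (τ.commutes _).symm
  have hfr : finrank ℤ (Additive f'.ker) = finrank ℤ (Additive Aˣ) := by
    rw [hkerf']
    exact ((MulEquiv.toAdditive (MonoidHom.ofInjective hι)).toIntLinearEquiv.finrank_eq).symm
  obtain ⟨hn, hn0⟩ := herbrand_mul f f'
    (fun x => by rw [hf, hf', mul_comm x (T x), mul_assoc, mul_div, mul_div_cancel, sq])
    (fun x => by rw [hf, hf', map_mul, hTT, mul_comm, div_self'])
    (fun x => by rw [hf, hf', map_div, hTT]; simp) (by rw [hfr, hrank])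
  have hch : ∀ e : f.ker, ∃ (γ : B) (D : Ideal B) (J : Ideal A), γ ≠ 0 ∧ τ γ * (e : Bˣ) = γ ∧
      D ∣ Ideal.span {s} ∧ J ≠ ⊥ ∧ D * Ideal.span {γ} = J.map (algebraMap A B) := by
    intro e
    have he := e.2
    rw [MonoidHom.mem_ker, hf] at he
    have he' : ((e : Bˣ) : B) * τ (e : Bˣ) = 1 := by rw [← hT, ← Units.val_mul, he, Units.val_one]
    obtain ⟨γ, hγ, h1⟩ := h.hilbert90 (x := 1) (y := (e : Bˣ)) one_ne_zero
      (by rw [he', map_one, mul_one])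
    rw [mul_one] at h1
    obtain ⟨D, J, h2, h3, h4⟩ := h.ambig (span_ne_bot hγ) (h.stable_span h1)
    exact ⟨γ, D, J, hγ, h1, h2, h3, h4⟩
  choose γ D J hγ hγe hD hJ hDJ using hch
  have hDne : ∀ e, D e ≠ ⊥ := by
    intro e he
    have := hDJ e
    rw [he, Ideal.bot_mul] at this
    exact map_ne_bot (B := B) (hJ e) this.symm
  have : Finite {D : Ideal B // D ∣ Ideal.span {s}} := by
    have hs0 : Ideal.span {s} ≠ 0 := span_ne_bot h.s_ne
    exact (UniqueFactorizationMonoid.fintypeSubtypeDvd (Ideal.span {s}) hs0).finite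
  let Φ : (f.ker ⧸ f'.range.subgroupOf f.ker) → {D : Ideal B // D ∣ Ideal.span {s}} :=
    fun q => ⟨D q.out, hD q.out⟩
  have hΦ : Function.Injective Φ := by
    intro q q' hqq
    have hDD : D q.out = D q'.out := congrArg Subtype.val hqq
    have h2 := hDJ q'.out
    rw [← hDD] at h2
    obtain ⟨η, hη⟩ := h.h1_inj hodd (hγ _) (hγ _) (hγe _) (hγe _) (hDne _) (hJ _) (hJ _)
      (hDJ q.out) h2
    rw [← q.out_eq', ← q'.out_eq', QuotientGroup.eq, Subgroup.mem_subgroupOf, MonoidHom.mem_range]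
    refine ⟨η⁻¹, ?_⟩
    rw [hf', map_inv, div_inv_eq_mul]
    have h3 : ((q.out : f.ker) : Bˣ) * T η = η * ((q'.out : f.ker) : Bˣ) := Units.ext (by
      rw [Units.val_mul, Units.val_mul, hT]; exact hη)
    rw [Subgroup.coe_mul, Subgroup.coe_inv, inv_mul_eq_iff_eq_mul, mul_left_comm,
      eq_inv_mul_iff_mul_eq, h3]
  have hVindex : (V.map ι).relIndex f'.ker = V.index := by
    rw [hkerf', MonoidHom.range_eq_map, Subgroup.relIndex_map_map_of_injective _ _ hι,
      Subgroup.relIndex_top_right]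
  have hfV : f.range ≤ V.map ι := by
    rintro _ ⟨x, rfl⟩
    have hx : f x ∈ f'.ker := by
      rw [MonoidHom.mem_ker, hf, hf', map_mul, hTT, mul_comm, div_self']
    rw [hkerf'] at hx
    obtain ⟨u, hu⟩ := hx
    refine ⟨u, hV u 1 x one_ne_zero ?_, hu⟩
    have := congrArg Units.val hu
    rw [map_one, mul_one, mul_one, ← hT, ← Units.val_mul, ← hf, ← hu]
    rfl
  have hVker : V.map ι ≤ f'.ker := by
    rw [hkerf']; rintro _ ⟨u, _, rfl⟩; exact ⟨u, rfl⟩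
  have hmul := Subgroup.relIndex_mul_relIndex _ _ _ hfV hVker
  rw [hVindex] at hmul
  have hle : f'.range.relIndex f.ker ≤ Nat.card {D : Ideal B // D ∣ Ideal.span {s}} :=
    Nat.card_le_card_of_injective Φ hΦ
  have hnV : f.range.relIndex f'.ker ≤ V.index := by omega
  have hV0 : 0 < V.index := by
    rcases Nat.eq_zero_or_pos V.index with h0 | h0
    · rw [h0, mul_zero] at hmul; exact absurd hmul.symm hn0
    · exact h0
  have hone : f.range.relIndex (V.map ι) = 1 := by
    have h1 : f.range.relIndex (V.map ι) * V.index ≤ 1 * V.index := by rw [hmul, one_mul]; exact hnV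
    have h2 := Nat.le_of_mul_le_mul_right h1 hV0
    have h3 : f.range.relIndex (V.map ι) ≠ 0 := by
      intro h3; rw [h3, zero_mul] at hmul; exact hn0 hmul.symm
    omega
  refine ⟨fun u hu => ?_, fun D' hD' => ?_⟩
  · rw [Subgroup.relIndex_eq_one] at hone
    obtain ⟨e, he⟩ := hone ⟨u, hu, rfl⟩
    refine ⟨e, ?_⟩
    have := congrArg Units.val he
    rw [hf, Units.val_mul, hT] at this
    exact this.symm
  · rw [hone, one_mul] at hmul
    have hb : Function.Bijective Φ := by
      apply hΦ.bijective_of_nat_card_le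
      have : Nat.card (f.ker ⧸ f'.range.subgroupOf f.ker) = f'.range.relIndex f.ker := rfl
      rw [this]; omega
    obtain ⟨q, hq⟩ := hb.2 ⟨D', hD'⟩
    have hq' : D q.out = D' := congrArg Subtype.val hq
    exact ⟨γ q.out, J q.out, hγ _, hJ _, hq' ▸ hDJ q.out⟩

theorem QuadInv.odd_card (h : QuadInv A B τ s) (hodd : Odd (Nat.card (ClassGroup A)))
    [Module.Finite ℤ (Additive Bˣ)] [Finite (ClassGroup B)]
    (hrank : finrank ℤ (Additive Bˣ) = 2 * finrank ℤ (Additive Aˣ) + 1)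
    (V : Subgroup Aˣ) (hδ : Nat.card {D : Ideal B // D ∣ Ideal.span {s}} ≤ 2 * V.index)
    (hV : ∀ (u : Aˣ) (x y : B), x ≠ 0 → algebraMap A B u * (x * τ x) = y * τ y → u ∈ V) :
    Odd (Nat.card (ClassGroup B)) := by
  obtain ⟨hN, hDiv⟩ := h.count hodd hrank V hδ hV
  -- stable ideals
  have hst : ∀ (I : Ideal B) (hI : I ≠ ⊥), (∀ x ∈ I, τ x ∈ I) →
      cls I hI ^ Nat.card (ClassGroup A) = 1 := by
    intro I hI hτ
    obtain ⟨D, J, hD, hJ, hDI⟩ := h.ambig hI hτ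
    obtain ⟨γ, J', hγ, hJ', hDγ⟩ := hDiv D hD
    have e1 : cls (J.map (algebraMap A B)) (map_ne_bot hJ)
        = cls (J'.map (algebraMap A B)) (map_ne_bot hJ') * cls I hI := by
      rw [← cls_mul (map_ne_bot hJ') hI (mul_ne_bot (map_ne_bot hJ') hI), cls_eq_iff]
      refine ⟨γ, 1, hγ, one_ne_zero, ?_⟩
      rw [← hDI, ← hDγ, Ideal.span_singleton_one, Ideal.top_mul]; ring
    have e2 := congrArg (· ^ Nat.card (ClassGroup A)) e1
    simp only [mul_pow, cls_map_pow hJ (map_ne_bot hJ), cls_map_pow hJ' (map_ne_bot hJ'),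
      one_mul] at e2
    exact e2.symm
  rw [← Nat.not_even_iff_odd, even_iff_two_dvd]
  intro h2
  have : Fact (Nat.Prime 2) := ⟨Nat.prime_two⟩
  obtain ⟨c, hc⟩ := exists_prime_orderOf_dvd_card' 2 h2
  have hc2 : c ^ 2 = 1 := by rw [← hc]; exact pow_orderOf_eq_one c
  have hc1 : c ≠ 1 := by rintro rfl; simp at hc
  apply hc1
  obtain ⟨I, hI, rfl⟩ := cls_surj c
  set I' := I.map (τ : B →+* B) with hI'def
  have hmemI' : ∀ x, x ∈ I' ↔ τ x ∈ I := by
    intro x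
    rw [hI'def]
    constructor
    · intro hx
      have := (Ideal.mem_map_of_equiv (I := I) τ x).mp hx
      obtain ⟨y, hy, rfl⟩ := this
      rwa [h.inv]
    · intro hx
      refine (Ideal.mem_map_of_equiv (I := I) τ x).mpr ⟨τ x, hx, h.inv x⟩
  have hI' : I' ≠ ⊥ := by
    obtain ⟨x, hx, hx0⟩ := Submodule.exists_mem_ne_zero_of_ne_bot hI
    intro hb
    have : τ x ∈ I' := by rw [hmemI', h.inv]; exact hx
    rw [hb, Ideal.mem_bot] at this
    exact hx0 (by simpa using this)
  have hprod : ∀ x ∈ I * I', τ x ∈ I * I' := by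
    intro x hx
    induction hx using Submodule.mul_induction_on' with
    | mem_mul_mem a ha b hb =>
      rw [map_mul, mul_comm (τ a)]
      exact Ideal.mul_mem_mul ((hmemI' b).mp hb) (by rw [hmemI', h.inv]; exact ha)
    | add a ha b hb h1 h2 => rw [map_add]; exact Ideal.add_mem _ h1 h2
  have hII := mul_ne_bot hI hI'
  have hcl' : cls I' hI' ^ 2 = 1 := by
    have hI2 : I ^ 2 ≠ ⊥ := by rw [sq]; exact mul_ne_bot hI hI
    have hI2' : I' ^ 2 ≠ ⊥ := by rw [sq]; exact mul_ne_bot hI' hI'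
    rw [← cls_pow hI 2 hI2, cls_eq_one_iff] at hc2
    obtain ⟨x, hx, hx2⟩ := hc2
    rw [← cls_pow hI' 2 hI2', cls_eq_one_iff]
    refine ⟨τ x, by simpa using hx, ?_⟩
    rw [hI'def, ← Ideal.map_pow, hx2, Ideal.map_span, Set.image_singleton]
    rfl
  have h1 : cls (I * I') hII = 1 := by
    refine eq_one_of_odd hodd (hst _ hII hprod) ?_
    rw [cls_mul hI hI', mul_pow, hc2, hcl', one_mul]
  have h3 : cls I' hI' = cls I hI := by
    rw [cls_mul hI hI'] at h1
    rw [sq] at hc2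
    exact mul_left_cancel (h1.trans hc2.symm)
  obtain ⟨x, y, hx, hy, hxy⟩ := (cls_eq_iff hI' hI).mp h3
  have hxy' : Ideal.span {τ x} * I = Ideal.span {τ y} * I' := by
    have := congrArg (Ideal.map (τ : B →+* B)) hxy
    rw [Ideal.map_mul, Ideal.map_mul, Ideal.map_span, Ideal.map_span, Set.image_singleton,
      Set.image_singleton, ← hI'def] at this
    have hII2 : I'.map (τ : B →+* B) = I := by
      rw [hI'def, Ideal.map_map]
      convert Ideal.map_id I
      ext b
      exact h.inv b
    rw [hII2] at this
    exact this
  have h4 : Ideal.span {x * τ x} = Ideal.span {y * τ y} := by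
    apply ideal_cancel (mul_ne_bot hI hI')
    rw [← Ideal.span_singleton_mul_span_singleton, ← Ideal.span_singleton_mul_span_singleton]
    calc _ = (Ideal.span {x} * I') * (Ideal.span {τ x} * I) := by ring
      _ = _ := by rw [hxy, hxy']; ring
  obtain ⟨a, ha⟩ := h.norm_mem x
  obtain ⟨b, hb⟩ := h.norm_mem y
  have h5 : Associated a b := by
    rw [← Ideal.span_singleton_eq_span_singleton]
    apply Ideal.map_injective_of_faithfullyFlat (A := A) (B := B)
    rw [Ideal.map_span, Ideal.map_span, Set.image_singleton, Set.image_singleton, ha, hb, h4]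
  obtain ⟨u, hu⟩ := h5
  have huV : u ∈ V := by
    refine hV u x y hx ?_
    rw [← ha, ← hb, ← hu, map_mul, mul_comm]
  obtain ⟨e, he⟩ := hN u huV
  have hex : (e : B) * x ≠ 0 := mul_ne_zero e.ne_zero hx
  obtain ⟨γ, hγ, hγ2⟩ := h.hilbert90 (x := e * x) (y := y) hex (by
    rw [← hb, ← hu, map_mul, ha, he, map_mul]; ring)
  have hγI := mul_ne_bot (span_ne_bot hγ) hI
  have hex' : Ideal.span {(e : B) * x} = Ideal.span {x} := by
    rw [Ideal.span_singleton_eq_span_singleton]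
    exact ⟨e⁻¹, by rw [mul_comm, ← mul_assoc, Units.inv_mul, one_mul]⟩
  have hst2 : Ideal.span {τ γ} * I' = Ideal.span {γ} * I := by
    have hγ' : Ideal.span {γ} ≠ ⊥ := span_ne_bot hγ
    have h6 : Ideal.span {τ γ} * Ideal.span {y} = Ideal.span {γ} * Ideal.span {x} := by
      rw [← hex', Ideal.span_singleton_mul_span_singleton, hγ2,
        Ideal.span_singleton_mul_span_singleton]
    apply ideal_cancel (span_ne_bot hx)
    calc _ = Ideal.span {τ γ} * (Ideal.span {x} * I') := by ring
      _ = (Ideal.span {τ γ} * Ideal.span {y}) * I := by rw [hxy]; ring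
      _ = _ := by rw [h6]; ring
  have hst3 : ∀ z ∈ Ideal.span {γ} * I, τ z ∈ Ideal.span {γ} * I := by
    intro z hz
    rw [Ideal.mem_span_singleton_mul] at hz
    obtain ⟨w, hw, rfl⟩ := hz
    rw [← hst2, map_mul, Ideal.mem_span_singleton_mul]
    exact ⟨τ w, by rw [hmemI', h.inv]; exact hw, rfl⟩
  have h7 := hst _ hγI hst3
  have h8 : cls (Ideal.span {γ} * I) hγI = cls I hI := by
    rw [cls_eq_iff]
    exact ⟨1, γ, one_ne_zero, hγ, by rw [Ideal.span_singleton_one, Ideal.top_mul]⟩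
  rw [h8] at h7
  exact eq_one_of_odd hodd h7 hc2
end gt
section nf
open Module IntermediateField

theorem quad_setup {K L : Type*} [Field K] [Field L] [NumberField K] [NumberField L] [Algebra K L]
    (d Y : 𝓞 K) (s : 𝓞 L) (hs : s ^ 2 = algebraMap (𝓞 K) (𝓞 L) d)
    (hd : ∀ b : K, b ^ 2 ≠ algebraMap (𝓞 K) K d)
    (hgen : IntermediateField.adjoin K {(s : L)} = ⊤) (h4 : (4 : 𝓞 K) ∣ d - Y ^ 2) :
    finrank K L = 2 ∧ ∃ τ : 𝓞 L ≃ₐ[𝓞 K] 𝓞 L, QuadInv (𝓞 K) (𝓞 L) τ s := by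
  have hsL : (s : L) ^ 2 = algebraMap K L (algebraMap (𝓞 K) K d) := by
    have := congrArg (algebraMap (𝓞 L) L) hs
    rw [map_pow] at this
    rw [this, ← IsScalarTower.algebraMap_apply (𝓞 K) (𝓞 L) L,
      ← IsScalarTower.algebraMap_apply (𝓞 K) K L]
  have hirr : Irreducible (Polynomial.X ^ 2 - Polynomial.C (algebraMap (𝓞 K) K d)) :=
    X_pow_sub_C_irreducible_of_prime Nat.prime_two hd
  have hmin : minpoly K (s : L) = Polynomial.X ^ 2 - Polynomial.C (algebraMap (𝓞 K) K d) := by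
    refine (minpoly.eq_of_irreducible_of_monic hirr ?_
      (Polynomial.monic_X_pow_sub_C _ two_ne_zero)).symm
    simp [hsL]
  have hfr : finrank K L = 2 := by
    have h1 := IntermediateField.adjoin.finrank (K := K) (x := (s : L))
      (Algebra.IsIntegral.isIntegral _)
    rw [hgen, hmin, Polynomial.natDegree_X_pow_sub_C, IntermediateField.finrank_top'] at h1
    exact h1
  refine ⟨hfr, ?_⟩
  have : Algebra.IsQuadraticExtension K L := ⟨hfr⟩
  have hcard : Nat.card (L ≃ₐ[K] L) = 2 := by rw [IsGalois.card_aut_eq_finrank, hfr]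
  have hext : ∀ σ : L ≃ₐ[K] L, σ s = s → σ = 1 := by
    intro σ hσ
    have h1 : ∀ x ∈ IntermediateField.adjoin K {(s : L)}, σ x = x := by
      intro x hx
      induction hx using IntermediateField.adjoin_induction with
      | mem x hx => rw [Set.mem_singleton_iff] at hx; rw [hx, hσ]
      | algebraMap x => exact σ.commutes x
      | add x y _ _ h1 h2 => rw [map_add, h1, h2]
      | inv x _ h1 => rw [map_inv₀, h1]
      | mul x y _ _ h1 h2 => rw [map_mul, h1, h2]
    ext x
    exact h1 x (by rw [hgen]; trivial)
  have hnt : Nontrivial (L ≃ₐ[K] L) := by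
    apply (Finite.one_lt_card_iff_nontrivial).mp; omega
  obtain ⟨σ, hσ⟩ := exists_ne (1 : L ≃ₐ[K] L)
  have hσs : σ s = -(s : L) := by
    have h1 : (σ s) ^ 2 = (s : L) ^ 2 := by rw [← map_pow, hsL, σ.commutes]
    rcases sq_eq_sq_iff_eq_or_eq_neg.mp h1 with h1 | h1
    · exact absurd (hext σ h1) hσ
    · exact h1
  have hσσ : σ * σ = 1 := hext _ (by rw [AlgEquiv.mul_apply, hσs, map_neg, hσs, neg_neg])
  have hs0 : (s : 𝓞 L) ≠ 0 := by
    rintro rfl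
    apply hd 0
    rw [zero_pow two_ne_zero] at hs
    have := (FaithfulSMul.algebraMap_eq_zero_iff (𝓞 K) (𝓞 L)).mp hs.symm
    rw [this, map_zero, zero_pow two_ne_zero]
  have hall : ∀ ρ : L ≃ₐ[K] L, ρ = 1 ∨ ρ = σ := by
    intro ρ
    classical
    by_contra hcon
    push Not at hcon
    have : ({1, σ, ρ} : Finset (L ≃ₐ[K] L)).card = 3 := by
      rw [Finset.card_eq_three]
      exact ⟨1, σ, ρ, hσ.symm, hcon.1.symm, hcon.2.symm, rfl⟩
    have h2 := Finset.card_le_univ ({1, σ, ρ} : Finset (L ≃ₐ[K] L))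
    rw [Nat.card_eq_fintype_card] at hcard
    omega
  refine ⟨RingOfIntegers.mapAlgEquiv σ, ?_, ?_, hs0, ?_⟩
  · intro b
    apply RingOfIntegers.ext
    exact DFunLike.congr_fun hσσ (b : L)
  · intro b hb
    have hb' : σ (b : L) = b := congrArg (algebraMap (𝓞 L) L) hb
    have h1 : (b : L) ∈ (⊥ : IntermediateField K L) := by
      rw [IsGalois.mem_bot_iff_fixed]
      intro ρ
      rcases hall ρ with rfl | rfl
      · rfl
      · exact hb'
    rw [IntermediateField.mem_bot] at h1
    obtain ⟨a, ha⟩ := h1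
    have hintg : IsIntegral ℤ a := by
      have h2 : IsIntegral ℤ (algebraMap K L a) := by rw [ha]; exact b.isIntegral_coe
      exact (isIntegral_algebraMap_iff (FaithfulSMul.algebraMap_injective K L)).mp h2
    refine ⟨⟨a, hintg⟩, ?_⟩
    apply RingOfIntegers.ext
    exact ha
  · obtain ⟨k, hk⟩ := h4
    have hkL : (algebraMap K L (algebraMap (𝓞 K) K d)) = (algebraMap K L (algebraMap (𝓞 K) K Y)) ^ 2
        + 4 * algebraMap K L (algebraMap (𝓞 K) K k) := by
      have : d = Y ^ 2 + 4 * k := by rw [← hk]; ring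
      rw [this]; simp only [map_add, map_mul, map_pow, map_ofNat]
    set y := algebraMap K L (algebraMap (𝓞 K) K Y) with hy
    have hyint : IsIntegral ℤ y := (algebraMap (𝓞 K) (𝓞 L) Y).isIntegral_coe
    have hkint : IsIntegral ℤ (algebraMap K L (algebraMap (𝓞 K) K k)) :=
      (algebraMap (𝓞 K) (𝓞 L) k).isIntegral_coe
    have hw : IsIntegral ℤ (((s : L) + y) / 2) := by
      have hq : (((s : L) + y) / 2) ^ 2 - y * (((s : L) + y) / 2)
          = algebraMap K L (algebraMap (𝓞 K) K k) := by
        rw [hkL] at hsL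
        linear_combination (1 / 4 : L) * hsL
      have hint2 : IsIntegral (𝓞 L) (((s : L) + y) / 2) := by
        refine ⟨Polynomial.X ^ 2 - (Polynomial.C (algebraMap (𝓞 K) (𝓞 L) Y) * Polynomial.X +
          Polynomial.C (algebraMap (𝓞 K) (𝓞 L) k)), ?_, ?_⟩
        · apply Polynomial.monic_X_pow_sub
          refine (Polynomial.degree_linear_le).trans_lt ?_
          norm_num
        · simp only [Polynomial.eval₂_sub, Polynomial.eval₂_pow, Polynomial.eval₂_X,
            Polynomial.eval₂_add, Polynomial.eval₂_mul, Polynomial.eval₂_C]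
          have e1 : algebraMap (𝓞 L) L (algebraMap (𝓞 K) (𝓞 L) Y) = y := rfl
          have e2 : algebraMap (𝓞 L) L (algebraMap (𝓞 K) (𝓞 L) k)
            = algebraMap K L (algebraMap (𝓞 K) K k) := rfl
          rw [e1, e2]
          linear_combination hq
      exact isIntegral_trans _ hint2
    refine ⟨⟨_, hw⟩, ?_⟩
    apply RingOfIntegers.ext
    change (((s : L) + y) / 2) - σ (((s : L) + y) / 2) = s
    have h2 : σ 2 = 2 := map_ofNat σ 2
    have hyσ : σ y = y := σ.commutes _
    rw [map_div₀, map_add, hσs, hyσ, h2]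
    ring

theorem card_factors_le {R : Type*} [CommRing R] [IsDedekindDomain R] (m : Multiset (Ideal R))
    (h : ∀ I ∈ m, I ≠ ⊥ ∧ I ≠ ⊤) :
    m.card ≤ (UniqueFactorizationMonoid.normalizedFactors m.prod).card ∧ m.prod ≠ 0 := by
  classical
  induction m using Multiset.induction_on with
  | empty => simp
  | cons I m ih =>
    obtain ⟨h1, h2⟩ := ih (fun J hJ => h J (Multiset.mem_cons_of_mem hJ))
    obtain ⟨hb, ht⟩ := h I (Multiset.mem_cons_self I m)
    have hb' : I ≠ 0 := hb
    refine ⟨?_, ?_⟩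
    · rw [Multiset.prod_cons, UniqueFactorizationMonoid.normalizedFactors_mul hb' h2,
        Multiset.card_cons, Multiset.card_add]
      have : 0 < (UniqueFactorizationMonoid.normalizedFactors I).card := by
        rw [Multiset.card_pos]
        intro h0
        have := UniqueFactorizationMonoid.prod_normalizedFactors_eq hb'
        rw [h0, Multiset.prod_zero] at this
        apply ht
        rw [← Ideal.one_eq_top, this]
        simp
      omega
    · rw [Multiset.prod_cons]; exact mul_ne_zero hb' h2

theorem card_dvd_le {R : Type*} [CommRing R] [IsDedekindDomain R] (I : Ideal R) (hI : I ≠ ⊥) :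
    Nat.card {D : Ideal R // D ∣ I}
      ≤ 2 ^ (UniqueFactorizationMonoid.normalizedFactors I).card := by
  classical
  have hI0 : I ≠ 0 := hI
  rw [← Multiset.card_powerset]
  refine le_trans ?_ (Multiset.toFinset_card_le _)
  rw [← Nat.card_eq_finsetCard]
  refine Nat.card_le_card_of_injective (fun D => ⟨UniqueFactorizationMonoid.normalizedFactors D.1, ?_⟩) ?_
  · simp only [Multiset.mem_toFinset, Multiset.mem_powerset]
    exact (UniqueFactorizationMonoid.dvd_iff_normalizedFactors_le_normalizedFactors
      (ne_zero_of_dvd_ne_zero hI0 D.2) hI0).mp D.2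
  · intro D D' h
    have h1 : UniqueFactorizationMonoid.normalizedFactors D.1
      = UniqueFactorizationMonoid.normalizedFactors D'.1 := congrArg Subtype.val h
    apply Subtype.ext
    rw [← associated_iff_eq, UniqueFactorizationMonoid.associated_iff_normalizedFactors_eq_normalizedFactors
      (ne_zero_of_dvd_ne_zero hI0 D.2) (ne_zero_of_dvd_ne_zero hI0 D'.2)]
    exact h1

theorem card_dvd_bound {K L : Type*} [Field K] [Field L] [NumberField K] [NumberField L] [Algebra K L]
    (d : 𝓞 K) (s : 𝓞 L) (hs : s ^ 2 = algebraMap (𝓞 K) (𝓞 L) d) (hs0 : s ≠ 0)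
    (hfr : finrank K L = 2) :
    Nat.card {D : Ideal (𝓞 L) // D ∣ Ideal.span {s}} ≤
      2 ^ (UniqueFactorizationMonoid.normalizedFactors (Ideal.span {d})).card := by
  classical
  refine (card_dvd_le _ (span_ne_bot hs0)).trans (Nat.pow_le_pow_right two_pos ?_)
  have hS : Ideal.span {s} ≠ 0 := span_ne_bot hs0
  have hd0 : d ≠ 0 := by
    rintro rfl; rw [map_zero] at hs; exact hs0 (pow_eq_zero_iff two_ne_zero |>.mp hs)
  have h1 : Ideal.relNorm (𝓞 K) (Ideal.span {s} ^ 2) = Ideal.span {d} ^ 2 := by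
    have e : Ideal.span {s} ^ 2 = (Ideal.span {d}).map (algebraMap (𝓞 K) (𝓞 L)) := by
      rw [Ideal.span_singleton_pow, hs, Ideal.map_span, Set.image_singleton]
    have hfr' : finrank (𝓞 K) (𝓞 L) = 2 := by
      rw [← hfr]
      exact (IsFractionRing.finrank_eq (𝓞 K) K (𝓞 L) L).symm
    rw [e, Ideal.relNorm_algebraMap, hfr']
  set m := UniqueFactorizationMonoid.normalizedFactors (Ideal.span {s} ^ 2) with hm
  have hprod : m.prod = Ideal.span {s} ^ 2 :=
    associated_iff_eq.mp (UniqueFactorizationMonoid.prod_normalizedFactors (pow_ne_zero 2 hS))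
  have h2 := (card_factors_le (m.map (Ideal.relNorm (𝓞 K))) (by
    intro I hI
    rw [Multiset.mem_map] at hI
    obtain ⟨P, hP, rfl⟩ := hI
    have hPp := UniqueFactorizationMonoid.prime_of_normalized_factor P hP
    refine ⟨?_, ?_⟩
    · rw [Ne, Ideal.relNorm_eq_bot_iff]; exact hPp.ne_zero
    · intro htop
      have h3 := Ideal.relNorm_le_comap (𝓞 K) P
      rw [htop, top_le_iff, Ideal.comap_eq_top_iff] at h3
      exact hPp.not_isUnit (by rw [h3, ← Ideal.one_eq_top]; exact isUnit_one))).1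
  have hp : (m.map (Ideal.relNorm (𝓞 K))).prod = Ideal.span {d} ^ 2 := by
    rw [← h1, ← hprod, map_multiset_prod]
  rw [hp, Multiset.card_map, hm, UniqueFactorizationMonoid.normalizedFactors_pow,
    UniqueFactorizationMonoid.normalizedFactors_pow, Multiset.card_nsmul, Multiset.card_nsmul] at h2
  omega

theorem rank_of {K L : Type*} [Field K] [Field L] [NumberField K] [NumberField L]
    (h : Fintype.card (InfinitePlace L) = 2 * Fintype.card (InfinitePlace K)) :
    finrank ℤ (Additive (𝓞 L)ˣ) = 2 * finrank ℤ (Additive (𝓞 K)ˣ) + 1 := by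
  rw [NumberField.Units.finrank_eq, NumberField.Units.finrank_eq, NumberField.Units.rank,
    NumberField.Units.rank]
  have : 0 < Fintype.card (InfinitePlace K) := Fintype.card_pos
  omega

theorem quad_odd {K L : Type*} [Field K] [Field L] [NumberField K] [NumberField L] [Algebra K L]
    (d Y : 𝓞 K) (s : 𝓞 L) (hs : s ^ 2 = algebraMap (𝓞 K) (𝓞 L) d)
    (hd : ∀ b : K, b ^ 2 ≠ algebraMap (𝓞 K) K d)
    (hgen : IntermediateField.adjoin K {(s : L)} = ⊤) (h4 : (4 : 𝓞 K) ∣ d - Y ^ 2)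
    (hplaces : finrank K L = 2 →
      Fintype.card (InfinitePlace L) = 2 * Fintype.card (InfinitePlace K))
    (hodd : Odd (classNumber K))
    (V : Subgroup (𝓞 K)ˣ)
    (hδ : 2 ^ (UniqueFactorizationMonoid.normalizedFactors (Ideal.span {d})).card ≤ 2 * V.index)
    (hV : ∀ (τ : 𝓞 L ≃ₐ[𝓞 K] 𝓞 L), QuadInv (𝓞 K) (𝓞 L) τ s → ∀ (u : (𝓞 K)ˣ) (x y : 𝓞 L),
      x ≠ 0 → algebraMap (𝓞 K) (𝓞 L) u * (x * τ x) = y * τ y → u ∈ V) :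
    Odd (classNumber L) := by
  obtain ⟨hfr, τ, hτ⟩ := quad_setup d Y s hs hd hgen h4
  rw [classNumber, ← Nat.card_eq_fintype_card]
  rw [classNumber, ← Nat.card_eq_fintype_card] at hodd
  exact hτ.odd_card hodd (rank_of (hplaces hfr)) V
    ((card_dvd_bound d s hs hτ.s_ne hfr).trans hδ) (hV τ hτ)
end nf
section part1
open Module

theorem nonsq_of {K : Type*} [Field K] [NumberField K] (d : 𝓞 K) (h : ¬ IsSquare d) :
    ∀ b : K, b ^ 2 ≠ algebraMap (𝓞 K) K d := by
  intro b hb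
  have hintg : IsIntegral ℤ b := by
    apply IsIntegral.of_pow two_pos
    rw [hb]; exact d.isIntegral_coe
  apply h
  refine ⟨⟨b, hintg⟩, RingOfIntegers.ext ?_⟩
  rw [sq] at hb
  exact hb.symm

theorem card_factors_prime {K : Type*} [Field K] [NumberField K] (d : 𝓞 K) (h : Prime d) :
    (UniqueFactorizationMonoid.normalizedFactors (Ideal.span {d})).card = 1 := by
  have hp : Prime (Ideal.span {d}) := by
    rw [Ideal.prime_iff_isPrime (span_ne_bot h.ne_zero), Ideal.span_singleton_prime h.ne_zero]
    exact h
  rw [UniqueFactorizationMonoid.normalizedFactors_irreducible hp.irreducible,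
    Multiset.card_singleton]

theorem card_factors_two {K : Type*} [Field K] [NumberField K] (p q : 𝓞 K) (h : Prime p)
    (h' : Prime q) :
    (UniqueFactorizationMonoid.normalizedFactors (Ideal.span {p * q})).card = 2 := by
  have e : Ideal.span {p * q} = Ideal.span {p} * Ideal.span {q} :=
    (Ideal.span_singleton_mul_span_singleton p q).symm
  have h1 : Ideal.span {p} ≠ 0 := span_ne_bot h.ne_zero
  have h2 : Ideal.span {q} ≠ 0 := span_ne_bot h'.ne_zero
  rw [e, UniqueFactorizationMonoid.normalizedFactors_mul h1 h2, Multiset.card_add,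
    card_factors_prime p h, card_factors_prime q h']

theorem totComplex_of_root {m : ℕ} (hm3 : 3 < m) {F : Type*} [Field F] [NumberField F] (ζ : F)
    (hζ : IsPrimitiveRoot ζ m) : IsTotallyComplex F := by
  refine ⟨fun w => ?_⟩
  rw [← InfinitePlace.not_isReal_iff_isComplex]
  intro hw
  have hφ : IsPrimitiveRoot (InfinitePlace.embedding_of_isReal hw ζ) m :=
    hζ.map_of_injective (RingHom.injective _)
  set r := InfinitePlace.embedding_of_isReal hw ζ
  have h1 : |r| = 1 := by
    have : |r| ^ m = 1 := by rw [← abs_pow, hφ.pow_eq_one, abs_one]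
    exact (pow_eq_one_iff_of_nonneg (abs_nonneg _) (by omega)).mp this
  have h2 : r ^ 2 = 1 := by rw [← sq_abs, h1, one_pow]
  have := Nat.le_of_dvd two_pos (hφ.dvd_of_pow_eq_one 2 h2)
  omega

theorem part_one {m : ℕ} (hm3 : 3 < m) {F E : Type*} [Field F] [Field E] [NumberField F]
    [NumberField E] [Algebra F E] (ζ : F) (hζ : IsPrimitiveRoot ζ m)
    (d X : 𝓞 F) (hd : Prime d) (hX : (4 : 𝓞 F) ∣ d - X ^ 2)
    (s : 𝓞 E) (hs : s ^ 2 = algebraMap (𝓞 F) (𝓞 E) d)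
    (hEgen : IntermediateField.adjoin F {(s : E)} = ⊤)
    (hclF : Odd (NumberField.classNumber F)) : Odd (NumberField.classNumber E) := by
  have h1 := totComplex_of_root hm3 ζ hζ
  have h2 : IsTotallyComplex E := isTotallyComplex_of_algebra F E
  refine quad_odd d X s hs (nonsq_of d ?_) hEgen hX ?_ hclF ⊤ ?_ (fun _ _ _ _ _ _ _ => trivial)
  · exact hd.irreducible.not_isSquare
  · intro hfr
    have e1 := IsTotallyComplex.finrank F
    have e2 := IsTotallyComplex.finrank E
    have e3 := Module.finrank_mul_finrank ℚ F E
    have e4 := InfinitePlace.card_eq_nrRealPlaces_add_nrComplexPlaces F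
    have e5 := InfinitePlace.card_eq_nrRealPlaces_add_nrComplexPlaces E
    rw [IsTotallyComplex.nrRealPlaces_eq_zero] at e4 e5
    rw [hfr] at e3
    omega
  · rw [card_factors_prime d hd, Subgroup.index_top]; norm_num
end part1
section cyc
open Module IntermediateField

theorem gen_of_range {K L : Type*} [Field K] [Field L] [NumberField K] [NumberField L] [Algebra K L]
    (x : K) (h : (algebraMap K L).fieldRange
      = (IntermediateField.adjoin ℚ {algebraMap K L x}).toSubfield) :
    IntermediateField.adjoin ℚ {x} = ⊤ := by
  rw [eq_top_iff]
  intro y _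
  let g : K →ₐ[ℚ] L := (algebraMap K L).toRatAlgHom
  have h1 : algebraMap K L y ∈ (IntermediateField.adjoin ℚ {algebraMap K L x}).toSubfield := by
    rw [← h]; exact ⟨y, rfl⟩
  have h2 : (IntermediateField.adjoin ℚ {x}).map g
      = IntermediateField.adjoin ℚ {algebraMap K L x} := by
    rw [IntermediateField.adjoin_map, Set.image_singleton]; rfl
  have h3 : algebraMap K L y ∈ (IntermediateField.adjoin ℚ {x}).map g := by rw [h2]; exact h1
  rw [IntermediateField.mem_map] at h3
  obtain ⟨w, hw, hwy⟩ := h3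
  have : w = y := (algebraMap K L).injective hwy
  rwa [← this]

theorem totReal_of_gen {K : Type*} [Field K] [NumberField K] (x : K)
    (h : IntermediateField.adjoin ℚ {x} = ⊤)
    (hx : ∀ φ : K →+* ℂ, (starRingEnd ℂ) (φ x) = φ x) :
    IsTotallyReal K := by
  have key : ∀ φ : K →+* ℂ, ComplexEmbedding.IsReal φ := by
    intro φ
    rw [ComplexEmbedding.isReal_iff]
    ext y
    have hy : y ∈ IntermediateField.adjoin ℚ {x} := by rw [h]; trivial
    rw [ComplexEmbedding.conjugate_coe_eq]
    induction hy using IntermediateField.adjoin_induction with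
    | mem z hz => rw [Set.mem_singleton_iff] at hz; rw [hz, hx]
    | algebraMap z => simp
    | add a b _ _ h1 h2 => rw [map_add, map_add, h1, h2]
    | inv a _ h1 => rw [map_inv₀, map_inv₀, h1]
    | mul a b _ _ h1 h2 => rw [map_mul, map_mul, h1, h2]
  refine ⟨fun w => ?_⟩
  rw [InfinitePlace.isReal_iff]
  exact key _

/-- the data of the cyclotomic field -/
structure Cyc (m : ℕ) (F₀ F : Type*) [Field F₀] [Field F] [NumberField F₀] [NumberField F]
    [Algebra F₀ F] (z : 𝓞 F) (θ : 𝓞 F₀) (τ : 𝓞 F ≃ₐ[𝓞 F₀] 𝓞 F) : Prop where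
  mul_tau : z * τ z = 1
  add_tau : z + τ z = algebraMap (𝓞 F₀) (𝓞 F) θ
  prim : IsPrimitiveRoot z m
  quad : QuadInv (𝓞 F₀) (𝓞 F) τ (z - τ z)
  real : IsTotallyReal F₀
  gen : IntermediateField.adjoin ℚ {(θ : F₀)} = ⊤
  conj : ∀ (φ : F →+* ℂ) (x : 𝓞 F), φ (τ x : 𝓞 F) = (starRingEnd ℂ) (φ x)
  roots : ∀ (x : 𝓞 F) (n : ℕ), 0 < n → x ^ n = 1 → ∃ k : ℕ, x = z ^ k ∨ x = - z ^ k
  norm : Ideal.absNorm (Ideal.span {θ ^ 2 - 4}) = m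

theorem cyc_setup {m : ℕ} (hm : m.Prime) (hm3 : 3 < m) {F₀ F : Type*} [Field F₀] [Field F]
    [NumberField F₀] [NumberField F] [Algebra F₀ F]
    (ζ : F) (hζ : IsPrimitiveRoot ζ m)
    (hFgen : IntermediateField.adjoin ℚ {ζ} = ⊤)
    (hF₀ : (algebraMap F₀ F).fieldRange
      = (IntermediateField.adjoin ℚ {ζ + ζ⁻¹}).toSubfield) :
    ∃ (z : 𝓞 F) (θ : 𝓞 F₀) (τ : 𝓞 F ≃ₐ[𝓞 F₀] 𝓞 F), (z : F) = ζ ∧ Cyc m F₀ F z θ τ := by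
  have : NeZero m := ⟨hm.ne_zero⟩
  have : Fact m.Prime := ⟨hm⟩
  have hodd : Odd m := hm.odd_of_ne_two (by omega)
  have hζ0 : ζ ≠ 0 := hζ.ne_zero hm.ne_zero
  have hcyc : IsCyclotomicExtension {m} ℚ F := by
    have h1 : IsCyclotomicExtension {m} ℚ (IntermediateField.adjoin ℚ {ζ}) :=
      hζ.intermediateField_adjoin_isCyclotomicExtension (K := ℚ)
    exact IsCyclotomicExtension.equiv {m} ℚ (IntermediateField.adjoin ℚ {ζ})
      ((IntermediateField.equivOfEq hFgen).trans IntermediateField.topEquiv)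
  set z : 𝓞 F := hζ.toInteger with hz
  have hzζ : (z : F) = ζ := rfl
  set z' : 𝓞 F := z ^ (m - 1) with hz'
  have hzprim : IsPrimitiveRoot z m := hζ.toInteger_isPrimitiveRoot
  have hzz' : z * z' = 1 := by
    rw [hz', ← pow_succ', Nat.sub_add_cancel hm.one_lt.le, hzprim.pow_eq_one]
  have hzz'F : (z : F) * (z' : F) = 1 := by
    rw [← map_mul, hzz', map_one]
  have hz'ζ : (z' : F) = ζ⁻¹ := by
    rw [← hzζ]; exact eq_inv_of_mul_eq_one_right hzz'F
  obtain ⟨θ₀, hθ₀⟩ : ζ + ζ⁻¹ ∈ (algebraMap F₀ F).fieldRange := by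
    rw [hF₀]; exact IntermediateField.mem_adjoin_simple_self ℚ _
  have hθint : IsIntegral ℤ θ₀ := by
    have h2 : IsIntegral ℤ (algebraMap F₀ F θ₀) := by
      rw [hθ₀, ← hz'ζ, ← hzζ]; exact (z + z').isIntegral_coe
    exact (isIntegral_algebraMap_iff (FaithfulSMul.algebraMap_injective F₀ F)).mp h2
  set θ : 𝓞 F₀ := ⟨θ₀, hθint⟩ with hθ
  have hθz : z + z' = algebraMap (𝓞 F₀) (𝓞 F) θ := by
    apply RingOfIntegers.ext
    change (z : F) + (z' : F) = algebraMap F₀ F θ₀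
    rw [hθ₀, hzζ, hz'ζ]
  have hgen : IntermediateField.adjoin ℚ {θ₀} = ⊤ := by
    apply gen_of_range (L := F); rw [hθ₀, hF₀]
  have hconjz : ∀ φ : F →+* ℂ, (starRingEnd ℂ) (φ ζ) = φ ζ⁻¹ := by
    intro φ
    have h1 : ‖φ ζ‖ = 1 := by
      have : ‖φ ζ‖ ^ m = 1 := by rw [← norm_pow, ← map_pow, hζ.pow_eq_one, map_one, norm_one]
      exact (pow_eq_one_iff_of_nonneg (norm_nonneg _) hm.ne_zero).mp this
    rw [map_inv₀, Complex.inv_def, Complex.normSq_eq_norm_sq, h1]; simp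
  have hreal : IsTotallyReal F₀ := by
    refine totReal_of_gen θ₀ hgen fun φ => ?_
    have e : φ θ₀ = (ComplexEmbedding.lift F φ) (ζ + ζ⁻¹) := by
      rw [← hθ₀, ComplexEmbedding.lift_algebraMap_apply]
    rw [e, map_add, map_add, hconjz, ← hconjz, Complex.conj_conj, add_comm]
  have hcomplex := totComplex_of_root hm3 ζ hζ
  have hss : (z - z') ^ 2 = algebraMap (𝓞 F₀) (𝓞 F) (θ ^ 2 - 4) := by
    rw [map_sub, map_pow, ← hθz, map_ofNat]
    linear_combination (-4) * hzz'
  have hsF : ((z - z' : 𝓞 F) : F) = ζ - ζ⁻¹ := by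
    change (z : F) - (z' : F) = _
    rw [hzζ, hz'ζ]
  have hsF2 : algebraMap (𝓞 F) F (z - z') = ζ - ζ⁻¹ := hsF
  have h2F : (2 : F) ≠ 0 := two_ne_zero
  have hnonsq : ∀ b : F₀, b ^ 2 ≠ algebraMap (𝓞 F₀) F₀ (θ ^ 2 - 4) := by
    intro b hb
    have h1 : (algebraMap F₀ F b) ^ 2 = (ζ - ζ⁻¹) ^ 2 := by
      have h2 := congrArg (algebraMap (𝓞 F) F) hss
      rw [map_pow, hsF2] at h2
      rw [h2, ← map_pow, hb]; rfl
    have h3 : ∃ c : F₀, algebraMap F₀ F c = ζ := by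
      rcases sq_eq_sq_iff_eq_or_eq_neg.mp h1 with h | h
      · refine ⟨(θ₀ + b) / 2, ?_⟩
        rw [map_div₀, map_add, hθ₀, h, map_ofNat]; field_simp; ring
      · refine ⟨(θ₀ - b) / 2, ?_⟩
        rw [map_div₀, map_sub, hθ₀, h, map_ofNat]; field_simp; ring
    obtain ⟨c, hc⟩ := h3
    have hcp : IsPrimitiveRoot c m := by
      apply IsPrimitiveRoot.of_map_of_injective (f := algebraMap F₀ F) _
        (algebraMap F₀ F).injective
      rw [hc]; exact hζ
    have hcx := totComplex_of_root hm3 c hcp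
    obtain ⟨w⟩ : Nonempty (InfinitePlace F₀) := inferInstance
    exact InfinitePlace.not_isReal_iff_isComplex.mpr (hcx.isComplex w) (hreal.isReal w)
  have hgenF : IntermediateField.adjoin F₀ {((z - z' : 𝓞 F) : F)} = ⊤ := by
    rw [eq_top_iff]
    intro y _
    have hy : y ∈ IntermediateField.adjoin ℚ {ζ} := by rw [hFgen]; trivial
    have hζm : ζ ∈ IntermediateField.adjoin F₀ {((z - z' : 𝓞 F) : F)} := by
      have e : ζ = (algebraMap F₀ F (2⁻¹)) * (algebraMap F₀ F θ₀ + (z - z' : 𝓞 F)) := by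
        rw [hθ₀, hsF, map_inv₀, map_ofNat]; field_simp; ring
      rw [e]
      exact mul_mem (IntermediateField.algebraMap_mem _ _) (add_mem
        (IntermediateField.algebraMap_mem _ _) (IntermediateField.mem_adjoin_simple_self _ _))
    induction hy using IntermediateField.adjoin_induction with
    | mem x hx => rw [Set.mem_singleton_iff] at hx; rw [hx]; exact hζm
    | algebraMap x =>
      have : algebraMap ℚ F x = algebraMap F₀ F (algebraMap ℚ F₀ x) := by simp
      rw [this]; exact IntermediateField.algebraMap_mem _ _
    | add x y _ _ h1 h2 => exact add_mem (h1 trivial) (h2 trivial)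
    | inv x _ h1 => exact inv_mem (h1 trivial)
    | mul x y _ _ h1 h2 => exact mul_mem (h1 trivial) (h2 trivial)
  obtain ⟨hfr, τ, hτ⟩ := quad_setup (θ ^ 2 - 4) θ (z - z') hss hnonsq hgenF
    ⟨-1, by ring⟩
  have hτz : τ z = z' := by
    have h1 := hτ.tau_s
    have h2 : τ (z + z') = z + z' := by rw [hθz]; exact τ.commutes _
    rw [map_sub] at h1
    rw [map_add] at h2
    have h3 : 2 * τ z = 2 * z' := by linear_combination h1 + h2
    exact mul_left_cancel₀ two_ne_zero h3
  refine ⟨z, θ, τ, hzζ, ⟨by rw [hτz, hzz'], by rw [hτz, hθz], hzprim, by rw [hτz]; exact hτ, hreal,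
    hgen, ?_, ?_, ?_⟩⟩
  · intro φ x
    have hfixreal : ∀ y : 𝓞 F, τ y = y → (starRingEnd ℂ) (φ y) = φ y := by
      intro y hy
      obtain ⟨a, ha⟩ := hτ.fix y hy
      have : (y : F) = algebraMap F₀ F a := by rw [← ha]; rfl
      rw [this]
      have h1 := hreal.complexEmbedding_isReal (φ.comp (algebraMap F₀ F))
      rw [ComplexEmbedding.isReal_iff] at h1
      exact DFunLike.congr_fun h1 (a : F₀)
    have h1 := hfixreal (x + τ x) (by rw [map_add, hτ.inv, add_comm])
    have h2 := hfixreal ((x - τ x) * (z - z')) (by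
      rw [map_mul, hτ.tau_s, map_sub, hτ.inv]; ring)
    have h3 : (starRingEnd ℂ) (φ ((z - z' : 𝓞 F) : F)) = -φ ((z - z' : 𝓞 F) : F) := by
      rw [hsF, map_sub, map_sub, ← hconjz, Complex.conj_conj]; ring
    have h4 : φ ((z - z' : 𝓞 F) : F) ≠ 0 := by
      rw [Ne, map_eq_zero]
      exact (RingOfIntegers.coe_ne_zero_iff).mpr hτ.s_ne
    simp only [map_add] at h1
    simp only [map_mul] at h2
    rw [h3] at h2
    have h5 : (starRingEnd ℂ) (φ ((x - τ x : 𝓞 F) : F)) = -φ ((x - τ x : 𝓞 F) : F) := by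
      apply mul_right_cancel₀ h4
      linear_combination -h2
    simp only [map_sub] at h5
    have h6 : (2 : ℂ) * φ (τ x : 𝓞 F) = 2 * (starRingEnd ℂ) (φ x) := by
      linear_combination -h1 - h5
    exact mul_left_cancel₀ two_ne_zero h6
  · intro x n hn hx
    have hx' : (x : F) ^ n = 1 := by rw [← map_pow, hx, map_one]
    obtain ⟨r, _, hr⟩ := hζ.exists_pow_or_neg_mul_pow_of_isOfFinOrder hodd
      (isOfFinOrder_iff_pow_eq_one.mpr ⟨n, hn, hx'⟩)
    refine ⟨r, hr.imp (fun h => ?_) (fun h => ?_)⟩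
    · exact RingOfIntegers.ext h
    · exact RingOfIntegers.ext h
  · have hζ2 : IsPrimitiveRoot (ζ ^ 2) m :=
      hζ.pow_of_coprime 2 ((Nat.coprime_primes Nat.prime_two hm).mpr (by omega))
    have hn := hζ2.norm_toInteger_sub_one_of_prime_ne_two' (by omega)
    have hz2 : hζ2.toInteger = z ^ 2 := RingOfIntegers.ext rfl
    rw [hz2] at hn
    have habs : Ideal.absNorm (Ideal.span {z - z'}) = m := by
      have e : Ideal.span {z - z'} = Ideal.span {z ^ 2 - 1} := by
        rw [Ideal.span_singleton_eq_span_singleton]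
        refine ⟨⟨z, z', hzz', by rw [mul_comm, hzz']⟩, ?_⟩
        change (z - z') * z = z ^ 2 - 1
        linear_combination -hzz'
      rw [e, Ideal.absNorm_span_singleton, hn]; rfl
    have h1 := Ideal.absNorm_algebraMap (𝓞 F₀) (𝓞 F) (Ideal.span {θ ^ 2 - 4})
    have hfr' : finrank (𝓞 F₀) (𝓞 F) = 2 := by
      rw [← hfr]
      exact (IsFractionRing.finrank_eq (𝓞 F₀) F₀ (𝓞 F) F).symm
    rw [hfr', Ideal.map_span, Set.image_singleton, ← hss, ← Ideal.span_singleton_pow, map_pow,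
      habs] at h1
    exact (Nat.pow_left_injective two_ne_zero h1).symm
end cyc
section part2
open Module IntermediateField

variable {m : ℕ} {F₀ F : Type*} [Field F₀] [Field F] [NumberField F₀] [NumberField F]
    [Algebra F₀ F] {z : 𝓞 F} {θ : 𝓞 F₀} {τ : 𝓞 F ≃ₐ[𝓞 F₀] 𝓞 F}

theorem Cyc.ss (C : Cyc m F₀ F z θ τ) :
    (z - τ z) ^ 2 = algebraMap (𝓞 F₀) (𝓞 F) (θ ^ 2 - 4) := by
  rw [map_sub, map_pow, ← C.add_tau, map_ofNat]
  linear_combination (-4) * C.mul_tau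

theorem Cyc.pi_prime (C : Cyc m F₀ F z θ τ) (hm : m.Prime) : Prime (θ ^ 2 - 4) := by
  have hne : θ ^ 2 - 4 ≠ 0 := by
    intro h
    have h1 := C.norm
    rw [h, Ideal.span_singleton_zero, Ideal.absNorm_bot] at h1
    exact hm.ne_zero h1.symm
  rw [← Ideal.span_singleton_prime hne]
  apply Ideal.isPrime_of_irreducible_absNorm
  rw [C.norm]
  exact hm

theorem Cyc.unit_root (C : Cyc m F₀ F z θ τ) {α e : 𝓞 F} (hα : α ≠ 0) (h : τ α * e = α) :
    ∃ k : ℕ, e = z ^ k ∨ e = - z ^ k := by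
  have h1 : ∀ φ : F →+* ℂ, ‖φ (e : F)‖ = 1 := by
    intro φ
    have h2 : φ ((τ α : 𝓞 F) : F) * φ (e : F) = φ (α : F) := by
      rw [← map_mul]
      exact congrArg (fun x : 𝓞 F => φ (x : F)) h
    have h3 := congrArg (fun c : ℂ => ‖c‖) h2
    rw [norm_mul, C.conj, RCLike.norm_conj] at h3
    have h4 : ‖φ (α : F)‖ ≠ 0 := by
      rw [norm_ne_zero_iff, Ne, map_eq_zero]
      exact (RingOfIntegers.coe_ne_zero_iff).mpr hα
    exact mul_left_cancel₀ h4 (by rw [h3, mul_one])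
  obtain ⟨n, hn, hn1⟩ := NumberField.Embeddings.pow_eq_one_of_norm_eq_one F ℂ e.isIntegral_coe h1
  apply C.roots e n hn
  apply RingOfIntegers.ext
  exact hn1

theorem even_count_sq {R : Type*} [CommRing R] [IsDedekindDomain R] {P I J : Ideal R}
    (hP : Prime P) (hI : I ≠ ⊥) (hJ : J ≠ ⊥) (h : I ^ 2 * P = J ^ 2) : False := by
  classical
  have hI0 : I ≠ 0 := hI
  have hJ0 : J ≠ 0 := hJ
  have h1 := congrArg UniqueFactorizationMonoid.normalizedFactors h
  rw [UniqueFactorizationMonoid.normalizedFactors_mul (pow_ne_zero 2 hI0) hP.ne_zero,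
    UniqueFactorizationMonoid.normalizedFactors_pow, UniqueFactorizationMonoid.normalizedFactors_pow,
    UniqueFactorizationMonoid.normalizedFactors_irreducible hP.irreducible] at h1
  have h2 := congrArg Multiset.card h1
  simp only [Multiset.card_add, Multiset.card_nsmul, Multiset.card_singleton] at h2
  omega

theorem part_two (C : Cyc m F₀ F z θ τ) (hm : m.Prime) (hm3 : 3 < m)
    (hclF : Odd (NumberField.classNumber F)) : Odd (NumberField.classNumber F₀) := by
  rw [← Nat.not_even_iff_odd, even_iff_two_dvd]
  intro h2
  have : Fact (Nat.Prime 2) := ⟨Nat.prime_two⟩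
  obtain ⟨c, hc⟩ := exists_prime_orderOf_dvd_card (G := ClassGroup (𝓞 F₀)) 2 h2
  obtain ⟨I, hI, rfl⟩ := cls_surj c
  have hIB : I.map (algebraMap (𝓞 F₀) (𝓞 F)) ≠ ⊥ := map_ne_bot hI
  have hsq : cls I hI ^ 2 = 1 := by rw [← hc]; exact pow_orderOf_eq_one _
  have hne1 : cls I hI ≠ 1 := by
    intro h
    rw [h, orderOf_one] at hc
    omega
  have hI2 : I ^ 2 ≠ ⊥ := by rw [sq]; exact mul_ne_bot hI hI
  have hIB2 : I.map (algebraMap (𝓞 F₀) (𝓞 F)) ^ 2 ≠ ⊥ := by rw [sq]; exact mul_ne_bot hIB hIB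
  obtain ⟨x, hx0, hx⟩ := (cls_eq_one_iff hI2).mp ((cls_pow hI 2 hI2).trans hsq)
  have hBsq : cls _ hIB ^ 2 = 1 := by
    rw [← cls_pow hIB 2 hIB2, cls_eq_one_iff]
    refine ⟨algebraMap _ _ x, ?_, ?_⟩
    · rwa [Ne, FaithfulSMul.algebraMap_eq_zero_iff]
    · rw [← Ideal.map_pow, hx, Ideal.map_span, Set.image_singleton]
  have hB1 : cls _ hIB = 1 := by
    refine eq_one_of_odd hclF ?_ hBsq
    exact pow_card_eq_one
  obtain ⟨α, hα0, hα⟩ := (cls_eq_one_iff hIB).mp hB1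
  have hassoc : Associated (τ α) α := by
    rw [← Ideal.span_singleton_eq_span_singleton, ← hα]
    have h3 : (I.map (algebraMap (𝓞 F₀) (𝓞 F))).map (τ : 𝓞 F →+* 𝓞 F) = Ideal.span {τ α} := by
      rw [hα, Ideal.map_span, Set.image_singleton]; rfl
    rw [← h3, Ideal.map_map]
    congr 1
    ext y
    change ((τ (algebraMap (𝓞 F₀) (𝓞 F) y) : 𝓞 F) : F) = _
    rw [τ.commutes]
  obtain ⟨e, he⟩ := hassoc
  obtain ⟨k, hk⟩ := C.unit_root hα0 he
  obtain ⟨j, hj⟩ : ∃ j : ℕ, z ^ k = (z ^ j) ^ 2 := by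
    obtain ⟨t, ht⟩ := hm.odd_of_ne_two (by omega)
    refine ⟨k * (t + 1), ?_⟩
    rw [← pow_mul]
    have : k * (t + 1) * 2 = k + m * k := by rw [ht]; ring
    rw [this, pow_add, pow_mul, C.prim.pow_eq_one, one_pow, mul_one]
  have hjj : z ^ j * (τ z) ^ j = 1 := by rw [← mul_pow, C.mul_tau, one_pow]
  set β := α * (τ z) ^ j with hβ
  have hβspan : Ideal.span {β} = I.map (algebraMap (𝓞 F₀) (𝓞 F)) := by
    rw [hα, Ideal.span_singleton_eq_span_singleton]
    refine ⟨⟨z ^ j, τ z ^ j, hjj, by rw [mul_comm, hjj]⟩, ?_⟩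
    change α * (τ z) ^ j * z ^ j = α
    rw [mul_assoc, mul_comm _ (z ^ j), hjj, mul_one]
  have hτβ : τ β = τ α * z ^ j := by rw [hβ, map_mul, map_pow, C.quad.inv]
  have hβ0 : β ≠ 0 := by
    intro h
    rw [h, Ideal.span_singleton_zero] at hβspan
    exact hIB hβspan.symm
  rcases hk with hk | hk
  · have hfix : τ β = β := by
      rw [hk, hj] at he
      rw [hτβ, hβ]
      linear_combination (τ z) ^ j * he - τ α * z ^ j * hjj
    obtain ⟨a, ha⟩ := C.quad.fix β hfix
    apply hne1
    rw [cls_eq_one_iff]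
    refine ⟨a, ?_, ?_⟩
    · rintro rfl
      rw [map_zero] at ha
      exact hβ0 ha.symm
    · apply Ideal.map_injective_of_faithfullyFlat (A := 𝓞 F₀) (B := 𝓞 F)
      rw [← hβspan, ← ha, Ideal.map_span, Set.image_singleton]
  · have hfix : τ β = -β := by
      rw [hk, hj] at he
      rw [hτβ, hβ]
      linear_combination - (τ z) ^ j * he - τ α * z ^ j * hjj
    obtain ⟨b, hb⟩ := C.quad.fix (β * (z - τ z)) (by
      rw [map_mul, hfix, C.quad.tau_s]; ring)
    have hπ := C.pi_prime hm
    have hP : Prime (Ideal.span {θ ^ 2 - 4}) := by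
      rw [Ideal.prime_iff_isPrime (span_ne_bot hπ.ne_zero), Ideal.span_singleton_prime hπ.ne_zero]
      exact hπ
    refine even_count_sq hP hI (J := Ideal.span {b}) ?_ ?_
    · apply span_ne_bot
      rintro rfl
      rw [map_zero] at hb
      exact mul_ne_zero hβ0 C.quad.s_ne hb.symm
    · apply Ideal.map_injective_of_faithfullyFlat (A := 𝓞 F₀) (B := 𝓞 F)
      rw [Ideal.map_mul, Ideal.map_pow, Ideal.map_pow, Ideal.map_span, Ideal.map_span,
        Set.image_singleton, Set.image_singleton, hb, ← hβspan, ← C.ss,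
        Ideal.span_singleton_pow, Ideal.span_singleton_pow,
        Ideal.span_singleton_mul_span_singleton, mul_pow β]
end part2
section part3a
open Module IntermediateField

theorem descent_step {A : Type*} [CommRing A] [IsDedekindDomain A] {π l : A} (hπ : Prime π)
    (hl : ¬ π ∣ l) (u a b : A) (h : π ∣ l * (u * a ^ 2 - b ^ 2)) :
    (∃ x, π ∣ u - x ^ 2) ∨ (π ∣ a ∧ π ∣ b) := by
  have h1 : π ∣ u * a ^ 2 - b ^ 2 := (hπ.dvd_or_dvd h).resolve_left hl
  by_cases ha : π ∣ a
  · right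
    refine ⟨ha, ?_⟩
    have h2 : π ∣ b ^ 2 := by
      have h3 : π ∣ u * a ^ 2 := Dvd.dvd.mul_left (dvd_pow ha two_ne_zero) u
      have := dvd_sub h3 h1
      rwa [sub_sub_cancel] at this
    exact hπ.dvd_of_dvd_pow h2
  · left
    have hmax : (Ideal.span {π}).IsMaximal :=
      Ideal.IsPrime.isMaximal ((Ideal.span_singleton_prime hπ.ne_zero).mpr hπ)
        (span_ne_bot hπ.ne_zero)
    obtain ⟨t, i, hi, hti⟩ := hmax.exists_inv
      (show a ∉ Ideal.span {π} by rwa [Ideal.mem_span_singleton])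
    rw [Ideal.mem_span_singleton] at hi
    obtain ⟨j, rfl⟩ := hi
    obtain ⟨c, hc⟩ := h1
    refine ⟨b * t, c * t ^ 2 + u * (j * (1 + a * t)), ?_⟩
    linear_combination t ^ 2 * hc - u * (1 + a * t) * hti

theorem descent {A : Type*} [CommRing A] [IsDedekindDomain A] {π l : A} (hπ : Prime π)
    (hl : ¬ π ∣ l) (u : A) (n : ℕ) : ∀ a₁ b₁ a₂ b₂ : A, (¬ π ^ n ∣ a₁ ∨ ¬ π ^ n ∣ b₁) →
    u * (l * a₁ ^ 2 + π * b₁ ^ 2) = l * a₂ ^ 2 + π * b₂ ^ 2 → ∃ x, π ∣ u - x ^ 2 := by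
  induction n with
  | zero => intro a₁ b₁ a₂ b₂ h; simp at h
  | succ n ih =>
    intro a₁ b₁ a₂ b₂ h heq
    rcases descent_step hπ hl u a₁ a₂ ⟨b₂ ^ 2 - u * b₁ ^ 2, by linear_combination heq⟩ with h1 | h1
    · exact h1
    obtain ⟨⟨a₁, rfl⟩, ⟨a₂, rfl⟩⟩ := h1
    have heq2 : u * (l * π * a₁ ^ 2 + b₁ ^ 2) = l * π * a₂ ^ 2 + b₂ ^ 2 := by
      apply mul_left_cancel₀ hπ.ne_zero
      linear_combination heq
    rcases descent_step hπ (l := 1) (fun h => hπ.not_isUnit (isUnit_of_dvd_one h)) u b₁ b₂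
      ⟨l * a₂ ^ 2 - u * l * a₁ ^ 2, by linear_combination heq2⟩ with h1 | h1
    · exact h1
    obtain ⟨⟨b₁, rfl⟩, ⟨b₂, rfl⟩⟩ := h1
    refine ih a₁ b₁ a₂ b₂ ?_ ?_
    · refine h.imp (fun h h' => h ?_) (fun h h' => h ?_)
      · rw [pow_succ']; exact mul_dvd_mul_left _ h'
      · rw [pow_succ']; exact mul_dvd_mul_left _ h'
    · apply mul_left_cancel₀ hπ.ne_zero
      linear_combination heq2

/-- units that are squares modulo `π` -/
def sqUnits {A : Type*} [CommRing A] (π : A) : Subgroup Aˣ where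
  carrier := {u | ∃ x, π ∣ (u : A) - x ^ 2}
  one_mem' := ⟨1, by simp⟩
  mul_mem' := by
    rintro u v ⟨x, c, hc⟩ ⟨y, d, hd⟩
    refine ⟨x * y, c * v + x ^ 2 * d, ?_⟩
    rw [Units.val_mul]
    linear_combination v * hc + x ^ 2 * hd
  inv_mem' := by
    rintro u ⟨x, c, hc⟩
    refine ⟨x * ↑u⁻¹, c * (↑u⁻¹) ^ 2, ?_⟩
    have : (u : A) * ↑u⁻¹ = 1 := u.mul_inv
    linear_combination (↑u⁻¹ : A) ^ 2 * hc - (↑u⁻¹ : A) * this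

theorem norm_form {A B : Type*} [CommRing A] [CommRing B] [IsDedekindDomain A]
    [IsDedekindDomain B] [Algebra A B] [FaithfulSMul A B] [CharZero B] {τ : B ≃ₐ[A] B} {s : B}
    (h : QuadInv A B τ s) {π l : A} (hπ : Prime π)
    (hs : s ^ 2 = algebraMap A B (-l * π)) (x : B) :
    ∃ N a b : A, algebraMap A B N = x * τ x ∧ 4 * l * N = l * a ^ 2 + π * b ^ 2 ∧
      (x ≠ 0 → (a ≠ 0 ∨ b ≠ 0)) := by
  have hinj := FaithfulSMul.algebraMap_injective A B
  obtain ⟨N, hN⟩ := h.norm_mem x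
  obtain ⟨a, ha⟩ := h.fix (x + τ x) (by rw [map_add, h.inv, add_comm])
  obtain ⟨c, hc⟩ := h.fix ((x - τ x) ^ 2) (by rw [map_pow, map_sub, h.inv]; ring)
  obtain ⟨b, hb⟩ := h.fix ((x - τ x) * s) (by rw [map_mul, h.tau_s, map_sub, h.inv]; ring)
  have hbc : b ^ 2 = -l * π * c := by
    apply hinj
    rw [map_pow, hb, map_mul, ← hs, hc]; ring
  obtain ⟨b, rfl⟩ : π ∣ b := by
    apply hπ.dvd_of_dvd_pow (n := 2)
    rw [hbc]; exact ⟨-l * c, by ring⟩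
  have hbc2 : π * b ^ 2 = -l * c := by
    apply mul_left_cancel₀ hπ.ne_zero
    linear_combination hbc
  have h4 : 4 * N = a ^ 2 - c := by
    apply hinj
    rw [map_mul, map_sub, map_pow, hN, ha, hc, map_ofNat]; ring
  refine ⟨N, a, b, hN, by linear_combination l * h4 - hbc2, ?_⟩
  intro hx
  by_contra hab
  push Not at hab
  obtain ⟨rfl, rfl⟩ := hab
  rw [map_zero] at ha
  rw [mul_zero, map_zero, eq_comm, mul_eq_zero] at hb
  have h5 := hb.resolve_right h.s_ne
  apply hx
  have : 2 * x = 0 := by linear_combination h5 - ha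
  exact (mul_eq_zero.mp this).resolve_left two_ne_zero

theorem norm_sqUnits {A B : Type*} [CommRing A] [CommRing B] [IsDedekindDomain A]
    [IsDedekindDomain B] [Algebra A B] [FaithfulSMul A B] [CharZero B] {τ : B ≃ₐ[A] B} {s : B}
    (h : QuadInv A B τ s) {π l : A} (hπ : Prime π) (hl : ¬ π ∣ l)
    (hs : s ^ 2 = algebraMap A B (-l * π)) (u : Aˣ) (x y : B) (hx : x ≠ 0)
    (hxy : algebraMap A B u * (x * τ x) = y * τ y) : u ∈ sqUnits π := by
  obtain ⟨N, a, b, hN, h4, hab⟩ := norm_form h hπ hs x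
  obtain ⟨N', a', b', hN', h4', -⟩ := norm_form h hπ hs y
  have e : (u : A) * N = N' := by
    apply FaithfulSMul.algebraMap_injective A B
    rw [map_mul, hN, hN', hxy]
  have key : ∀ c : A, c ≠ 0 → ∃ n : ℕ, ¬ π ^ n ∣ c := by
    intro c hc
    obtain ⟨n, hn⟩ := FiniteMultiplicity.of_prime_left hπ hc
    exact ⟨n + 1, hn⟩
  have hn : ∃ n, ¬ π ^ n ∣ a ∨ ¬ π ^ n ∣ b := by
    rcases hab hx with h1 | h1
    · obtain ⟨n, hn⟩ := key a h1; exact ⟨n, Or.inl hn⟩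
    · obtain ⟨n, hn⟩ := key b h1; exact ⟨n, Or.inr hn⟩
  obtain ⟨n, hn⟩ := hn
  exact descent hπ hl u n a b a' b' hn (by rw [← h4, ← h4', ← e]; ring)

variable {m : ℕ} {F₀ F : Type*} [Field F₀] [Field F] [NumberField F₀] [NumberField F]
    [Algebra F₀ F] {z : 𝓞 F} {θ : 𝓞 F₀} {τ : 𝓞 F ≃ₐ[𝓞 F₀] 𝓞 F}

theorem Cyc.exists_unit (C : Cyc m F₀ F z θ τ) (hm : m.Prime) (hm3 : 3 < m) (b : ℕ)
    (hb : (2 * b + 1).Coprime m) :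
    ∃ v : (𝓞 F₀)ˣ, θ ^ 2 - 4 ∣ (v : 𝓞 F₀) - ((2 * b + 1 : ℕ) : 𝓞 F₀) := by
  have hinj := FaithfulSMul.algebraMap_injective (𝓞 F₀) (𝓞 F)
  set w := τ z with hw
  have hzw : z * w = 1 := C.mul_tau
  have hτw : τ w = z := C.quad.inv z
  have hz2 : IsPrimitiveRoot (z ^ 2) m :=
    C.prim.pow_of_coprime 2 ((Nat.coprime_primes Nat.prime_two hm).mpr (by omega))
  have hg := hz2.geom_sum_isUnit (j := 2 * b + 1) hm.two_le hb
  set g := ∑ i ∈ Finset.range (2 * b + 1), (z ^ 2) ^ i with hgdef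
  have hg1 : g * (z ^ 2 - 1) = (z ^ 2) ^ (2 * b + 1) - 1 := geom_sum_mul _ _
  have hwu : IsUnit (w ^ (2 * b)) := (IsUnit.of_mul_eq_one z (by rw [mul_comm, hzw])).pow _
  obtain ⟨u, hu⟩ := hwu.mul hg
  have hpow : z ^ (2 * b + 1) * w ^ (2 * b + 1) = 1 := by rw [← mul_pow, hzw, one_pow]
  have hsu : (z - w) * u = z ^ (2 * b + 1) - w ^ (2 * b + 1) := by
    rw [hu]
    have e1 : z - w = w * (z ^ 2 - 1) := by linear_combination (-z) * hzw
    rw [e1]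
    have e2 : w * (z ^ 2 - 1) * (w ^ (2 * b) * g) = w ^ (2 * b + 1) * (g * (z ^ 2 - 1)) := by ring
    rw [e2, hg1]
    have e3 : (z ^ 2) ^ (2 * b + 1) = z ^ (2 * b + 1) * z ^ (2 * b + 1) := by ring
    rw [e3]
    linear_combination z ^ (2 * b + 1) * hpow
  have hfix : ∀ u : 𝓞 F, τ u = u → ∃ a, algebraMap (𝓞 F₀) (𝓞 F) a = u := C.quad.fix
  have hτu : τ u = u := by
    have h1 := congrArg τ hsu
    rw [map_mul, C.quad.tau_s, map_sub, map_pow, map_pow, hτw, ← hw] at h1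
    apply mul_left_cancel₀ C.quad.s_ne
    linear_combination -h1 - hsu
  have hτu' : τ (↑u⁻¹ : 𝓞 F) = ↑u⁻¹ := by
    have h1 : (u : 𝓞 F) * ↑u⁻¹ = 1 := u.mul_inv
    have h2 := congrArg τ h1
    rw [map_mul, map_one, hτu] at h2
    exact u.isUnit.mul_left_cancel (by rw [h1, h2])
  obtain ⟨v, hv⟩ := hfix _ hτu
  obtain ⟨v', hv'⟩ := hfix _ hτu'
  have hvv' : v * v' = 1 := by
    apply hinj
    rw [map_mul, hv, hv', map_one, u.mul_inv]
  refine ⟨⟨v, v', hvv', by rw [mul_comm, hvv']⟩, ?_⟩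
  change θ ^ 2 - 4 ∣ v - ((2 * b + 1 : ℕ) : 𝓞 F₀)
  have hdvd : (z - w) ∣ (u : 𝓞 F) - ((2 * b + 1 : ℕ) : 𝓞 F) := by
    rw [← Ideal.mem_span_singleton, ← Ideal.Quotient.mk_eq_mk_iff_sub_mem]
    set q := Ideal.Quotient.mk (Ideal.span {z - w})
    have hq : q z = q w := by
      rw [Ideal.Quotient.mk_eq_mk_iff_sub_mem]; exact Ideal.mem_span_singleton_self _
    have hq1 : q z * q w = 1 := by rw [← map_mul, hzw, map_one]
    have hz1 : q z ^ 2 = 1 := by rw [sq]; nth_rewrite 2 [hq]; exact hq1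
    have hw1 : q w ^ 2 = 1 := by rw [← hq]; exact hz1
    rw [hu, map_mul, map_pow, pow_mul, hw1, hgdef, map_sum, map_natCast]
    simp only [map_pow, hz1, one_pow]
    simp
  obtain ⟨y, hy⟩ := hdvd
  have hy1 : algebraMap (𝓞 F₀) (𝓞 F) (v - ((2 * b + 1 : ℕ) : 𝓞 F₀)) = (z - w) * y := by
    rw [map_sub, hv, map_natCast, hy]
  have hy2 : algebraMap (𝓞 F₀) (𝓞 F) (v - ((2 * b + 1 : ℕ) : 𝓞 F₀)) = -(z - w) * τ y := by
    have h1 := congrArg τ hy1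
    rw [τ.commutes, map_mul, C.quad.tau_s] at h1
    exact h1
  obtain ⟨n, hn⟩ := C.quad.norm_mem y
  have hss := C.ss
  rw [← hw] at hss
  apply (C.pi_prime hm).dvd_of_dvd_pow (n := 2)
  refine ⟨-n, ?_⟩
  apply hinj
  rw [map_mul, ← hss, map_neg, hn, map_pow, sq]
  nth_rewrite 1 [hy1]
  rw [hy2]; ring

theorem Cyc.exists_nonsq (C : Cyc m F₀ F z θ τ) (hm : m.Prime) (hm3 : 3 < m) :
    ∃ v : (𝓞 F₀)ˣ, v ∉ sqUnits (θ ^ 2 - 4) := by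
  have : Fact m.Prime := ⟨hm⟩
  have : NeZero m := ⟨hm.ne_zero⟩
  obtain ⟨a, ha⟩ := FiniteField.exists_nonsquare (F := ZMod m) (by rw [ZMod.ringChar_zmod_n]; omega)
  have hmodd := hm.odd_of_ne_two (by omega)
  obtain ⟨b, hb⟩ : ∃ b : ℕ, ((2 * b + 1 : ℕ) : ZMod m) = a := by
    rcases Nat.even_or_odd a.val with h | h
    · obtain ⟨b, hb⟩ := h.add_odd hmodd
      refine ⟨b, ?_⟩
      rw [← hb, Nat.cast_add, ZMod.natCast_self, add_zero, ZMod.natCast_zmod_val]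
    · obtain ⟨b, hb⟩ := h
      refine ⟨b, ?_⟩
      rw [← hb, ZMod.natCast_zmod_val]
  have hcop : (2 * b + 1).Coprime m := by
    rw [← ZMod.isUnit_iff_coprime, hb, isUnit_iff_ne_zero]
    rintro rfl
    exact ha (IsSquare.zero)
  obtain ⟨v, hv⟩ := C.exists_unit hm hm3 b hcop
  refine ⟨v, ?_⟩
  rintro ⟨x, hx⟩
  have hπ := C.pi_prime hm
  have hfin : Finite (𝓞 F₀ ⧸ Ideal.span {θ ^ 2 - 4}) :=
    Ideal.finiteQuotientOfFreeOfNeBot _ (span_ne_bot hπ.ne_zero)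
  have := Fintype.ofFinite (𝓞 F₀ ⧸ Ideal.span {θ ^ 2 - 4})
  have hcard : Fintype.card (𝓞 F₀ ⧸ Ideal.span {θ ^ 2 - 4}) = m := by
    rw [← Nat.card_eq_fintype_card, ← Submodule.cardQuot_apply, ← Ideal.absNorm_apply]
    exact C.norm
  let f := ZMod.ringEquivOfPrime (𝓞 F₀ ⧸ Ideal.span {θ ^ 2 - 4}) hm hcard
  apply ha
  set q := Ideal.Quotient.mk (Ideal.span {θ ^ 2 - 4})
  have h1 : q ((2 * b + 1 : ℕ) : 𝓞 F₀) = q x ^ 2 := by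
    rw [← map_pow, Ideal.Quotient.mk_eq_mk_iff_sub_mem, Ideal.mem_span_singleton]
    have := dvd_sub hx hv
    have e : (v : 𝓞 F₀) - x ^ 2 - (v - ((2 * b + 1 : ℕ) : 𝓞 F₀)) = ((2 * b + 1 : ℕ) : 𝓞 F₀) - x ^ 2 := by
      ring
    rwa [e] at this
  have h2 := congrArg f.symm h1
  rw [map_natCast, map_natCast, hb, map_pow, sq] at h2
  exact ⟨_, h2⟩

theorem Cyc.two_le_index (C : Cyc m F₀ F z θ τ) (hm : m.Prime) (hm3 : 3 < m) :
    2 ≤ (sqUnits (θ ^ 2 - 4)).index := by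
  have hπ := C.pi_prime hm
  have hfin : Finite (𝓞 F₀ ⧸ Ideal.span {θ ^ 2 - 4}) :=
    Ideal.finiteQuotientOfFreeOfNeBot _ (span_ne_bot hπ.ne_zero)
  have h0 : (sqUnits (θ ^ 2 - 4)).index ≠ 0 := by
    have hle : (Units.map (Ideal.Quotient.mk (Ideal.span {θ ^ 2 - 4})).toMonoidHom).ker
        ≤ sqUnits (θ ^ 2 - 4) := by
      intro u hu
      rw [MonoidHom.mem_ker] at hu
      have h1 := congrArg Units.val hu
      refine ⟨1, ?_⟩
      rw [← Ideal.mem_span_singleton, ← Ideal.Quotient.mk_eq_mk_iff_sub_mem, one_pow, map_one]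
      exact h1
    exact (Subgroup.finiteIndex_of_le hle).index_ne_zero
  have h1 : (sqUnits (θ ^ 2 - 4)).index ≠ 1 := by
    rw [Ne, Subgroup.index_eq_one]
    intro h
    obtain ⟨v, hv⟩ := C.exists_nonsq hm hm3
    rw [h] at hv
    exact hv trivial
  omega
end part3a
section part3b
open Module IntermediateField

theorem conj_of_sq_real {c : ℂ} {t : ℝ} (ht : 0 ≤ t) (h : c ^ 2 = (t : ℂ)) :
    (starRingEnd ℂ) c = c := by
  have h1 : c ^ 2 = ((Real.sqrt t : ℝ) : ℂ) ^ 2 := by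
    rw [h, ← Complex.ofReal_pow, Real.sq_sqrt ht]
  rcases sq_eq_sq_iff_eq_or_eq_neg.mp h1 with h2 | h2
  · rw [h2, Complex.conj_ofReal]
  · rw [h2, map_neg, Complex.conj_ofReal]

theorem not_dvd_absNorm {m : ℕ} (hm : m.Prime) {K : Type*} [Field K] [NumberField K] (l : 𝓞 K)
    (hl : l ≠ 0) (hcop : IsCoprime l (m : 𝓞 K)) : ¬ m ∣ Ideal.absNorm (Ideal.span {l}) := by
  intro h
  have : Fact m.Prime := ⟨hm⟩
  have hfin : Finite (𝓞 K ⧸ Ideal.span {l}) :=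
    Ideal.finiteQuotientOfFreeOfNeBot _ (span_ne_bot hl)
  rw [Ideal.absNorm_apply, Submodule.cardQuot_apply] at h
  obtain ⟨x, hx⟩ := exists_prime_addOrderOf_dvd_card' (G := 𝓞 K ⧸ Ideal.span {l}) m h
  have h1 : (m : 𝓞 K ⧸ Ideal.span {l}) * x = 0 := by
    rw [← nsmul_eq_mul, ← hx]; exact addOrderOf_nsmul_eq_zero x
  obtain ⟨a, b, hab⟩ := hcop
  set q := Ideal.Quotient.mk (Ideal.span {l})
  have h2 : q l = 0 := Ideal.Quotient.eq_zero_iff_mem.mpr (Ideal.mem_span_singleton_self l)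
  have h3 := congrArg q hab
  rw [map_add, map_mul, map_mul, h2, map_natCast, map_one, mul_zero, zero_add] at h3
  have h4 : x = 0 := by
    calc x = 1 * x := (one_mul x).symm
      _ = q b * (m * x) := by rw [← h3]; ring
      _ = 0 := by rw [h1, mul_zero]
  rw [h4, addOrderOf_zero] at hx
  exact hm.one_lt.ne hx

theorem adjoin_of_norm {m : ℕ} (hm : m.Prime) {K : Type*} [Field K] [NumberField K] (d : 𝓞 K)
    (h1 : m ∣ Ideal.absNorm (Ideal.span {d})) (h2 : ¬ m ^ 2 ∣ Ideal.absNorm (Ideal.span {d})) :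
    IntermediateField.adjoin ℚ {(d : K)} = ⊤ := by
  rw [← IntermediateField.finrank_eq_one_iff_eq_top]
  set k := finrank (IntermediateField.adjoin ℚ {(d : K)}) K with hk
  have hkpos : 0 < k := finrank_pos
  have h3 := Algebra.norm_eq_norm_adjoin ℚ (d : K)
  rw [← Algebra.coe_norm_int, ← hk] at h3
  have hintg : ∃ n : ℤ, ((Algebra.norm ℤ d : ℤ) : ℚ) = (n : ℚ) ^ k := by
    obtain ⟨q, h3⟩ : ∃ q : ℚ, ((Algebra.norm ℤ d : ℤ) : ℚ) = q ^ k := ⟨_, h3⟩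
    have hq : IsIntegral ℤ q := by
      apply IsIntegral.of_pow hkpos
      rw [← h3]
      exact isIntegral_algebraMap (R := ℤ) (x := Algebra.norm ℤ d)
    obtain ⟨n, hn⟩ := IsIntegrallyClosed.isIntegral_iff.mp hq
    exact ⟨n, by rw [h3, ← hn]; rfl⟩
  obtain ⟨n, h3⟩ := hintg
  have h4 : Algebra.norm ℤ d = n ^ k := by
    have h5 : ((Algebra.norm ℤ d : ℤ) : ℚ) = ((n ^ k : ℤ) : ℚ) := by rw [h3]; simp
    exact_mod_cast h5
  rw [Ideal.absNorm_span_singleton, h4, Int.natAbs_pow] at h1 h2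
  by_contra hk1
  apply h2
  exact (pow_dvd_pow_of_dvd (hm.dvd_of_dvd_pow h1) 2).trans (pow_dvd_pow _ (by omega))

variable {m : ℕ} {F₀ F : Type*} [Field F₀] [Field F] [NumberField F₀] [NumberField F]
    [Algebra F₀ F] {z : 𝓞 F} {θ : 𝓞 F₀} {τ : 𝓞 F ≃ₐ[𝓞 F₀] 𝓞 F}

theorem Cyc.pi_neg (C : Cyc m F₀ F z θ τ) (r : F₀ →+* ℝ) :
    r ((θ ^ 2 - 4 : 𝓞 F₀) : F₀) ≤ 0 := by
  let ψ : F₀ →+* ℂ := Complex.ofRealHom.comp r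
  let Ψ := ComplexEmbedding.lift F ψ
  have h1 : Ψ (((z - τ z) ^ 2 : 𝓞 F) : F) = (r ((θ ^ 2 - 4 : 𝓞 F₀) : F₀) : ℂ) := by
    rw [C.ss]
    exact ComplexEmbedding.lift_algebraMap_apply F ψ _
  have h2 : Ψ (((z - τ z) ^ 2 : 𝓞 F) : F) = (Ψ z - (starRingEnd ℂ) (Ψ z)) ^ 2 := by
    rw [← C.conj, ← map_sub, ← map_pow]; rfl
  rw [h1] at h2
  have h3 := congrArg Complex.re h2
  rw [Complex.ofReal_re] at h3
  rw [h3, sq, Complex.mul_re]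
  simp only [Complex.sub_re, Complex.conj_re, Complex.sub_im, Complex.conj_im]
  nlinarith [sq_nonneg (Ψ z).im]

theorem Cyc.not_dvd (C : Cyc m F₀ F z θ τ) (hm : m.Prime) (lam : 𝓞 F₀)
    (hcop : IsCoprime lam (m : 𝓞 F₀)) : ¬ θ ^ 2 - 4 ∣ lam := by
  intro h
  have h1 := Ideal.absNorm_mem (Ideal.span {θ ^ 2 - 4})
  rw [C.norm, Ideal.mem_span_singleton] at h1
  exact (C.pi_prime hm).not_isUnit (hcop.isUnit_of_dvd' h h1)

theorem Cyc.adjoin_d (C : Cyc m F₀ F z θ τ) (hm : m.Prime) (lam : 𝓞 F₀) (hlam : lam ≠ 0)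
    (hcop : IsCoprime lam (m : 𝓞 F₀)) :
    IntermediateField.adjoin ℚ {((-lam * (θ ^ 2 - 4) : 𝓞 F₀) : F₀)} = ⊤ := by
  have h1 : Ideal.absNorm (Ideal.span {-lam * (θ ^ 2 - 4)})
      = Ideal.absNorm (Ideal.span {lam}) * m := by
    rw [← Ideal.span_singleton_mul_span_singleton, map_mul, C.norm, Ideal.span_singleton_neg]
  apply adjoin_of_norm hm
  · rw [h1]; exact dvd_mul_left _ _
  · rw [h1, sq]
    intro h
    exact not_dvd_absNorm hm lam hlam hcop (Nat.dvd_of_mul_dvd_mul_right hm.pos h)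

theorem part_three (C : Cyc m F₀ F z θ τ) (hm : m.Prime) (hm3 : 3 < m)
    {E₀ : Type*} [Field E₀] [NumberField E₀] [Algebra F₀ E₀] (lam : 𝓞 F₀)
    (hpos : ∀ φ : F₀ →+* ℝ, 0 < φ (algebraMap (𝓞 F₀) F₀ lam))
    (hcop : IsCoprime lam (m : 𝓞 F₀))
    (hprime : Prime lam)
    (hsq4 : ∃ X : 𝓞 F₀, (4 : 𝓞 F₀) ∣ (-lam - X ^ 2))
    (s : 𝓞 E₀) (hs : s ^ 2 = algebraMap (𝓞 F₀) (𝓞 E₀) (-lam * (θ ^ 2 - 4)))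
    (hgen : IntermediateField.adjoin F₀ {(s : E₀)} = ⊤)
    (hgenQ : IntermediateField.adjoin ℚ {(s : E₀)} = ⊤)
    (hclF : Odd (NumberField.classNumber F₀)) : Odd (NumberField.classNumber E₀) := by
  have hπ := C.pi_prime hm
  have hnd := C.not_dvd hm lam hcop
  obtain ⟨X, c, hc⟩ := hsq4
  have hF₀real := C.real
  have hE₀real : IsTotallyReal E₀ := by
    refine totReal_of_gen (s : E₀) hgenQ fun φ => ?_
    have hr := hF₀real.complexEmbedding_isReal (φ.comp (algebraMap F₀ E₀))
    let r := hr.embedding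
    refine conj_of_sq_real (t := r ((-lam * (θ ^ 2 - 4) : 𝓞 F₀) : F₀)) ?_ ?_
    · have e : r ((-lam * (θ ^ 2 - 4) : 𝓞 F₀) : F₀)
          = r (algebraMap (𝓞 F₀) F₀ lam) * - r ((θ ^ 2 - 4 : 𝓞 F₀) : F₀) := by
        have e1 : ((-lam * (θ ^ 2 - 4) : 𝓞 F₀) : F₀)
          = -((algebraMap (𝓞 F₀) F₀ lam) * ((θ ^ 2 - 4 : 𝓞 F₀) : F₀)) := by
          rw [← neg_mul]; rfl
        rw [e1, map_neg, map_mul]; ring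
      rw [e]
      exact mul_nonneg (hpos r).le (neg_nonneg.mpr (C.pi_neg r))
    · rw [ComplexEmbedding.IsReal.coe_embedding_apply, ← map_pow]
      exact congrArg (fun x : 𝓞 E₀ => φ (x : E₀)) hs
  refine quad_odd (-lam * (θ ^ 2 - 4)) (X * θ) s hs (nonsq_of _ ?_) hgen ?_ ?_ hclF
    (sqUnits (θ ^ 2 - 4)) ?_ ?_
  · rintro ⟨y, hy⟩
    obtain ⟨w, rfl⟩ : θ ^ 2 - 4 ∣ y := by
      apply hπ.dvd_of_dvd_pow (n := 2)
      exact ⟨-lam, by rw [sq, ← hy]; ring⟩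
    apply hnd
    refine ⟨-(w ^ 2), ?_⟩
    apply mul_left_cancel₀ hπ.ne_zero
    linear_combination -hy
  · exact ⟨c * θ ^ 2 + lam, by linear_combination θ ^ 2 * hc⟩
  · intro hfr
    have e1 := IsTotallyReal.finrank F₀
    have e2 := IsTotallyReal.finrank E₀
    have e3 := Module.finrank_mul_finrank ℚ F₀ E₀
    have e4 := InfinitePlace.card_eq_nrRealPlaces_add_nrComplexPlaces F₀
    have e5 := InfinitePlace.card_eq_nrRealPlaces_add_nrComplexPlaces E₀
    rw [IsTotallyReal.nrComplexPlaces_eq_zero] at e4 e5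
    rw [hfr] at e3
    omega
  · rw [card_factors_two _ _ hprime.neg hπ]
    have := C.two_le_index hm hm3
    omega
  · intro σ hσ u x y hx hxy
    exact norm_sqUnits hσ hπ hnd hs u x y hx hxy
end part3b
theorem lift_hom {K L M : Type*} [Field K] [Field L] [Field M] [Algebra K M] [Algebra L M]
    (h : ∀ x : K, algebraMap K M x ∈ (algebraMap L M).fieldRange) :
    ∃ f : K →+* L, ∀ x, algebraMap L M (f x) = algebraMap K M x := by
  choose f hf using h
  have hinj := (algebraMap L M).injective
  refine ⟨{ toFun := f, map_one' := ?_, map_mul' := ?_, map_zero' := ?_, map_add' := ?_ }, hf⟩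
  · apply hinj; rw [hf, map_one, map_one]
  · intro x y; apply hinj; rw [hf, map_mul, map_mul, hf, hf]
  · apply hinj; rw [hf, map_zero, map_zero]
  · intro x y; apply hinj; rw [hf, map_add, map_add, hf, hf]

theorem alg_mem_of_gen {K M : Type*} [Field K] [Field M] [NumberField K] [NumberField M]
    [Algebra K M] (d : K) (hd : IntermediateField.adjoin ℚ {d} = ⊤) (S : IntermediateField ℚ M)
    (h : algebraMap K M d ∈ S) (x : K) : algebraMap K M x ∈ S := by
  have hx : x ∈ IntermediateField.adjoin ℚ {d} := by rw [hd]; trivial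
  induction hx using IntermediateField.adjoin_induction with
  | mem y hy => rw [Set.mem_singleton_iff] at hy; rw [hy]; exact h
  | algebraMap y =>
    have : algebraMap K M (algebraMap ℚ K y) = algebraMap ℚ M y := by simp
    rw [this]; exact IntermediateField.algebraMap_mem _ _
  | add x y _ _ h1 h2 => rw [map_add]; exact add_mem h1 h2
  | inv x _ h1 => rw [map_inv₀]; exact inv_mem h1
  | mul x y _ _ h1 h2 => rw [map_mul]; exact mul_mem h1 h2

theorem gen_up {K L : Type*} [Field K] [Field L] [NumberField K] [NumberField L]
    [Algebra K L] (d : L) (hd : IntermediateField.adjoin ℚ {d} = ⊤) :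
    IntermediateField.adjoin K {d} = ⊤ := by
  rw [eq_top_iff]
  intro y _
  have hy : y ∈ IntermediateField.adjoin ℚ {d} := by rw [hd]; trivial
  induction hy using IntermediateField.adjoin_induction with
  | mem x hx =>
    rw [Set.mem_singleton_iff] at hx; rw [hx]; exact IntermediateField.mem_adjoin_simple_self _ _
  | algebraMap x =>
    have : algebraMap ℚ L x = algebraMap K L (algebraMap ℚ K x) := by simp
    rw [this]; exact IntermediateField.algebraMap_mem _ _
  | add x y _ _ h1 h2 => exact add_mem (h1 trivial) (h2 trivial)
  | inv x _ h1 => exact inv_mem (h1 trivial)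
  | mul x y _ _ h1 h2 => exact mul_mem (h1 trivial) (h2 trivial)

/-- With `F = ℚ(ζ_m)`, `F₀` its maximal totally real subfield, and `λ ∈ 𝓞 F₀`
totally positive, coprime to `m`, prime, of odd norm, with `−λ` a square mod
`4·𝓞 F₀`, and inert in `F/F₀`: if the class number of `F` is odd, then the
class numbers of `E = F(√(−λ))` and of its maximal totally real subfield
`E₀ = F₀((ζ_m − ζ_m⁻¹)√(−λ))` are both odd. -/
theorem odd_class_number_of_CM_extension
    (m : ℕ) (hm : m.Prime) (hm3 : 3 < m)
    (F₀ F E E₀ : Type*) [Field F₀] [Field F] [Field E] [Field E₀]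
    [NumberField F₀] [NumberField F] [NumberField E] [NumberField E₀]
    [Algebra F₀ F] [Algebra F E] [Algebra F₀ E] [IsScalarTower F₀ F E]
    [Algebra E₀ E]
    (ζ : F) (hζ : IsPrimitiveRoot ζ m)
    (hFgen : IntermediateField.adjoin ℚ {ζ} = ⊤)
    (hF₀ : (algebraMap F₀ F).fieldRange
      = (IntermediateField.adjoin ℚ {ζ + ζ⁻¹}).toSubfield)
    (lam : 𝓞 F₀)
    (hpos : ∀ φ : F₀ →+* ℝ, 0 < φ (algebraMap (𝓞 F₀) F₀ lam))
    (hcop : IsCoprime lam (m : 𝓞 F₀))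
    (hprime : Prime lam)
    (hodd : Odd (Algebra.norm ℤ lam))
    (hsq4 : ∃ X : 𝓞 F₀, (4 : 𝓞 F₀) ∣ (-lam - X ^ 2))
    -- `λ` is inert in `F/F₀`
    (hinert : Prime (algebraMap (𝓞 F₀) (𝓞 F) lam))
    (s : E) (hs : s ^ 2 = algebraMap F₀ E (-(algebraMap (𝓞 F₀) F₀ lam)))
    (hEgen : IntermediateField.adjoin F {s} = ⊤)
    (hE₀ : (algebraMap E₀ E).fieldRange
      = (IntermediateField.adjoin ℚ
          {(algebraMap F E ζ - algebraMap F E ζ⁻¹) * s}).toSubfield)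
    (hclF : Odd (NumberField.classNumber F)) :
    Odd (NumberField.classNumber E) ∧ Odd (NumberField.classNumber E₀) := by
  obtain ⟨z, θ, τ, hzζ, C⟩ := cyc_setup hm hm3 ζ hζ hFgen hF₀
  have hτζ : ((τ z : 𝓞 F) : F) = ζ⁻¹ := by
    have h1 : (z : F) * ((τ z : 𝓞 F) : F) = 1 := congrArg (fun x : 𝓞 F => (x : F)) C.mul_tau
    rw [← hzζ]; exact eq_inv_of_mul_eq_one_right h1
  have hsint : IsIntegral ℤ s := by
    apply IsIntegral.of_pow two_pos
    rw [hs]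
    exact (-lam).isIntegral_coe.algebraMap
  refine ⟨?_, ?_⟩
  · obtain ⟨X, c, hc⟩ := hsq4
    refine part_one hm3 ζ hζ (-(algebraMap (𝓞 F₀) (𝓞 F) lam)) (algebraMap (𝓞 F₀) (𝓞 F) X)
      hinert.neg ?_ ⟨s, hsint⟩ ?_ hEgen hclF
    · refine ⟨algebraMap (𝓞 F₀) (𝓞 F) c, ?_⟩
      rw [← map_neg, ← map_pow, ← map_sub, hc, map_mul, map_ofNat]
    · apply RingOfIntegers.ext
      change s ^ 2 = algebraMap F E (-(algebraMap F₀ F (algebraMap (𝓞 F₀) F₀ lam)))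
      rw [hs, map_neg, map_neg, IsScalarTower.algebraMap_apply F₀ F E]
  · have hclF₀ := part_two C hm hm3 hclF
    set s' : E := (algebraMap F E ζ - algebraMap F E ζ⁻¹) * s with hs'
    have hss : (ζ - ζ⁻¹) ^ 2 = algebraMap F₀ F ((θ ^ 2 - 4 : 𝓞 F₀) : F₀) := by
      have h1 := congrArg (fun x : 𝓞 F => (x : F)) C.ss
      rw [← hτζ, ← hzζ]
      exact h1
    have hs'sq : s' ^ 2 = algebraMap F₀ E ((-lam * (θ ^ 2 - 4) : 𝓞 F₀) : F₀) := by
      have e1 : ((-lam * (θ ^ 2 - 4) : 𝓞 F₀) : F₀)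
          = -(algebraMap (𝓞 F₀) F₀ lam) * ((θ ^ 2 - 4 : 𝓞 F₀) : F₀) := rfl
      rw [e1, map_mul, ← hs, IsScalarTower.algebraMap_apply F₀ F E ((θ ^ 2 - 4 : 𝓞 F₀) : F₀), ← hss,
        hs', map_pow, map_sub]
      ring
    have hgd := C.adjoin_d hm lam hprime.ne_zero hcop
    have hself : s' ∈ IntermediateField.adjoin ℚ {s'} :=
      IntermediateField.mem_adjoin_simple_self ℚ s'
    obtain ⟨f, hf⟩ := lift_hom (K := F₀) (L := E₀) (M := E) (fun x => by
      rw [hE₀]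
      refine alg_mem_of_gen _ hgd (IntermediateField.adjoin ℚ {s'}) ?_ x
      rw [← hs'sq]
      exact pow_mem hself 2)
    obtain ⟨s₀, hs₀⟩ : s' ∈ (algebraMap E₀ E).fieldRange := by rw [hE₀]; exact hself
    letI : Algebra F₀ E₀ := f.toAlgebra
    have hs₀sq : s₀ ^ 2 = algebraMap F₀ E₀ ((-lam * (θ ^ 2 - 4) : 𝓞 F₀) : F₀) := by
      apply (algebraMap E₀ E).injective
      rw [map_pow, hs₀, hs'sq]
      exact (hf _).symm
    have hs₀int : IsIntegral ℤ s₀ := by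
      apply IsIntegral.of_pow two_pos
      rw [hs₀sq]
      exact (-lam * (θ ^ 2 - 4)).isIntegral_coe.algebraMap
    have hgenQ : IntermediateField.adjoin ℚ {s₀} = ⊤ := by
      apply gen_of_range (L := E)
      rw [hs₀]; exact hE₀
    exact part_three C hm hm3 lam hpos hcop hprime hsq4 ⟨s₀, hs₀int⟩ (RingOfIntegers.ext hs₀sq)
      (gen_up s₀ hgenQ) hgenQ hclF₀
end

section
/- Let E be a CM field with maximal totally real subfield E₀. If N_{E/E₀}(U_E) = Q·U_{E₀}² where Q = [N_{E/E₀}(U_E) : U_{E₀}²] = 2, and E₀ has units of almost independent signs, then every totally positive unit of E₀ is a norm from E, i.e. [U_{E₀}⁺ : N_{E/E₀}(U_E)] = 1. -/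
open NumberField

lemma norm_pos_aux (E₀ E : Type*) [Field E₀] [Field E] [NumberField E₀] [NumberField E]
    [Algebra E₀ E] (hdeg : Module.finrank E₀ E = 2)
    (hcm : ∀ φ : E →+* ℂ, ∃ x : E, (φ x).im ≠ 0) (x : E) (hx : x ≠ 0) (φ : E₀ →+* ℝ) :
    0 < φ (Algebra.norm E₀ x) := by
  classical
  let _ : Algebra E₀ ℂ := ((algebraMap ℝ ℂ).comp φ).toAlgebra
  have halg : ∀ y : E₀, algebraMap E₀ ℂ y = ((φ y : ℝ) : ℂ) := fun y => rfl
  have _ : FiniteDimensional E₀ E := Module.finite_of_finrank_pos (by omega)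
  have hprod := Algebra.norm_eq_prod_embeddings (K := E₀) (L := E) ℂ x
  have hcard : Fintype.card (E →ₐ[E₀] ℂ) = 2 := by rw [AlgHom.card, hdeg]
  obtain ⟨σ⟩ : Nonempty (E →ₐ[E₀] ℂ) := Fintype.card_pos_iff.mp (by omega)
  let τ : E →ₐ[E₀] ℂ :=
    { (starRingEnd ℂ).comp σ.toRingHom with
      commutes' := by
        intro r
        have : σ (algebraMap E₀ E r) = ((φ r : ℝ) : ℂ) := by rw [σ.commutes, halg]
        simp [halg, this] }
  have hτ : ∀ y, τ y = starRingEnd ℂ (σ y) := fun y => rfl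
  have hne : σ ≠ τ := by
    intro h
    obtain ⟨y, hy⟩ := hcm σ.toRingHom
    have h1 : σ y = starRingEnd ℂ (σ y) := by rw [← hτ, ← h]
    exact hy (Complex.conj_eq_iff_im.mp h1.symm)
  have huniv : (Finset.univ : Finset (E →ₐ[E₀] ℂ)) = {σ, τ} := by
    symm
    apply Finset.eq_univ_of_card
    rw [Finset.card_pair hne, hcard]
  rw [huniv, Finset.prod_pair hne, hτ, Complex.mul_conj, halg] at hprod
  rw [Complex.ofReal_inj.mp hprod, Complex.normSq_pos]
  simpa using hx

/-- For totally real `E₀`, an upper bound for `U / U²`. -/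
lemma units_mod_squares_aux (E₀ : Type*) [Field E₀] [NumberField E₀]
    (htotreal : ∀ φ : E₀ →+* ℂ, ∀ x : E₀, (φ x).im = 0) :
    Finite ((𝓞 E₀)ˣ ⧸ (powMonoidHom 2 : (𝓞 E₀)ˣ →* (𝓞 E₀)ˣ).range) ∧ Finite (E₀ →+* ℝ) ∧
    Nat.card ((𝓞 E₀)ˣ ⧸ (powMonoidHom 2 : (𝓞 E₀)ˣ →* (𝓞 E₀)ˣ).range) ≤
      2 ^ Nat.card (E₀ →+* ℝ) := by
  classical
  have hfin : Finite (E₀ →+* ℝ) :=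
    Finite.of_injective (fun φ : E₀ →+* ℝ => (algebraMap ℝ ℂ).comp φ) (by
      intro a b h
      ext y
      have := RingHom.congr_fun h y
      simpa using this)
  have hreal : ∀ ψ : E₀ →+* ℂ, ComplexEmbedding.IsReal ψ := by
    intro ψ
    rw [ComplexEmbedding.isReal_iff]
    ext y
    exact Complex.conj_eq_iff_im.mpr (htotreal ψ y)
  have hplaces : Nat.card (InfinitePlace E₀) ≤ Nat.card (E₀ →+* ℝ) := by
    apply Nat.card_le_card_of_surjective
      (fun φ : E₀ →+* ℝ => InfinitePlace.mk ((algebraMap ℝ ℂ).comp φ))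
    intro w
    refine ⟨(hreal w.embedding).embedding, ?_⟩
    conv_rhs => rw [← w.mk_embedding]
    congr 1
    ext y
    simp [InfinitePlace.norm_embedding_eq]
  have htors : ∀ ζ ∈ Units.torsion E₀, ζ = 1 ∨ ζ = -1 := by
    intro ζ hζ
    obtain ⟨w⟩ : Nonempty (InfinitePlace E₀) := inferInstance
    have h1 := (Units.mem_torsion E₀).mp hζ w
    rw [← InfinitePlace.norm_embedding_eq, ← (hreal w.embedding).coe_embedding_apply,
      Complex.norm_real, Real.norm_eq_abs] at h1
    rcases eq_or_eq_neg_of_abs_eq h1 with h | h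
    · left
      rw [← map_one (hreal w.embedding).embedding] at h
      ext
      simpa using (RingHom.injective _ h)
    · right
      rw [← map_one (hreal w.embedding).embedding, ← map_neg] at h
      ext
      simpa using (RingHom.injective _ h)
  let f : (Option (Fin (Units.rank E₀)) → Bool) →
      ((𝓞 E₀)ˣ ⧸ (powMonoidHom 2 : (𝓞 E₀)ˣ →* (𝓞 E₀)ˣ).range) := fun b =>
    QuotientGroup.mk ((if b none then -1 else 1) *
      ∏ i, if b (some i) then Units.fundSystem E₀ i else 1)
  have hf : Function.Surjective f := by
    intro q
    obtain ⟨x, rfl⟩ := QuotientGroup.mk_surjective q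
    obtain ⟨⟨ζ, e⟩, hx, -⟩ := Units.exist_unique_eq_mul_prod E₀ x
    simp only at hx
    refine ⟨fun o => o.elim (decide ((ζ : (𝓞 E₀)ˣ) = -1)) (fun i => decide (Odd (e i))), ?_⟩
    simp only [f]
    rw [QuotientGroup.eq, MonoidHom.mem_range]
    refine ⟨∏ i, (Units.fundSystem E₀ i) ^ (e i / 2), ?_⟩
    rw [eq_inv_mul_iff_mul_eq, hx]
    simp only [Option.elim, decide_eq_true_eq, powMonoidHom_apply]
    have h1 : (if (ζ : (𝓞 E₀)ˣ) = -1 then (-1 : (𝓞 E₀)ˣ) else 1) = ζ := by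
      rcases htors ζ ζ.2 with h | h
      · split_ifs with h' <;> simp_all
      · simp [h]
    rw [h1, mul_assoc, ← Finset.prod_pow, ← Finset.prod_mul_distrib]
    congr 1
    refine Finset.prod_congr rfl fun i _ => ?_
    split_ifs with ho
    · obtain ⟨k, hk⟩ := ho
      have : e i / 2 = k := by omega
      rw [this, hk, ← zpow_natCast, ← zpow_mul, ← zpow_one_add]
      congr 1; push_cast; ring
    · obtain ⟨k, hk⟩ := Int.not_odd_iff_even.mp ho
      have : e i / 2 = k := by omega
      rw [this, hk, one_mul, ← zpow_natCast, ← zpow_mul]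
      congr 1; push_cast; ring
  refine ⟨Finite.of_surjective f hf, hfin, ?_⟩
  refine (Nat.card_le_card_of_surjective f hf).trans ?_
  have hpos : 0 < Fintype.card (InfinitePlace E₀) := Fintype.card_pos
  rw [Nat.card_eq_fintype_card (α := InfinitePlace E₀)] at hplaces
  have hc : Nat.card (Option (Fin (Units.rank E₀)) → Bool) =
      2 ^ (Fintype.card (InfinitePlace E₀) - 1 + 1) := by
    simp [Nat.card_eq_fintype_card, Units.rank]
  rw [hc]
  exact Nat.pow_le_pow_right (by norm_num) (by omega)

lemma count_aux (E₀ : Type*) [Field E₀] [NumberField E₀]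
    (hfinQ : Finite ((𝓞 E₀)ˣ ⧸ (powMonoidHom 2 : (𝓞 E₀)ˣ →* (𝓞 E₀)ˣ).range))
    (hfin : Finite (E₀ →+* ℝ))
    (hcard : Nat.card ((𝓞 E₀)ˣ ⧸ (powMonoidHom 2 : (𝓞 E₀)ˣ →* (𝓞 E₀)ˣ).range) ≤
      2 ^ Nat.card (E₀ →+* ℝ))
    (hsigns1 : ∃ ε : (E₀ →+* ℝ) → Prop, ∀ e : (𝓞 E₀)ˣ,
        ¬ (∀ φ : E₀ →+* ℝ, (0 < φ (algebraMap (𝓞 E₀) E₀ ↑e) ↔ ε φ)))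
    (hsigns2 : ∀ ε₁ ε₂ : (E₀ →+* ℝ) → Prop,
        (∀ e : (𝓞 E₀)ˣ, ¬ (∀ φ : E₀ →+* ℝ, (0 < φ (algebraMap (𝓞 E₀) E₀ ↑e) ↔ ε₁ φ))) →
        (∀ e : (𝓞 E₀)ˣ, ¬ (∀ φ : E₀ →+* ℝ, (0 < φ (algebraMap (𝓞 E₀) E₀ ↑e) ↔ ε₂ φ))) →
        ∃ e : (𝓞 E₀)ˣ, ∀ φ : E₀ →+* ℝ,
          (0 < φ (algebraMap (𝓞 E₀) E₀ ↑e) ↔ (ε₁ φ ↔ ε₂ φ)))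
    (u w : (𝓞 E₀)ˣ)
    (hu : ∀ φ : E₀ →+* ℝ, 0 < φ (algebraMap (𝓞 E₀) E₀ ↑u))
    (hw : ∀ φ : E₀ →+* ℝ, 0 < φ (algebraMap (𝓞 E₀) E₀ ↑w))
    (h1 : ∀ e : (𝓞 E₀)ˣ, u ≠ e ^ 2) (h2 : ∀ e : (𝓞 E₀)ˣ, w ≠ e ^ 2)
    (h3 : ∀ e : (𝓞 E₀)ˣ, u * w ≠ e ^ 2) : False := by
  classical
  have _ : Fintype (E₀ →+* ℝ) := Fintype.ofFinite _
  let S : (𝓞 E₀)ˣ → ((E₀ →+* ℝ) → Prop) := fun e φ => 0 < φ (algebraMap (𝓞 E₀) E₀ ↑e)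
  let R : Set ((E₀ →+* ℝ) → Prop) := Set.range S
  obtain ⟨ε, hε⟩ := hsigns1
  have hnot : ∀ δ : (E₀ →+* ℝ) → Prop, δ ∉ R → ∀ e : (𝓞 E₀)ˣ,
      ¬ (∀ φ : E₀ →+* ℝ, (0 < φ (algebraMap (𝓞 E₀) E₀ ↑e) ↔ δ φ)) := by
    intro δ hδ e he
    exact hδ ⟨e, funext fun φ => propext (he φ)⟩
  -- the image of the sign map contains at least half of the sign patterns
  have hR : Nat.card ((Rᶜ : Set _)) ≤ Nat.card R := by
    refine Nat.card_le_card_of_injective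
      (fun δ : (Rᶜ : Set _) => (⟨fun φ => (δ.1 φ ↔ ε φ), ?_⟩ : R)) ?_
    · obtain ⟨e, he⟩ := hsigns2 δ.1 ε (hnot _ δ.2) hε
      exact ⟨e, funext fun φ => propext (he φ)⟩
    · intro a b hab
      ext φ
      have := congrFun (congrArg Subtype.val hab) φ
      simp only [eq_iff_iff] at this
      tauto
  have htot : Nat.card R + Nat.card ((Rᶜ : Set _)) = 2 ^ Nat.card (E₀ →+* ℝ) := by
    rw [← Nat.card_sum, Nat.card_congr (Equiv.Set.sumCompl R)]
    simp [Nat.card_eq_fintype_card]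
  have hpos : 0 < Nat.card R := by
    have : Nonempty R := ⟨⟨S 1, 1, rfl⟩⟩
    exact Nat.card_pos
  -- multiplying by totally positive units or squares keeps the signs
  have hSpos : ∀ a t : (𝓞 E₀)ˣ, (∀ φ : E₀ →+* ℝ, 0 < φ (algebraMap (𝓞 E₀) E₀ ↑t)) →
      S (a * t) = S a := by
    intro a t ht
    funext φ
    simp only [S, Units.val_mul, map_mul]
    exact propext (mul_pos_iff_of_pos_right (ht φ))
  have hsqpos : ∀ h : (𝓞 E₀)ˣ, ∀ φ : E₀ →+* ℝ,
      0 < φ (algebraMap (𝓞 E₀) E₀ ↑(h ^ 2)) := by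
    intro h φ
    simp only [Units.val_pow_eq_pow_val, map_pow]
    have : φ (algebraMap (𝓞 E₀) E₀ ↑h) ≠ 0 := by simp
    positivity
  let T : Bool × Bool → (𝓞 E₀)ˣ := fun b => (if b.1 then u else 1) * (if b.2 then w else 1)
  have hTpos : ∀ b, ∀ φ : E₀ →+* ℝ, 0 < φ (algebraMap (𝓞 E₀) E₀ ↑(T b)) := by
    rintro ⟨b, c⟩ φ
    have := hu φ
    have := hw φ
    cases b <;> cases c <;> simp_all [T]
  have hTinj : ∀ b c h, T b * h ^ 2 = T c → b = c := by
    have key : ∀ b c h, T b * h ^ 2 = T c → b ≠ c →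
        ∃ g : (𝓞 E₀)ˣ, u = g ^ 2 ∨ w = g ^ 2 ∨ u * w = g ^ 2 := by
      rintro ⟨b₁, b₂⟩ ⟨c₁, c₂⟩ h hb hne
      cases b₁ <;> cases b₂ <;> cases c₁ <;> cases c₂ <;> simp [T] at hb hne
      · exact ⟨h, .inr (.inl hb.symm)⟩
      · exact ⟨h, .inl hb.symm⟩
      · exact ⟨h, .inr (.inr hb.symm)⟩
      · exact ⟨h⁻¹, .inr (.inl (by rw [inv_pow]; exact eq_inv_of_mul_eq_one_left hb))⟩
      · exact ⟨w * h, .inr (.inr (by rw [← hb, mul_pow, sq w, mul_right_comm, mul_assoc]))⟩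
      · refine ⟨h, .inl ?_⟩
        apply mul_right_cancel (b := w)
        rw [← hb, mul_comm]
      · exact ⟨h⁻¹, .inl (by rw [inv_pow]; exact eq_inv_of_mul_eq_one_left hb)⟩
      · exact ⟨u * h, .inr (.inr (by rw [← hb, mul_pow, sq u, mul_assoc]))⟩
      · exact ⟨h, .inr (.inl hb.symm)⟩
      · exact ⟨h⁻¹, .inr (.inr (by rw [inv_pow]; exact eq_inv_of_mul_eq_one_left hb))⟩
      · refine ⟨h⁻¹, .inl ?_⟩
        rw [inv_pow]
        apply eq_inv_of_mul_eq_one_left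
        apply mul_right_cancel (b := w)
        rw [one_mul, mul_right_comm, hb]
      · refine ⟨h⁻¹, .inr (.inl ?_)⟩
        rw [inv_pow]
        apply eq_inv_of_mul_eq_one_left
        apply mul_left_cancel (a := u)
        rw [mul_one, ← mul_assoc, hb]
    intro b c h hb
    by_contra hne
    obtain ⟨g, hg | hg | hg⟩ := key b c h hb hne
    exacts [h1 g hg, h2 g hg, h3 g hg]
  let s : R → (𝓞 E₀)ˣ := fun r => r.2.choose
  have hs : ∀ r : R, S (s r) = r.1 := fun r => r.2.choose_spec
  let F : R × (Bool × Bool) → ((𝓞 E₀)ˣ ⧸ (powMonoidHom 2 : (𝓞 E₀)ˣ →* (𝓞 E₀)ˣ).range) :=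
    fun p => QuotientGroup.mk (s p.1 * T p.2)
  have hF : Function.Injective F := by
    rintro ⟨r, b⟩ ⟨r', c⟩ h
    simp only [F] at h
    rw [QuotientGroup.eq, MonoidHom.mem_range] at h
    obtain ⟨g, hg⟩ := h
    rw [powMonoidHom_apply, eq_inv_mul_iff_mul_eq] at hg
    have hS := congrArg S hg
    rw [hSpos _ _ (hsqpos g), hSpos _ _ (hTpos b), hSpos _ _ (hTpos c), hs, hs] at hS
    have hr : r = r' := Subtype.ext hS
    subst hr
    rw [mul_assoc] at hg
    rw [hTinj b c g (mul_left_cancel hg)]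
  have hle := Nat.card_le_card_of_injective F hF
  rw [Nat.card_prod] at hle
  have h4 : Nat.card (Bool × Bool) = 4 := by simp [Nat.card_eq_fintype_card]
  rw [h4] at hle
  omega

/-- Let `E` be a CM field with maximal totally real subfield `E₀`.  If the Hasse
unit index `Q(E) = [N_{E/E₀}(U_E) : U_{E₀}²]` equals `2` and `E₀` has units of
almost independent signs (the sign map `ρ : U_{E₀} → {±1}ⁿ` has cokernel of
order `2`), then every totally positive unit of `E₀` is a norm of a unit of
`E`, i.e. `[U_{E₀}⁺ : N_{E/E₀}(U_E)] = 1`. -/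
theorem totally_positive_units_are_norms
    (E₀ E : Type*) [Field E₀] [Field E] [NumberField E₀] [NumberField E]
    [Algebra E₀ E]
    (hdeg : Module.finrank E₀ E = 2)
    -- `E₀` is totally real
    (htotreal : ∀ φ : E₀ →+* ℂ, ∀ x : E₀, (φ x).im = 0)
    -- `E` is totally complex (so that `E` is a CM field over `E₀`)
    (hcm : ∀ φ : E →+* ℂ, ∃ x : E, (φ x).im ≠ 0)
    -- `Q(E) = [N_{E/E₀}(U_E) : U_{E₀}²] = 2`:
    -- some unit norm is not the square of a unit of `E₀` ...
    (hQ1 : ∃ v : (𝓞 E)ˣ, ∀ e : (𝓞 E₀)ˣ,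
        Algebra.norm E₀ (algebraMap (𝓞 E) E ↑v) ≠ (algebraMap (𝓞 E₀) E₀ ↑e) ^ 2)
    -- ... and any two such unit norms differ by the square of a unit of `E₀`
    (hQ2 : ∀ v₁ v₂ : (𝓞 E)ˣ,
        (∀ e : (𝓞 E₀)ˣ,
          Algebra.norm E₀ (algebraMap (𝓞 E) E ↑v₁) ≠ (algebraMap (𝓞 E₀) E₀ ↑e) ^ 2) →
        (∀ e : (𝓞 E₀)ˣ,
          Algebra.norm E₀ (algebraMap (𝓞 E) E ↑v₂) ≠ (algebraMap (𝓞 E₀) E₀ ↑e) ^ 2) →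
        ∃ e : (𝓞 E₀)ˣ,
          Algebra.norm E₀ (algebraMap (𝓞 E) E ↑v₁) *
            Algebra.norm E₀ (algebraMap (𝓞 E) E ↑v₂)
            = (algebraMap (𝓞 E₀) E₀ ↑e) ^ 2)
    -- `E₀` has units of almost independent signs: the cokernel of the sign map
    -- has order 2, i.e. some sign pattern is not achieved by a unit ...
    (hsigns1 : ∃ ε : (E₀ →+* ℝ) → Prop, ∀ e : (𝓞 E₀)ˣ,
        ¬ (∀ φ : E₀ →+* ℝ, (0 < φ (algebraMap (𝓞 E₀) E₀ ↑e) ↔ ε φ)))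
    -- ... and the product of any two unachieved sign patterns is achieved
    (hsigns2 : ∀ ε₁ ε₂ : (E₀ →+* ℝ) → Prop,
        (∀ e : (𝓞 E₀)ˣ, ¬ (∀ φ : E₀ →+* ℝ, (0 < φ (algebraMap (𝓞 E₀) E₀ ↑e) ↔ ε₁ φ))) →
        (∀ e : (𝓞 E₀)ˣ, ¬ (∀ φ : E₀ →+* ℝ, (0 < φ (algebraMap (𝓞 E₀) E₀ ↑e) ↔ ε₂ φ))) →
        ∃ e : (𝓞 E₀)ˣ, ∀ φ : E₀ →+* ℝ,
          (0 < φ (algebraMap (𝓞 E₀) E₀ ↑e) ↔ (ε₁ φ ↔ ε₂ φ))) :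
    ∀ u : (𝓞 E₀)ˣ, (∀ φ : E₀ →+* ℝ, 0 < φ (algebraMap (𝓞 E₀) E₀ ↑u)) →
      ∃ v : (𝓞 E)ˣ,
        Algebra.norm E₀ (algebraMap (𝓞 E) E ↑v) = algebraMap (𝓞 E₀) E₀ ↑u := by
  classical
  intro u hu
  obtain ⟨v, hv⟩ := hQ1
  obtain ⟨hfinQ, hfin, hcard⟩ := units_mod_squares_aux E₀ htotreal
  have hinj : Function.Injective (algebraMap (𝓞 E₀) E₀) := RingOfIntegers.coe_injective
  let w : (𝓞 E₀)ˣ := Units.map (RingOfIntegers.norm E₀) v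
  have hw : algebraMap (𝓞 E₀) E₀ ↑w = Algebra.norm E₀ (algebraMap (𝓞 E) E ↑v) := rfl
  have hwpos : ∀ φ : E₀ →+* ℝ, 0 < φ (algebraMap (𝓞 E₀) E₀ ↑w) := by
    intro φ
    rw [hw]
    exact norm_pos_aux E₀ E hdeg hcm _ (by simp) φ
  have hwsq : ∀ e : (𝓞 E₀)ˣ, w ≠ e ^ 2 := by
    intro e he
    apply hv e
    rw [← hw, he]
    simp
  -- squares of units are norms
  have hsqnorm : ∀ e : (𝓞 E₀)ˣ,
      Units.map (RingOfIntegers.norm E₀) (Units.map (algebraMap (𝓞 E₀) (𝓞 E)).toMonoidHom e)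
        = e ^ 2 := by
    intro e
    ext1
    have := RingOfIntegers.norm_algebraMap (L := E) E₀ (e : 𝓞 E₀)
    rw [hdeg] at this
    simpa using this
  suffices h : ∃ v' : (𝓞 E)ˣ, Units.map (RingOfIntegers.norm E₀) v' = u by
    obtain ⟨v', hv'⟩ := h
    exact ⟨v', by rw [← hv']; rfl⟩
  by_cases h1 : ∃ e : (𝓞 E₀)ˣ, u = e ^ 2
  · obtain ⟨e, he⟩ := h1
    exact ⟨_, (hsqnorm e).trans he.symm⟩
  by_cases h2 : ∃ e : (𝓞 E₀)ˣ, u * w = e ^ 2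
  · obtain ⟨e, he⟩ := h2
    refine ⟨Units.map (algebraMap (𝓞 E₀) (𝓞 E)).toMonoidHom e * v⁻¹, ?_⟩
    rw [map_mul, hsqnorm, map_inv, ← he]
    exact mul_inv_cancel_right u w
  exfalso
  exact count_aux E₀ hfinQ hfin hcard hsigns1 hsigns2 u w hu hwpos
    (fun e he => h1 ⟨e, he⟩) hwsq (fun e he => h2 ⟨e, he⟩)
end

section
/- Let F₀ = ℚ(√5) with ring of integers O_{F₀}, and let α, β ∈ O_{F₀} be relatively prime of odd norm. Suppose λ ∈ O_{F₀} has odd norm, −λ is a square modulo 4·O_{F₀}, β is totally positive, and λ, β are relatively prime. Then the product of quadratic residue symbols (−λ/β)(β/λ) equals 1. -/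
open NumberField
namespace QR5
open scoped NumberTheorySymbols

/-- signed Jacobi reciprocity -/
lemma jac_recip (n Q : ℤ) (hn : n % 2 = 1) (hQ : Q % 2 = 1) :
    J(n | Q.natAbs) = J(Q | n.natAbs) * (if n % 4 = 3 ∧ Q % 4 = 3 then -1 else 1) *
      (if n < 0 ∧ Q < 0 then -1 else 1) := by
  have key : ∀ x y : ℕ, x % 2 = 1 → y % 2 = 1 →
      J(x | y) = J(y | x) * (if x % 4 = 3 ∧ y % 4 = 3 then -1 else 1) := by
    intro x y hx hy
    rw [← jacobiSym.quadratic_reciprocity_if hx hy]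
    split_ifs <;> simp_all
  have neg : ∀ (x : ℤ) (y : ℕ), y % 2 = 1 → J(-x | y) = (if y % 4 = 3 then -1 else 1) * J(x | y) := by
    intro x y hy
    rw [jacobiSym.neg x (Nat.odd_iff.mpr hy), ZMod.χ₄_nat_eq_if_mod_four]
    have : y % 2 ≠ 0 := by omega
    split_ifs <;> first | omega | simp_all
  obtain ⟨x, hx | hx⟩ := Int.eq_nat_or_neg n <;> obtain ⟨y, hy | hy⟩ := Int.eq_nat_or_neg Q <;>
    subst hx <;> subst hy <;> simp only [Int.natAbs_neg, Int.natAbs_natCast]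
  · rw [key x y (by omega) (by omega)]
    split_ifs <;> first | omega | simp
  · rw [neg _ x (by omega), key x y (by omega) (by omega)]
    split_ifs <;> first | omega | simp
  · rw [neg _ y (by omega), key x y (by omega) (by omega)]
    split_ifs <;> first | omega | simp
  · rw [neg _ y (by omega), neg _ x (by omega), key x y (by omega) (by omega)]
    split_ifs <;> first | omega | simp

lemma jac_sq (u n : ℤ) (Q : ℤ) (h : n ∣ Q - u ^ 2) (hc : IsCoprime n Q) : J(Q | n.natAbs) = 1 := by
  have h1 : J(Q | n.natAbs) = J(u ^ 2 | n.natAbs) := by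
    apply jacobiSym.mod_left'
    apply Int.ModEq.symm
    rw [Int.modEq_iff_dvd]
    simpa using h
  rw [h1, jacobiSym.sq_one']
  have h2 : IsCoprime n (u ^ 2) := by
    obtain ⟨k, hk⟩ := h
    have : u ^ 2 = Q + n * (-k) := by linarith
    rw [this]
    exact IsCoprime.add_mul_left_right hc (-k)
  have h3 : IsCoprime n u := (IsCoprime.pow_right_iff (by norm_num)).mp h2
  have := Int.isCoprime_iff_gcd_eq_one.mp h3.symm
  simpa only [Int.gcd, Int.natAbs_natCast] using this

/-- the integer norm form -/
def nm (a b : ℤ) : ℤ := a ^ 2 + a * b - b ^ 2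

lemma jac_D (c d : ℤ) (hc : c % 4 = 1) (hd : d % 4 = 0) (hcop : IsCoprime d (nm c d)) :
    J(d | (nm c d).natAbs) = if d < 0 ∧ nm c d < 0 then -1 else 1 := by
  obtain ⟨e, rfl⟩ : ∃ e, d = 4 * e := ⟨d / 4, by omega⟩
  obtain ⟨k, hk⟩ : ∃ k, c = 4 * k + 1 := ⟨c / 4, by omega⟩
  by_cases he : e = 0
  · subst he
    have : IsUnit (nm c (4*0)) := by simpa [isCoprime_zero_left] using hcop
    have h1 := Int.natAbs_of_isUnit this
    rw [h1]; simp
  have hQ8 : nm c (4 * e) % 8 = (1 + 4 * e) % 8 := by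
    have : nm c (4 * e) = 8 * (2 * k^2 + k + 2 * k * e - 2 * e^2) + (1 + 4 * e) := by
      rw [hk]; simp only [nm]; ring
    omega
  set Q := nm c (4 * e) with hQ
  obtain ⟨j, f, hf, hef⟩ : ∃ (j : ℕ) (f : ℤ), f % 2 = 1 ∧ e = 2 ^ j * f := by
    have hfin : FiniteMultiplicity (2 : ℤ) e := Int.finiteMultiplicity_iff.mpr ⟨by norm_num, he⟩
    obtain ⟨f, hef, hf⟩ := hfin.exists_eq_pow_mul_and_not_dvd
    exact ⟨_, f, by omega, hef⟩
  have h2 : J(2 | Q.natAbs) ^ j = 1 := by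
    rcases j with _ | j
    · simp
    · have : e % 2 = 0 := by rw [hef, pow_succ]; exact Int.emod_eq_zero_of_dvd ⟨2^j * f, by ring⟩
      have ho : Odd Q.natAbs := by rw [Nat.odd_iff]; omega
      rw [jacobiSym.at_two ho, ZMod.χ₈_nat_eq_if_mod_eight]
      rw [if_neg (by omega), if_pos (by omega), one_pow]
  have ho : Odd Q.natAbs := by rw [Nat.odd_iff]; omega
  have h3 : J(4 * e | Q.natAbs) = J(f | Q.natAbs) := by
    rw [jacobiSym.mul_left, jacobiSym.at_four ho, hef, jacobiSym.mul_left, jacobiSym.pow_left, h2]; ring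
  rw [h3, jac_recip f Q hf (by omega), jac_sq c f Q]
  · have : (4 * e < 0) ↔ f < 0 := by
      have : (0:ℤ) < 2 ^ j := by positivity
      rw [hef]; constructor
      · intro h; by_contra h'; push Not at h'; nlinarith [mul_nonneg this.le h']
      · intro h; nlinarith [mul_neg_of_pos_of_neg this h]
    simp only [this]
    rw [if_neg (by omega)]; ring
  · exact ⟨2 ^ j * 4 * (c - 4 * e), by rw [hQ]; simp only [nm]; rw [hef]; ring⟩
  · exact hcop.of_isCoprime_of_dvd_left ⟨4 * 2 ^ j, by rw [hef]; ring⟩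

lemma sign_fact (a b c d : ℤ) (hP : 0 < nm a b) (hT : 0 < 2 * a + b) (hQ : nm c d < 0) :
    (d < 0 ↔ (-(b * c - a * d) < 0)) := by
  simp only [nm] at *
  have h0 : d ≠ 0 := by rintro rfl; nlinarith [sq_nonneg c]
  have hd2 : 0 < d ^ 2 := by positivity
  have e1 : (2 * c + d) ^ 2 < 5 * d ^ 2 := by nlinarith
  have e2 : 5 * b ^ 2 < (2 * a + b) ^ 2 := by nlinarith
  have e3 : (b * (2 * c + d)) ^ 2 < (d * (2 * a + b)) ^ 2 := by
    have := mul_le_mul_of_nonneg_left e1.le (sq_nonneg b)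
    have := mul_lt_mul_of_pos_left e2 hd2
    nlinarith
  have e4 := sq_lt_sq.mp e3
  constructor
  · intro h
    rw [abs_of_neg (mul_neg_of_neg_of_pos h hT)] at e4
    have := (abs_lt.mp e4).1
    nlinarith
  · intro h
    by_contra h'
    have h'' : 0 < d := by omega
    rw [abs_of_pos (mul_pos h'' hT)] at e4
    have := (abs_lt.mp e4).2
    nlinarith

lemma core_int (a b c d : ℤ) (hb : b % 2 = 1) (hc : c % 4 = 1) (hd : d % 4 = 0)
    (hP : 0 < nm a b) (hT : 0 < 2 * a + b) 
    (h1 : IsCoprime b (nm a b)) (h2 : IsCoprime d (nm c d))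
    (h3 : IsCoprime (b * c - a * d) (nm a b)) (h4 : IsCoprime (b * c - a * d) (nm c d)) :
    J(b | (nm a b).natAbs) * J(b * c - a * d | (nm a b).natAbs) *
    (J(d | (nm c d).natAbs) * J(-(b * c - a * d) | (nm c d).natAbs)) = 1 := by
  obtain ⟨k, hk⟩ : ∃ k, c = 4 * k + 1 := ⟨c / 4, by omega⟩
  obtain ⟨e, he⟩ : ∃ e, d = 4 * e := ⟨d / 4, by omega⟩
  have hm : (b * c - a * d) % 4 = b % 4 := by
    have : b * c - a * d = b + 4 * (b * k - a * e) := by rw [hk, he]; ring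
    omega
  have hQ4 : nm c d % 4 = 1 := by
    have : nm c d = 4 * (4 * k^2 + 2 * k + 4 * k * e + e - 4 * e^2) + 1 := by
      rw [hk, he]; simp only [nm]; ring
    omega
  have hPo : nm a b % 2 = 1 := by
    rcases Int.even_or_odd' a with ⟨x, hx | hx⟩ <;> rcases Int.even_or_odd' b with ⟨y, hy | hy⟩
    · omega
    · have : nm a b = 2 * (2 * x^2 + 2 * x * y + x - 2 * y^2 - 2 * y) - 1 := by
        rw [hx, hy]; simp only [nm]; ring
      omega
    · omega
    · have : nm a b = 2 * (2 * x^2 + 2 * x + 2 * x * y + x + y - 2 * y^2 - 2 * y) + 1 := by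
        rw [hx, hy]; simp only [nm]; ring
      omega
  have sgn := sign_fact a b c d hP hT
  have e5 : J(nm a b | b.natAbs) = 1 := jac_sq a b _ ⟨a - b, by simp only [nm]; ring⟩ h1
  have e6 : J(nm a b * nm c d | (b * c - a * d).natAbs) = 1 :=
    jac_sq (a * (c + d) - b * d) _ _ 
      ⟨(a * (c + d) - b * d) - (b * c - a * d), by simp only [nm]; ring⟩ (h3.mul_right h4)
  rw [jacobiSym.mul_left] at e6
  rw [jac_D c d hc hd h2]
  generalize b * c - a * d = m at *
  rw [jac_recip b _ hb hPo, jac_recip m _ (by omega) hPo, jac_recip (-m) _ (by omega) (by omega), e5,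
    Int.natAbs_neg]
  generalize J(nm a b | m.natAbs) = A at *
  generalize J(nm c d | m.natAbs) = B at *
  rw [hm]
  split_ifs <;> first | omega | (simp only [mul_one, one_mul, mul_neg, neg_mul, neg_neg]; first | linarith | (exfalso; simp_all; done) | (exfalso; simp_all; omega))

section ring
variable {R : Type*} [CommRing R]

/-- the element `a + b w` -/
def el (w : R) (a b : ℤ) : R := (a : R) + (b : R) * w

/-- `R = ℤ[w]` with `w² = w + 1` -/
structure Gold (w : R) : Prop where
  sq : w ^ 2 = w + 1
  span : ∀ x : R, ∃ a b : ℤ, x = el w a b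
  inj : ∀ a b : ℤ, el w a b = 0 → a = 0 ∧ b = 0

lemma Gold.ext {w : R} (h : Gold w) {a b c d : ℤ} (he : el w a b = el w c d) : a = c ∧ b = d := by
  have := h.inj (a - c) (b - d) (by
    simp only [el] at he ⊢; push_cast; linear_combination he)
  omega

lemma Gold.cast_inj {w : R} (h : Gold w) {a b : ℤ} (he : (a : R) = b) : a = b :=
  (h.ext (a := a) (b := 0) (c := b) (d := 0) (by simpa [el] using he)).1

lemma Gold.conj {w : R} (h : Gold w) (a b : ℤ) : el w a b * el w (a + b) (-b) = (nm a b : ℤ) := by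
  simp only [el, nm]; push_cast; linear_combination (-(b:R)^2) * h.sq

lemma Gold.mul {w : R} (h : Gold w) (a b c d : ℤ) :
    el w a b * el w c d = el w (a * c + b * d) (a * d + b * c + b * d) := by
  simp only [el]; push_cast; linear_combination ((b:R) * d) * h.sq

lemma nm_mul (a b c d : ℤ) : nm a b * nm c d = nm (a * c + b * d) (a * d + b * c + b * d) := by
  simp only [nm]; ring

lemma int_dvd {p : ℕ} (hp : p.Prime) {β : R} (hβ : ¬ IsUnit β) (hβp : β ∣ (p : R)) {k : ℤ}
    (hk : β ∣ (k : R)) : (p : ℤ) ∣ k := by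
  by_contra hn
  have hc : IsCoprime (p : ℤ) k := (Prime.coprime_iff_not_dvd (Nat.prime_iff_prime_int.mp hp)).mpr hn
  obtain ⟨u, v, huv⟩ := hc
  apply hβ
  rw [isUnit_iff_dvd_one]
  have h : (u : R) * p + v * k = 1 := by exact_mod_cast congrArg (Int.cast : ℤ → R) huv
  rw [← h]
  exact dvd_add (hβp.mul_left _) (hk.mul_left _)

lemma euler (p : ℕ) (hp : p.Prime) (n : ℤ) : (p : R) ∣ (n : R) ^ (p / 2) - (J(n | p) : ℤ) := by
  haveI := Fact.mk hp
  have h : (p : ℤ) ∣ n ^ (p / 2) - J(n | p) := by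
    rw [← ZMod.intCast_zmod_eq_zero_iff_dvd]
    push_cast
    rw [← jacobiSym.legendreSym.to_jacobiSym, legendreSym.eq_pow, sub_self]
  have := map_dvd (Int.castRingHom R) h
  simpa using this

lemma small {p : ℕ} (hp : p.Prime) (hp2 : p ≠ 2) {k : ℤ} (h : (p : ℤ) ∣ k) (h1 : -2 ≤ k) (h2 : k ≤ 2) :
    k = 0 := by
  have := hp.two_le
  by_contra h0
  have := Int.le_of_dvd (abs_pos.mpr h0) ((dvd_abs _ _).mpr h)
  have := abs_le.mpr ⟨h1, h2⟩
  omega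

lemma jac_bd (n : ℤ) (p : ℕ) : -1 ≤ J(n | p) ∧ J(n | p) ≤ 1 := by
  rcases jacobiSym.trichotomy n p with h | h | h <;> rw [h] <;> norm_num

lemma local_split {w : R} {p : ℕ} (hp : p.Prime) (hp2 : p ≠ 2) (a b c d : ℤ)
    (hβ : ¬ IsUnit (el w a b)) (hβp : el w a b ∣ (p : R)) (s : ℤ) (hs : s = 1 ∨ s = -1)
    (h : el w a b ∣ (el w c d) ^ (p / 2) - (s : R)) :
    s * J(b | p) = J(b * c - a * d | p) := by
  set β := el w a b with hβd
  have h1 : β ∣ (b : R) * el w c d - ((b * c - a * d : ℤ) : R) := 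
    ⟨d, by rw [hβd]; simp only [el]; push_cast; ring⟩
  have h2 := h1.trans (sub_dvd_pow_sub_pow _ _ (p / 2))
  have h3 := hβp.trans (euler (R := R) p hp b)
  have h4 := hβp.trans (euler (R := R) p hp (b * c - a * d))
  have h5 : β ∣ ((s * J(b | p) - J(b * c - a * d | p) : ℤ) : R) := by
    rw [mul_pow] at h2
    obtain ⟨x, hx⟩ := h
    obtain ⟨y, hy⟩ := h2
    obtain ⟨z, hz⟩ := h3
    obtain ⟨t, ht⟩ := h4
    refine ⟨-x * (b : R) ^ (p / 2) + y - z * s + t, ?_⟩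
    push_cast at *
    linear_combination (-(b : R) ^ (p / 2)) * hx + hy - s * hz + ht
  have h6 := int_dvd hp hβ hβp h5
  have b1 := jac_bd b p
  have b2 := jac_bd (b * c - a * d) p
  have := small hp hp2 h6 (by rcases hs with rfl | rfl <;> linarith) (by rcases hs with rfl | rfl <;> linarith)
  linarith

lemma frob {w : R} (hG : Gold w) {p : ℕ} (hp : p.Prime) (hp2 : p ≠ 2) (hpp : Prime (p : R)) (c d : ℤ) :
    (p : R) ∣ (el w c d) ^ p - el w (c + d) (-d) := by
  haveI := Fact.mk hp
  have hodd := hp.odd_of_ne_two hp2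
  set r : R := 2 * w - 1 with hr
  have hr2 : r ^ 2 = 5 := by rw [hr]; linear_combination 4 * hG.sq
  have hnu : ¬ IsUnit (p : R) := hpp.not_isUnit
  have hpd : ∀ k : ℤ, (p : R) ∣ (k : R) → (p : ℤ) ∣ k := fun k hk => int_dvd hp hnu dvd_rfl hk
  have hdvdel : ∀ x y : ℤ, (p : R) ∣ el w x y → (p : ℤ) ∣ y := by
    rintro x y ⟨z, hz⟩
    obtain ⟨u, v, rfl⟩ := hG.span z
    have := (hG.ext (a := x) (b := y) (c := p * u) (d := p * v) (by
      rw [hz]; simp only [el]; push_cast; ring)).2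
    exact ⟨v, this⟩
  have hnd2 : ¬ (p : ℤ) ∣ 2 := by
    intro h
    have := small hp hp2 h (by norm_num) (by norm_num)
    norm_num at this
  have h5 : J(5 | p) = -1 := by
    rw [← jacobiSym.legendreSym.to_jacobiSym, legendreSym.eq_neg_one_iff]
    rintro ⟨z, hz⟩
    obtain ⟨z, rfl⟩ := ZMod.intCast_surjective z
    have hz' : (p : ℤ) ∣ z * z - 5 := by
      rw [← ZMod.intCast_zmod_eq_zero_iff_dvd]; push_cast; rw [← hz]; simp
    have := map_dvd (Int.castRingHom R) hz'
    have h2 : (p : R) ∣ el w (z - 1) 2 * el w (z + 1) (-2) := by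
      refine (show (p : R) ∣ (z : R) * z - 5 by simpa using this).trans (dvd_of_eq ?_)
      simp only [el]; push_cast; linear_combination 4 * hG.sq
    rcases hpp.dvd_or_dvd h2 with h | h
    · exact hnd2 (hdvdel _ _ h)
    · exact hnd2 ((dvd_neg).mp (hdvdel _ _ h))
  have hrp : (p : R) ∣ r ^ p + r := by
    have e := euler (R := R) p hp 5
    rw [h5] at e
    have : r ^ p = 5 ^ (p / 2) * r := by
      conv_lhs => rw [← Nat.two_mul_div_two_add_one_of_odd hodd, pow_succ, pow_mul, hr2]
    rw [this]
    refine (e.mul_right r).trans (dvd_of_eq ?_)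
    push_cast; ring
  have hferm : ∀ n : ℤ, (p : R) ∣ (n : R) ^ p - n := by
    intro n
    have : (p : ℤ) ∣ n ^ p - n := by
      rw [← ZMod.intCast_zmod_eq_zero_iff_dvd]; push_cast; rw [ZMod.pow_card, sub_self]
    simpa using map_dvd (Int.castRingHom R) this
  obtain ⟨z, hz⟩ := exists_add_pow_prime_eq hp ((2 * c + d : ℤ) : R) ((d : R) * r)
  have h2x : ((2 * c + d : ℤ) : R) + (d : R) * r = ((2 : ℤ) : R) * el w c d := by
    rw [hr]; simp only [el]; push_cast; ring
  rw [h2x, mul_pow, mul_pow] at hz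
  have key : (p : R) ∣ 2 * ((el w c d) ^ p - el w (c + d) (-d)) := by
    obtain ⟨x1, f1⟩ := hferm 2
    obtain ⟨x2, f2⟩ := hferm (2 * c + d)
    obtain ⟨x3, f3⟩ := hferm d
    obtain ⟨x4, f4⟩ := hrp
    refine ⟨-x1 * el w c d ^ p + x2 + x3 * r ^ p + d * x4 + ?_, ?_⟩
    · exact (((2 * c + d : ℤ) : R) * ((d : R) * r) * z)
    · have : (2 : R) * el w (c + d) (-d) = ((2 * c + d : ℤ) : R) - d * r := by
        rw [hr]; simp only [el]; push_cast; ring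
      rw [mul_sub, this]
      push_cast at *
      linear_combination hz - el w c d ^ p * f1 + f2 + r ^ p * f3 + d * f4
  refine (hpp.dvd_or_dvd key).resolve_left fun h => hnd2 (hpd 2 (by simpa using h))

lemma local_inert {w : R} (hG : Gold w) {p : ℕ} (hp : p.Prime) (hp2 : p ≠ 2) (hpp : Prime (p : R))
    (c d : ℤ) (s : ℤ) (hs : s = 1 ∨ s = -1)
    (h : (p : R) ∣ (el w c d) ^ ((p ^ 2 - 1) / 2) - (s : R)) :
    s = J(nm c d | p) := by
  obtain ⟨k, hk⟩ := hp.odd_of_ne_two hp2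
  have hexp : (p ^ 2 - 1) / 2 = (p + 1) * (p / 2) := by
    have h1 : p / 2 = k := by omega
    rw [h1]
    have : p ^ 2 - 1 = 2 * ((p + 1) * k) := by
      have : p ^ 2 = 2 * ((p + 1) * k) + 1 := by rw [hk]; ring
      omega
    omega
  rw [hexp, pow_mul] at h
  have h1 := frob hG hp hp2 hpp c d
  have h2 : (p : R) ∣ (el w c d) ^ (p + 1) - ((nm c d : ℤ) : R) := by
    rw [← hG.conj, pow_succ', ← mul_sub]
    exact h1.mul_left _
  have h3 := h2.trans (sub_dvd_pow_sub_pow _ _ (p / 2))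
  have h4 := euler (R := R) p hp (nm c d)
  have h5 : (p : R) ∣ ((s - J(nm c d | p) : ℤ) : R) := by
    have := dvd_add (dvd_sub h3 h) h4
    refine this.trans (dvd_of_eq ?_)
    push_cast; ring
  have h6 := int_dvd hp hpp.not_isUnit dvd_rfl h5
  have b1 := jac_bd (nm c d) p
  have := small hp hp2 h6 (by rcases hs with rfl | rfl <;> linarith) (by rcases hs with rfl | rfl <;> linarith)
  linarith

lemma dich {w : R} (hG : Gold w) (a b : ℤ) (hβ : Prime (el w a b)) (hodd : nm a b % 2 = 1) :
    ∃ p : ℕ, p.Prime ∧ p ≠ 2 ∧ el w a b ∣ (p : R) ∧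
      ((nm a b).natAbs = p ∨ ((nm a b).natAbs = p ^ 2 ∧ (p : R) ∣ el w a b)) := by
  have h0 : (nm a b).natAbs ≠ 0 := by omega
  have h1 : el w a b ∣ (((nm a b).natAbs : ℕ) : R) := by
    have h : el w a b ∣ ((nm a b : ℤ) : R) := ⟨_, (hG.conj a b).symm⟩
    rcases Int.natAbs_eq (nm a b) with h' | h'
    · rw [h'] at h; simpa using h
    · rw [h'] at h; simpa using h
  have h2 : ∃ p ∈ (nm a b).natAbs.primeFactorsList, el w a b ∣ (p : R) := by
    rw [← Nat.prod_primeFactorsList h0, Nat.cast_list_prod] at h1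
    obtain ⟨x, hx, hd⟩ := (Prime.dvd_prod_iff hβ).mp h1
    obtain ⟨p, hp, rfl⟩ := List.mem_map.mp hx
    exact ⟨p, hp, hd⟩
  obtain ⟨p, hp, hd⟩ := h2
  have hpp := Nat.prime_of_mem_primeFactorsList hp
  have hpd := Nat.dvd_of_mem_primeFactorsList hp
  have hp2 : p ≠ 2 := by rintro rfl; omega
  refine ⟨p, hpp, hp2, hd, ?_⟩
  obtain ⟨γ, hγ⟩ := hd
  obtain ⟨c, d, rfl⟩ := hG.span γ
  rw [hG.mul] at hγ
  have hx := hG.ext (a := p) (b := 0) (by rw [← hγ]; simp [el])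
  have hN : nm a b * nm c d = (p : ℤ) ^ 2 := by
    rw [nm_mul, ← hx.1, ← hx.2]; simp [nm]
  have hN' : (nm a b).natAbs * (nm c d).natAbs = p ^ 2 := by
    rw [← Int.natAbs_mul, hN]; simp [Int.natAbs_pow]
  obtain ⟨i, hi, hi'⟩ := (Nat.dvd_prime_pow hpp).mp ⟨_, hN'.symm⟩
  interval_cases i
  · exfalso
    apply hβ.not_isUnit
    rw [isUnit_iff_dvd_one]
    rw [hi'] at h1
    simpa using h1
  · left; simpa using hi'
  · right
    refine ⟨hi', ?_⟩
    rw [hi'] at hN'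
    have h3 : (nm c d).natAbs = 1 := by
      have : 0 < p ^ 2 := pow_pos hpp.pos 2
      exact Nat.eq_of_mul_eq_mul_left this (by rw [hN', mul_one])
    have h4 : IsUnit (el w c d) := by
      have h := hG.conj c d
      rw [isUnit_iff_dvd_one]
      rcases (by omega : nm c d = 1 ∨ nm c d = -1) with h' | h'
      · exact ⟨_, by rw [h, h']; simp⟩
      · exact ⟨-el w (c + d) (-d), by rw [mul_neg, h, h']; simp⟩
    rw [← hG.mul] at hγ
    rw [hγ]
    exact (h4.dvd_mul_right).mp (dvd_of_eq rfl)

lemma nm_odd (a b : ℤ) (hb : b % 2 = 1) : nm a b % 2 = 1 := by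
  rcases Int.even_or_odd' a with ⟨x, hx | hx⟩ <;> rcases Int.even_or_odd' b with ⟨y, hy | hy⟩
  · omega
  · have : nm a b = 2 * (2 * x^2 + 2 * x * y + x - 2 * y^2 - 2 * y) - 1 := by
      rw [hx, hy]; simp only [nm]; ring
    omega
  · omega
  · have : nm a b = 2 * (2 * x^2 + 2 * x + 2 * x * y + x + y - 2 * y^2 - 2 * y) + 1 := by
      rw [hx, hy]; simp only [nm]; ring
    omega

lemma nm_mod4 (c d : ℤ) (hc : c % 4 = 1) (hd : d % 4 = 0) : nm c d % 4 = 1 := by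
  obtain ⟨k, hk⟩ : ∃ k, c = 4 * k + 1 := ⟨c / 4, by omega⟩
  obtain ⟨e, he⟩ : ∃ e, d = 4 * e := ⟨d / 4, by omega⟩
  have : nm c d = 4 * (4 * k^2 + 2 * k + 4 * k * e + e - 4 * e^2) + 1 := by
    rw [hk, he]; simp only [nm]; ring
  omega

lemma nm_scale (k a b : ℤ) : nm (k * a) (k * b) = k ^ 2 * nm a b := by
  simp only [nm]; ring

lemma cop_of_not_dvd {p : ℕ} (hp : p.Prime) {k Q : ℤ} (hQ : Q.natAbs = p) (h : ¬ (p : ℤ) ∣ k) :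
    IsCoprime k Q := by
  have hc : IsCoprime (p : ℤ) k := (Prime.coprime_iff_not_dvd (Nat.prime_iff_prime_int.mp hp)).mpr h
  rcases Int.natAbs_eq Q with h' | h'
  · rw [h', hQ]; exact hc.symm
  · rw [h', hQ]; exact hc.symm.neg_right

/-- coprimality of the second coordinate with a prime norm -/
lemma cop_snd {p : ℕ} (hp : p.Prime) (a b : ℤ) (hN : (nm a b).natAbs = p) : ¬ (p : ℤ) ∣ b := by
  rintro ⟨y, rfl⟩
  have hpz := Nat.prime_iff_prime_int.mp hp
  have h1 : (p : ℤ) ∣ nm a (p * y) := by exact Int.natCast_dvd.mpr (dvd_of_eq hN.symm)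
  have h2 : (p : ℤ) ∣ a ^ 2 := by
    have : a ^ 2 = nm a (p * y) + p * (p * y ^ 2 - a * y) := by simp only [nm]; ring
    rw [this]; exact dvd_add h1 ⟨_, rfl⟩
  obtain ⟨x, rfl⟩ := hpz.dvd_of_dvd_pow h2
  rw [nm_scale, Int.natAbs_mul, Int.natAbs_pow, Int.natAbs_natCast] at hN
  have h3 : p ^ 2 ∣ p := ⟨_, hN.symm⟩
  have := Nat.le_of_dvd hp.pos h3
  have := hp.two_le
  nlinarith

lemma cop_m {w : R} {p : ℕ} (hp : p.Prime) (a b c d : ℤ) (hN : (nm a b).natAbs = p)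
    (hβ : Prime (el w a b)) (hβp : el w a b ∣ (p : R))
    (hcop : ¬ el w a b ∣ el w c d) : ¬ (p : ℤ) ∣ (b * c - a * d) := by
  intro h
  have h1 : el w a b ∣ (b : R) * el w c d := by
    have h2 : el w a b ∣ ((b * c - a * d : ℤ) : R) :=
      hβp.trans (by simpa using map_dvd (Int.castRingHom R) h)
    have : (b : R) * el w c d = ((b * c - a * d : ℤ) : R) + el w a b * d := by
      simp only [el]; push_cast; ring
    rw [this]; exact dvd_add h2 ⟨_, rfl⟩
  rcases hβ.dvd_or_dvd h1 with h | h
  · exact cop_snd hp a b hN (int_dvd hp hβ.not_isUnit hβp h)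
  · exact hcop h

lemma pm_mul_self {s : ℤ} (hs : s = 1 ∨ s = -1) : s * s = 1 := by
  rcases hs with rfl | rfl <;> norm_num

lemma jac_pm {k Q : ℤ} (h : IsCoprime k Q) : J(k | Q.natAbs) = 1 ∨ J(k | Q.natAbs) = -1 := by
  apply jacobiSym.eq_one_or_neg_one
  have := Int.isCoprime_iff_gcd_eq_one.mp h
  simpa only [Int.gcd, Int.natAbs_natCast] using this

lemma jac_square_eq_one {q : ℤ} {p : ℕ} {s : ℤ} (hs : s = 1 ∨ s = -1) (h : s = J(q ^ 2 | p)) : s = 1 := by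
  rw [jacobiSym.pow_left] at h
  have := sq_nonneg (J(q | p))
  omega

lemma isCoprime_of_isUnit_right {x y : ℤ} (h : IsUnit y) : IsCoprime x y := by
  obtain ⟨u, hu⟩ := isUnit_iff_exists_inv.mp h
  exact ⟨0, u, by rw [zero_mul, zero_add, mul_comm]; exact hu⟩

theorem core [IsDomain R] {w : R} (hG : Gold w) (a b c d : ℤ) (hb : b % 2 = 1) (hc : c % 4 = 1) (hd : d % 4 = 0)
    (hP : 0 < nm a b) (hT : 0 < 2 * a + b) (hβ : Prime (el w a b)) (hα : Prime (el w c d))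
    (h1 : ¬ el w a b ∣ el w c d) (h2 : ¬ el w c d ∣ el w a b) (s t : ℤ)
    (hs : s = 1 ∨ s = -1) (ht : t = 1 ∨ t = -1)
    (hA : el w a b ∣ el w c d ^ (((nm a b).natAbs - 1) / 2) - (s : R))
    (hB : el w c d ∣ el w a b ^ (((nm c d).natAbs - 1) / 2) - (t : R)) : s * t = 1 := by
  have hPo := nm_odd a b hb
  have hQ4 := nm_mod4 c d hc hd
  obtain ⟨p, hp, hp2, hβp, hpc⟩ := dich hG a b hβ hPo
  obtain ⟨q, hq, hq2, hαq, hqc⟩ := dich hG c d hα (by omega)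
  have hpo := Nat.odd_iff.mp (hp.odd_of_ne_two hp2)
  have hqo := Nat.odd_iff.mp (hq.odd_of_ne_two hq2)
  have hsplitA : (nm a b).natAbs = p → s * J(b | p) = J(b * c - a * d | p) := by
    intro h
    refine local_split hp hp2 a b c d hβ.not_isUnit hβp s hs ?_
    have : p / 2 = ((nm a b).natAbs - 1) / 2 := by omega
    rw [this]; exact hA
  have hsplitB : (nm c d).natAbs = q → t * J(d | q) = J(-(b * c - a * d) | q) := by
    intro h
    have := local_split hq hq2 c d a b hα.not_isUnit hαq t ht (by
      have : q / 2 = ((nm c d).natAbs - 1) / 2 := by omega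
      rw [this]; exact hB)
    rw [this]; congr 1; ring
  have hinA : (nm a b).natAbs = p ^ 2 → (p : R) ∣ el w a b → s = J(nm c d | p) := by
    intro h h'
    have hpp : Prime (p : R) := ((associated_of_dvd_dvd h' hβp).prime_iff).mpr hβ
    exact local_inert hG hp hp2 hpp c d s hs (h'.trans (h ▸ hA))
  have hinB : (nm c d).natAbs = q ^ 2 → (q : R) ∣ el w c d → t = J(nm a b | q) := by
    intro h h'
    have hpp : Prime (q : R) := ((associated_of_dvd_dvd h' hαq).prime_iff).mpr hα
    exact local_inert hG hq hq2 hpp a b t ht (h'.trans (h ▸ hB))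
  have hscale : ∀ (k : ℤ) (x y : ℤ), (k : R) ∣ el w x y → ∃ x1 y1, x = k * x1 ∧ y = k * y1 := by
    rintro k x y ⟨z, hz⟩
    obtain ⟨u, v, rfl⟩ := hG.span z
    have := hG.ext (a := x) (b := y) (c := k * u) (d := k * v) (by
      rw [hz]; simp only [el]; push_cast; ring)
    exact ⟨u, v, this⟩
  have cb : (nm a b).natAbs = p → IsCoprime b (nm a b) := fun h =>
    cop_of_not_dvd hp h (cop_snd hp a b h)
  have cd : (nm c d).natAbs = q → IsCoprime d (nm c d) := fun h =>
    cop_of_not_dvd hq h (cop_snd hq c d h)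
  have cmP : (nm a b).natAbs = p → IsCoprime (b * c - a * d) (nm a b) := fun h =>
    cop_of_not_dvd hp h (cop_m hp a b c d h hβ hβp h1)
  have cmQ : (nm c d).natAbs = q → IsCoprime (b * c - a * d) (nm c d) := fun h => by
    have := cop_of_not_dvd hq h (cop_m hq c d a b h hα hαq h2)
    have e : b * c - a * d = -(d * a - c * b) := by ring
    rw [e]; exact this.neg_left
  rcases hpc with hpN | ⟨hpN, hpd⟩ <;> rcases hqc with hqN | ⟨hqN, hqd⟩
  · -- split, split
    have hC := core_int a b c d hb hc hd hP hT (cb hpN) (cd hqN) (cmP hpN) (cmQ hqN)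
    have e1 := jac_pm (cb hpN)
    have e2 := jac_pm (cd hqN)
    have hA' := hsplitA hpN
    have hB' := hsplitB hqN
    rw [hpN, hqN, ← hA', ← hB'] at hC
    rw [hpN] at e1
    rw [hqN] at e2
    have e1' := pm_mul_self e1
    have e2' := pm_mul_self e2
    linear_combination hC - s * t * (J(d | q) * J(d | q)) * e1' - s * t * e2'
  · -- split, inert
    have hA' := hsplitA hpN
    have hB' := hinB hqN hqd
    obtain ⟨k, hkq, hk4⟩ : ∃ k : ℤ, k.natAbs = q ∧ k % 4 = 1 := by
      rcases (by omega : q % 4 = 1 ∨ q % 4 = 3) with h | h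
      · exact ⟨q, by simp, by omega⟩
      · exact ⟨-q, by simp, by omega⟩
    have hkd : (k : R) ∣ el w c d := by
      rcases Int.natAbs_eq k with h | h <;> rw [h, hkq] <;> simpa using hqd
    obtain ⟨c1, d1, rfl, rfl⟩ := hscale k c d hkd
    have hc1 : c1 % 4 = 1 := by
      rw [Int.mul_emod, hk4] at hc; omega
    have hd1 : d1 % 4 = 0 := by
      rw [Int.mul_emod, hk4] at hd; omega
    have hN1 : (nm c1 d1).natAbs = 1 := by
      rw [nm_scale, Int.natAbs_mul, Int.natAbs_pow, hkq] at hqN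
      exact Nat.eq_of_mul_eq_mul_left (pow_pos hq.pos 2) (by rw [hqN, mul_one])
    have hu : IsUnit (nm c1 d1) := Int.isUnit_iff_natAbs_eq.mpr hN1
    have em : b * (k * c1) - a * (k * d1) = k * (b * c1 - a * d1) := by ring
    have cm := cmP hpN
    rw [em] at cm
    have hC := core_int a b c1 d1 hb hc1 hd1 hP hT (cb hpN) (isCoprime_of_isUnit_right hu)
      cm.of_mul_left_right (isCoprime_of_isUnit_right hu)
    rw [hN1, jacobiSym.one_right, jacobiSym.one_right, hpN] at hC
    rw [em, jacobiSym.mul_left] at hA'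
    have hr := jac_recip (nm a b) k hPo (by omega)
    rw [if_neg (by omega), if_neg (by omega), hkq, hpN, ← hB'] at hr
    have e1 := jac_pm (cb hpN)
    rw [hpN] at e1
    have e1' := pm_mul_self e1
    have hst : s = t := by
      linear_combination (-s) * e1' + J(b | p) * hA' + J(k | p) * hC - hr
    rw [hst]; exact pm_mul_self ht
  · -- inert, split
    have hA' := hinA hpN hpd
    have hB' := hsplitB hqN
    obtain ⟨a1, b1, rfl, rfl⟩ := hscale p a b (by simpa using hpd)
    have hp0 : (0 : ℤ) < p := by exact_mod_cast hp.pos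
    have hb1 : b1 % 2 = 1 := by
      rw [Int.mul_emod] at hb
      rcases Int.emod_two_eq_zero_or_one b1 with h | h
      · rw [h] at hb; simp at hb
      · exact h
    have hN1 : (nm a1 b1).natAbs = 1 := by
      rw [nm_scale, Int.natAbs_mul, Int.natAbs_pow, Int.natAbs_natCast] at hpN
      exact Nat.eq_of_mul_eq_mul_left (pow_pos hp.pos 2) (by rw [hpN, mul_one])
    have hP1 : 0 < nm a1 b1 := by
      rw [nm_scale] at hP
      exact pos_of_mul_pos_right hP (by positivity)
    have hT1 : 0 < 2 * a1 + b1 := by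
      have : (2 * (p * a1) + p * b1 : ℤ) = p * (2 * a1 + b1) := by ring
      rw [this] at hT
      exact pos_of_mul_pos_right hT hp0.le
    have hu : IsUnit (nm a1 b1) := Int.isUnit_iff_natAbs_eq.mpr hN1
    have em : p * b1 * c - p * a1 * d = p * (b1 * c - a1 * d) := by ring
    have cm := cmQ hqN
    rw [em] at cm
    have hC := core_int a1 b1 c d hb1 hc hd hP1 hT1 (isCoprime_of_isUnit_right hu) (cd hqN)
      (isCoprime_of_isUnit_right hu) cm.of_mul_left_right
    rw [hN1, jacobiSym.one_right, jacobiSym.one_right, hqN] at hC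
    rw [em, ← mul_neg, jacobiSym.mul_left] at hB'
    have hr := jac_recip p (nm c d) (by omega) (by omega)
    rw [if_neg (by omega), if_neg (by omega), hqN, Int.natAbs_natCast, ← hA'] at hr
    have e1 := jac_pm (cd hqN)
    rw [hqN] at e1
    have e1' := pm_mul_self e1
    have hst : t = s := by
      linear_combination (-t) * e1' + J(d | q) * hB' + J(p | q) * hC + hr
    rw [hst]; exact pm_mul_self hs
  · -- inert, inert
    have hA' := hinA hpN hpd
    have hB' := hinB hqN hqd
    have e1 : nm a b = (p : ℤ) ^ 2 := by 
      rw [← Int.natAbs_of_nonneg hP.le, hpN]; push_cast; ring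
    have e2 : nm c d = (q : ℤ) ^ 2 := by
      have hq4 : q ^ 2 % 4 = 1 := by
        rw [Nat.pow_mod]; rcases (by omega : q % 4 = 1 ∨ q % 4 = 3) with h | h <;> rw [h]
      have : nm c d = ((nm c d).natAbs : ℤ) := by omega
      rw [this, hqN]; push_cast; ring
    rw [e2] at hA'
    rw [e1] at hB'
    rw [jac_square_eq_one hs hA', jac_square_eq_one ht hB']; norm_num

end ring
section field
variable {F₀ : Type*} [Field F₀] [NumberField F₀]

lemma rat_sq_ne_five (x : ℚ) : x ^ 2 ≠ 5 := by
  intro h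
  have h1 := Nat.prime_five.irrational_sqrt
  apply h1
  refine ⟨|x|, ?_⟩
  have : (5 : ℝ) = (x : ℝ) ^ 2 := by exact_mod_cast h.symm
  push_cast
  rw [this, Real.sqrt_sq_eq_abs]

lemma exists_hom (sq5 : F₀) (h5 : sq5 ^ 2 = 5) (hgen : IntermediateField.adjoin ℚ {sq5} = ⊤)
    (L : Type*) [Field L] [Algebra ℚ L] (y : L) (hy : y ^ 2 = 5) :
    ∃ f : F₀ →ₐ[ℚ] L, f sq5 = y := by
  have hirr : Irreducible (Polynomial.X ^ 2 - Polynomial.C (5 : ℚ)) :=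
    X_pow_sub_C_irreducible_of_prime Nat.prime_two rat_sq_ne_five
  have hmin : Polynomial.X ^ 2 - Polynomial.C (5 : ℚ) = minpoly ℚ sq5 :=
    minpoly.eq_of_irreducible_of_monic hirr (by simp [h5])
      (Polynomial.monic_X_pow_sub_C _ (by norm_num))
  have hint : IsIntegral ℚ sq5 := Algebra.IsIntegral.isIntegral sq5
  have hroot : (Polynomial.aeval y) (minpoly ℚ sq5) = 0 := by rw [← hmin]; simp [hy]
  let pb := IntermediateField.adjoin.powerBasis hint
  let e := ((IntermediateField.equivOfEq hgen).trans IntermediateField.topEquiv)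
  let pb2 := pb.map e
  have hg : pb2.gen = sq5 := rfl
  refine ⟨pb2.lift y (by rw [hg]; exact hroot), ?_⟩
  exact pb2.lift_gen y (by rw [hg]; exact hroot)

lemma exists_rep (sq5 : F₀) (h5 : sq5 ^ 2 = 5) (hgen : IntermediateField.adjoin ℚ {sq5} = ⊤)
    (z : F₀) : ∃ r s : ℚ, z = r + s * sq5 := by
  have hint : IsIntegral ℚ sq5 := Algebra.IsIntegral.isIntegral sq5
  have h : z ∈ Algebra.adjoin ℚ {sq5} := by
    rw [← IntermediateField.adjoin_simple_toSubalgebra_of_isAlgebraic hint.isAlgebraic, hgen]; trivial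
  induction h using Algebra.adjoin_induction with
  | mem x hx => exact ⟨0, 1, by rw [Set.mem_singleton_iff.mp hx]; simp⟩
  | algebraMap r => exact ⟨r, 0, by simp⟩
  | add x y _ _ hx hy =>
    obtain ⟨r, s, rfl⟩ := hx
    obtain ⟨r', s', rfl⟩ := hy
    exact ⟨r + r', s + s', by push_cast; ring⟩
  | mul x y _ _ hx hy =>
    obtain ⟨r, s, rfl⟩ := hx
    obtain ⟨r', s', rfl⟩ := hy
    exact ⟨r * r' + 5 * s * s', r * s' + r' * s, by push_cast; linear_combination (s * s' : F₀) * h5⟩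

lemma rat_int (x : ℚ) (h : IsIntegral ℤ (x : F₀)) : ∃ n : ℤ, x = n := by
  have h1 : IsIntegral ℤ x := by
    rw [← isIntegral_algebraMap_iff (algebraMap ℚ F₀).injective]
    simpa using h
  obtain ⟨n, hn⟩ := IsIntegrallyClosed.isIntegral_iff.mp h1
  exact ⟨n, by rw [← hn]; simp⟩

lemma int_rep (sq5 : F₀) (h5 : sq5 ^ 2 = 5) (hgen : IntermediateField.adjoin ℚ {sq5} = ⊤)
    (z : F₀) (hz : IsIntegral ℤ z) : ∃ a b : ℤ, z = a + b * ((1 + sq5) / 2) := by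
  obtain ⟨r, s, rfl⟩ := exists_rep sq5 h5 hgen z
  obtain ⟨σ, hσ⟩ := exists_hom sq5 h5 hgen F₀ (-sq5) (by rw [neg_sq, h5])
  have hz' : IsIntegral ℤ (r - s * sq5 : F₀) := by
    have := hz.map (σ.restrictScalars ℤ)
    simpa [hσ, sub_eq_add_neg] using this
  obtain ⟨n, hn⟩ := rat_int (F₀ := F₀) (2 * r) (by
    have e : ((2 * r : ℚ) : F₀) = (r + s * sq5) + (r - s * sq5) := by push_cast; ring
    rw [e]; exact hz.add hz')
  obtain ⟨k, hk⟩ := rat_int (F₀ := F₀) (r ^ 2 - 5 * s ^ 2) (by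
    have e : ((r ^ 2 - 5 * s ^ 2 : ℚ) : F₀) = (r + s * sq5) * (r - s * sq5) := by
      push_cast; linear_combination (s ^ 2 : F₀) * h5
    rw [e]; exact hz.mul hz')
  have h1 : (10 * s) ^ 2 = ((5 * (n ^ 2 - 4 * k) : ℤ) : ℚ) := by
    push_cast; rw [← hn, ← hk]; ring
  obtain ⟨y, hy⟩ := rat_int (F₀ := F₀) (10 * s) (by
    have h2 : IsIntegral ℤ (((10 * s : ℚ) : F₀) ^ 2) := by
      have : ((10 * s : ℚ) : F₀) ^ 2 = ((5 * (n ^ 2 - 4 * k) : ℤ) : F₀) := by exact_mod_cast congrArg (Rat.cast : ℚ → F₀) h1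
      rw [this]; exact isIntegral_intCast _
    exact h2.of_pow (by norm_num))
  have h3 : y ^ 2 = 5 * (n ^ 2 - 4 * k) := by rw [hy] at h1; exact_mod_cast h1
  obtain ⟨x, rfl⟩ : (5 : ℤ) ∣ y := Int.Prime.dvd_pow' (n := y) (k := 2) Nat.prime_five ⟨_, h3⟩
  have h4 : 5 * x ^ 2 = n ^ 2 - 4 * k := by linarith [h3, (by ring : (5 * x) ^ 2 = 5 * (5 * x ^ 2))]
  have h5' : (n - x) % 2 = 0 := by
    have h6 : (n - x) ^ 2 % 2 = 0 := by
      have : (n - x) ^ 2 = 2 * (3 * x ^ 2 + 2 * k - n * x) := by linarith [(by ring : (n - x) ^ 2 = n ^ 2 - 2 * (n * x) + x ^ 2)]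
      omega
    exact Int.emod_eq_zero_of_dvd (Int.Prime.dvd_pow' (n := n - x) (k := 2) Nat.prime_two (Int.dvd_of_emod_eq_zero h6))
  obtain ⟨j, hj⟩ := Int.dvd_of_emod_eq_zero h5'
  refine ⟨j, x, ?_⟩
  have hs : s = x / 2 := by push_cast at hy; linarith
  have hr : r = j + x / 2 := by
    have : (n : ℚ) - x = 2 * j := by exact_mod_cast hj
    linarith
  rw [hr, hs]; push_cast; ring

lemma exists_gold (sq5 : F₀) (h5 : sq5 ^ 2 = 5) (hgen : IntermediateField.adjoin ℚ {sq5} = ⊤) :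
    ∃ w : 𝓞 F₀, Gold w ∧ (algebraMap (𝓞 F₀) F₀ w) = (1 + sq5) / 2 := by
  have hw : IsIntegral ℤ ((1 + sq5) / 2) := by
    refine ⟨Polynomial.X ^ 2 - Polynomial.X - 1, by monicity!, ?_⟩
    simp
    linear_combination h5 / 4
  let w : 𝓞 F₀ := ⟨(1 + sq5) / 2, hw⟩
  have hwv : (algebraMap (𝓞 F₀) F₀ w) = (1 + sq5) / 2 := rfl
  refine ⟨w, ⟨?_, ?_, ?_⟩, hwv⟩
  · apply RingOfIntegers.coe_injective
    simp only [map_pow, map_add, map_one, hwv]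
    linear_combination h5 / 4
  · intro x
    obtain ⟨a, b, hab⟩ := int_rep sq5 h5 hgen x x.2
    refine ⟨a, b, ?_⟩
    apply RingOfIntegers.coe_injective
    simp only [el, map_add, map_mul, map_intCast, hwv]
    exact hab
  · intro a b h
    have h1 := congrArg (algebraMap (𝓞 F₀) F₀) h
    simp only [el, map_add, map_mul, map_intCast, hwv, map_zero] at h1
    have hb : b = 0 := by
      by_contra hb
      have hb' : (b : ℚ) ≠ 0 := by exact_mod_cast hb
      have hb'' : (b : F₀) ≠ 0 := by exact_mod_cast hb
      apply rat_sq_ne_five (-(2 * a + b) / b)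
      have : sq5 = ((-(2 * a + b) / b : ℚ) : F₀) := by
        push_cast; field_simp; linear_combination 2 * h1
      rw [this] at h5
      exact_mod_cast h5
    subst hb
    simp at h1
    exact ⟨h1, rfl⟩

lemma norm_el {w : 𝓞 F₀} (hG : Gold w) (a b : ℤ) : Algebra.norm ℤ (el w a b) = nm a b := by
  have li : LinearIndependent ℤ ![(1 : 𝓞 F₀), w] := by
    rw [LinearIndependent.pair_iff]
    intro s t h
    exact hG.inj s t (by simpa [el] using h)
  have sp : ⊤ ≤ Submodule.span ℤ (Set.range ![(1 : 𝓞 F₀), w]) := by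
    intro x _
    obtain ⟨a, b, rfl⟩ := hG.span x
    simp only [Matrix.range_cons, Matrix.range_empty, Set.union_empty, Set.singleton_union]
    rw [Submodule.mem_span_pair]
    exact ⟨a, b, by simp [el]⟩
  let B := Module.Basis.mk li sp
  have hB0 : B 0 = 1 := by simp [B]
  have hB1 : B 1 = w := by simp [B]
  have hrep : ∀ x y : ℤ, el w x y = x • B 0 + y • B 1 := by
    intro x y; rw [hB0, hB1]; simp [el]
  have hw : w = el w 0 1 := by simp [el]
  have e0 : el w a b * B 0 = el w a b := by rw [hB0, mul_one]
  have e1 : el w a b * B 1 = el w b (a + b) := by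
    rw [hB1]
    simp only [el]; push_cast; linear_combination (b : 𝓞 F₀) * hG.sq
  rw [Algebra.norm_eq_matrix_det B, Matrix.det_fin_two]
  simp only [Algebra.leftMulMatrix_eq_repr_mul, e0, e1]
  simp only [hrep, map_add, map_smul, Module.Basis.repr_self, Finsupp.add_apply, Finsupp.smul_apply]
  simp [nm]
  ring

lemma fermat (β v : 𝓞 F₀) (hβ : Prime β) (hv : ¬ β ∣ v) :
    β ∣ v ^ ((Algebra.norm ℤ β).natAbs - 1) - 1 := by
  have hne : Ideal.span {β} ≠ ⊥ := by simpa using hβ.ne_zero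
  haveI hpr : (Ideal.span {β}).IsPrime := (Ideal.span_singleton_prime hβ.ne_zero).mpr hβ
  haveI : (Ideal.span {β}).IsMaximal := hpr.isMaximal hne
  letI := Ideal.Quotient.field (Ideal.span {β})
  haveI : Finite (𝓞 F₀ ⧸ Ideal.span {β}) := Ideal.finiteQuotientOfFreeOfNeBot _ hne
  letI := Fintype.ofFinite (𝓞 F₀ ⧸ Ideal.span {β})
  have hcard : Fintype.card (𝓞 F₀ ⧸ Ideal.span {β}) = (Algebra.norm ℤ β).natAbs := by
    rw [← Ideal.absNorm_span_singleton, Ideal.absNorm_apply, Submodule.cardQuot_apply,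
      Nat.card_eq_fintype_card]
  have hne' : Ideal.Quotient.mk (Ideal.span {β}) v ≠ 0 := by
    rwa [Ne, Ideal.Quotient.eq_zero_iff_mem, Ideal.mem_span_singleton]
  have := FiniteField.pow_card_sub_one_eq_one _ hne'
  rw [hcard, ← map_pow, ← map_one (Ideal.Quotient.mk (Ideal.span {β})), Ideal.Quotient.eq,
    Ideal.mem_span_singleton] at this
  exact this

lemma transfer (β x u v : 𝓞 F₀) (hβ : Prime β) (hodd : Odd (Algebra.norm ℤ β)) (hu : IsUnit u)
    (hun : Algebra.norm ℤ u = 1) (hv : IsUnit v) (s : ℤ)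
    (h : β ∣ x ^ (((Algebra.norm ℤ β).natAbs - 1) / 2) - (s : 𝓞 F₀)) :
    u * β ∣ (v ^ 2 * x) ^ (((Algebra.norm ℤ (u * β)).natAbs - 1) / 2) - (s : 𝓞 F₀) := by
  rw [map_mul, hun, one_mul, hu.mul_left_dvd]
  have hf := fermat β v hβ (fun hd => hβ.not_isUnit (isUnit_of_dvd_unit hd hv))
  have h2 : (Algebra.norm ℤ β).natAbs - 1 = 2 * (((Algebra.norm ℤ β).natAbs - 1) / 2) := by
    have : (Algebra.norm ℤ β).natAbs % 2 = 1 := by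
      have := Int.odd_iff.mp hodd
      omega
    omega
  rw [h2] at hf
  generalize ((Algebra.norm ℤ β).natAbs - 1) / 2 = e at *
  rw [mul_pow, ← pow_mul]
  have := dvd_add (hf.mul_right (x ^ e)) h
  refine this.trans (dvd_of_eq ?_)
  ring

end field
end QR5

/-- Quadratic reciprocity over `F₀ = ℚ(√5)`:  let `λ, β ∈ 𝓞 F₀` be relatively
prime elements of odd norm, generating prime ideals, with `−λ` a square modulo
`4·𝓞 F₀` and `β` totally positive.  Then `(−λ/β)·(β/λ) = 1`, where the
quadratic residue symbol `(α/β) ∈ {±1}` is characterized by Euler's criterion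
`(α/β) ≡ α^{(N(β)−1)/2} mod β`. -/
theorem quadratic_reciprocity_sqrt5
    (F₀ : Type*) [Field F₀] [NumberField F₀]
    (sq5 : F₀) (h5 : sq5 ^ 2 = 5)
    (hgen : IntermediateField.adjoin ℚ {sq5} = ⊤)
    (lam β : 𝓞 F₀)
    (hlam : Prime lam) (hβ : Prime β)
    (hoddlam : Odd (Algebra.norm ℤ lam)) (hoddβ : Odd (Algebra.norm ℤ β))
    (hsq4 : ∃ X : 𝓞 F₀, (4 : 𝓞 F₀) ∣ (-lam - X ^ 2))
    (hβpos : ∀ φ : F₀ →+* ℝ, 0 < φ (algebraMap (𝓞 F₀) F₀ β))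
    (hcop : IsCoprime lam β)
    (a b : ℤ) (ha : a = 1 ∨ a = -1) (hb : b = 1 ∨ b = -1)
    -- `a = (−λ/β)`, by Euler's criterion
    (hA : β ∣ ((-lam) ^ (((Algebra.norm ℤ β).natAbs - 1) / 2) - (a : 𝓞 F₀)))
    -- `b = (β/λ)`, by Euler's criterion
    (hB : lam ∣ (β ^ (((Algebra.norm ℤ lam).natAbs - 1) / 2) - (b : 𝓞 F₀))) :
    a * b = 1 := by
  obtain ⟨w, hG, hwv⟩ := QR5.exists_gold sq5 h5 hgen
  have hN := QR5.norm_el hG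
  have hwu : IsUnit w := by
    rw [isUnit_iff_dvd_one]
    exact ⟨w - 1, by linear_combination -hG.sq⟩
  have hw2 : w ^ 2 = QR5.el w 1 1 := by rw [hG.sq]; simp only [QR5.el]; push_cast; ring
  have hw4 : w ^ 4 = QR5.el w 2 3 := by
    simp only [QR5.el]; push_cast; linear_combination (w ^ 2 + w + 2) * hG.sq
  have hnw2 : Algebra.norm ℤ (w ^ 2) = 1 := by rw [hw2, hN]; norm_num [QR5.nm]
  have hnw4 : Algebra.norm ℤ (w ^ 4) = 1 := by rw [hw4, hN]; norm_num [QR5.nm]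
  -- normalise `-lam`
  obtain ⟨v, c, d, hv, hvn, hvcd, hc, hd⟩ : ∃ (v : 𝓞 F₀) (c d : ℤ), IsUnit v ∧
      Algebra.norm ℤ (v ^ 2) = 1 ∧ v ^ 2 * (-lam) = QR5.el w c d ∧ c % 4 = 1 ∧ d % 4 = 0 := by
    obtain ⟨X, Z, hZ⟩ := hsq4
    obtain ⟨x, y, rfl⟩ := hG.span X
    obtain ⟨z, t, rfl⟩ := hG.span Z
    have hl : -lam = QR5.el w (x ^ 2 + y ^ 2 + 4 * z) (2 * x * y + y ^ 2 + 4 * t) := by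
      simp only [QR5.el] at *
      push_cast
      linear_combination hZ + (y : 𝓞 F₀) ^ 2 * hG.sq
    rcases Int.even_or_odd' x with ⟨i, hx | hx⟩ <;> rcases Int.even_or_odd' y with ⟨j, hy | hy⟩
    · exfalso
      have hn : Algebra.norm ℤ lam = Algebra.norm ℤ (-lam) := by
        obtain ⟨a', b', h'⟩ := hG.span lam
        have h'' : -lam = QR5.el w (-a') (-b') := by rw [h']; simp only [QR5.el]; push_cast; ring
        rw [h'', h', hN, hN]; simp only [QR5.nm]; ring
      rw [hn, hl, hN] at hoddlam
      have e : QR5.nm (x ^ 2 + y ^ 2 + 4 * z) (2 * x * y + y ^ 2 + 4 * t) =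
          2 * (8 * QR5.nm (i ^ 2 + j ^ 2 + z) (2 * i * j + j ^ 2 + t)) := by
        rw [hx, hy]; simp only [QR5.nm]; ring
      rw [e] at hoddlam
      have := Int.odd_iff.mp hoddlam
      omega
    · refine ⟨w ^ 2, 2 * (x ^ 2 + y ^ 2 + 4 * z) + 3 * (2 * x * y + y ^ 2 + 4 * t),
        3 * (x ^ 2 + y ^ 2 + 4 * z) + 5 * (2 * x * y + y ^ 2 + 4 * t), hwu.pow 2, ?_, ?_, ?_, ?_⟩
      · rw [← pow_mul]; exact hnw4
      · rw [← pow_mul, show 2 * 2 = 4 from rfl, hw4, hl, hG.mul]; congr 1; ring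
      · have e : 2 * (x ^ 2 + y ^ 2 + 4 * z) + 3 * (2 * x * y + y ^ 2 + 4 * t) =
          4 * (2 * i ^ 2 + 2 * z + 6 * i * j + 3 * i + 3 * t + 5 * j ^ 2 + 5 * j + 1) + 1 := by
          rw [hx, hy]; ring
        omega
      · have e : 3 * (x ^ 2 + y ^ 2 + 4 * z) + 5 * (2 * x * y + y ^ 2 + 4 * t) =
          4 * (3 * i ^ 2 + 3 * z + 10 * i * j + 5 * i + 5 * t + 8 * j ^ 2 + 8 * j + 2) := by
          rw [hx, hy]; ring
        omega
    · refine ⟨1, (x ^ 2 + y ^ 2 + 4 * z), (2 * x * y + y ^ 2 + 4 * t), isUnit_one, by simp, ?_, ?_, ?_⟩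
      · rw [← hl]; ring
      · have e : x ^ 2 + y ^ 2 + 4 * z = 4 * (i ^ 2 + i + j ^ 2 + z) + 1 := by rw [hx, hy]; ring
        omega
      · have e : 2 * x * y + y ^ 2 + 4 * t = 4 * (2 * i * j + j + j ^ 2 + t) := by rw [hx, hy]; ring
        omega
    · refine ⟨w, (x ^ 2 + y ^ 2 + 4 * z) + (2 * x * y + y ^ 2 + 4 * t),
        (x ^ 2 + y ^ 2 + 4 * z) + 2 * (2 * x * y + y ^ 2 + 4 * t), hwu, hnw2, ?_, ?_, ?_⟩
      · rw [hw2, hl, hG.mul]; congr 1 <;> ring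
      · have e : (x ^ 2 + y ^ 2 + 4 * z) + (2 * x * y + y ^ 2 + 4 * t) =
          4 * (i ^ 2 + 2 * i + z + 2 * i * j + 2 * j ^ 2 + 3 * j + t + 1) + 1 := by
          rw [hx, hy]; ring
        omega
      · have e : (x ^ 2 + y ^ 2 + 4 * z) + 2 * (2 * x * y + y ^ 2 + 4 * t) =
          4 * (i ^ 2 + 3 * i + z + 4 * i * j + 3 * j ^ 2 + 5 * j + 2 * t + 2) := by
          rw [hx, hy]; ring
        omega
  -- normalise `β`
  obtain ⟨u, a', b', hu, hun, hucd, hb'⟩ : ∃ (u : 𝓞 F₀) (a' b' : ℤ), IsUnit u ∧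
      Algebra.norm ℤ (u ^ 2) = 1 ∧ u ^ 2 * β = QR5.el w a' b' ∧ b' % 2 = 1 := by
    obtain ⟨x, y, hxy⟩ := hG.span β
    rcases Int.even_or_odd' y with ⟨j, hy | hy⟩
    · rcases Int.even_or_odd' x with ⟨i, hx | hx⟩
      · exfalso
        rw [hxy, hN] at hoddβ
        have e : QR5.nm x y = 2 * (2 * QR5.nm i j) := by
          rw [hx, hy]; simp only [QR5.nm]; ring
        rw [e] at hoddβ
        have := Int.odd_iff.mp hoddβ
        omega
      · refine ⟨w, x + y, x + 2 * y, hwu, hnw2, ?_, by omega⟩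
        rw [hw2, hxy, hG.mul]; congr 1 <;> ring
    · exact ⟨1, x, y, isUnit_one, by simp, by rw [hxy]; ring, by omega⟩
  have hu2 : IsUnit (u ^ 2) := hu.pow 2
  have hv2 : IsUnit (v ^ 2) := hv.pow 2
  -- positivity
  have hpos : ∀ φ : F₀ →+* ℝ, 0 < (a' : ℝ) + b' * ((1 + φ sq5) / 2) := by
    intro φ
    have h1 := congrArg (fun z => φ (algebraMap (𝓞 F₀) F₀ z)) hucd
    simp only [QR5.el, map_mul, map_pow, map_add, map_intCast, hwv, map_div₀, map_one, map_ofNat] at h1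
    rw [← h1]
    have h2 : φ (algebraMap (𝓞 F₀) F₀ u) ≠ 0 := by
      rw [Ne, map_eq_zero]
      exact (hu.map (algebraMap (𝓞 F₀) F₀)).ne_zero
    exact mul_pos (by positivity) (hβpos φ)
  have hs5 : √(5 : ℝ) ^ 2 = 5 := Real.sq_sqrt (by norm_num)
  obtain ⟨f1, hf1⟩ := QR5.exists_hom sq5 h5 hgen ℝ (√5) hs5
  obtain ⟨f2, hf2⟩ := QR5.exists_hom sq5 h5 hgen ℝ (-√5) (by rw [neg_sq, hs5])
  have hp1 := hpos f1
  have hp2 := hpos f2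
  simp only [RingHom.coe_coe, hf1, hf2] at hp1 hp2
  have hT : 0 < 2 * a' + b' := by
    have : (0 : ℝ) < 2 * a' + b' := by linarith
    exact_mod_cast this
  have hP : 0 < QR5.nm a' b' := by
    have h := mul_pos hp1 hp2
    have : (0 : ℝ) < (a' : ℝ) ^ 2 + a' * b' - (b' : ℝ) ^ 2 := by
      refine h.trans_eq ?_
      linear_combination (-(b' : ℝ) ^ 2 / 4) * hs5
    simp only [QR5.nm]
    exact_mod_cast this
  have hlam' : Prime (-lam) := hlam.neg
  have hoddlam' : Odd (Algebra.norm ℤ (-lam)) := by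
    obtain ⟨x, y, h'⟩ := hG.span lam
    have h'' : -lam = QR5.el w (-x) (-y) := by rw [h']; simp only [QR5.el]; push_cast; ring
    rw [h', hN] at hoddlam
    rw [h'', hN]
    have : QR5.nm (-x) (-y) = QR5.nm x y := by simp only [QR5.nm]; ring
    rwa [this]
  have hnl : Algebra.norm ℤ (-lam) = Algebra.norm ℤ lam := by
    obtain ⟨x, y, h'⟩ := hG.span lam
    have h'' : -lam = QR5.el w (-x) (-y) := by rw [h']; simp only [QR5.el]; push_cast; ring
    rw [h'', h', hN, hN]
    simp only [QR5.nm]; ring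
  have hA' := QR5.transfer β (-lam) (u ^ 2) v hβ hoddβ hu2 hun hv a hA
  have hB' := QR5.transfer (-lam) β (v ^ 2) u hlam' hoddlam' hv2 hvn hu b (by
    rw [hnl, neg_dvd]; exact hB)
  rw [hucd, hvcd, hN] at hA'
  rw [hvcd, hucd, hN] at hB'
  have hprβ : Prime (QR5.el w a' b') := by
    rw [← hucd]; exact (associated_unit_mul_left β _ hu2).symm.prime hβ
  have hprα : Prime (QR5.el w c d) := by
    rw [← hvcd]; exact (associated_unit_mul_left (-lam) _ hv2).symm.prime hlam'
  refine QR5.core hG a' b' c d hb' hc hd hP hT hprβ hprα ?_ ?_ a b ha hb hA' hB'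
  · rw [← hucd, ← hvcd, hu2.mul_left_dvd, hv2.dvd_mul_left, dvd_neg]
    intro h
    exact hβ.not_isUnit (hcop.isUnit_of_dvd' h dvd_rfl)
  · rw [← hucd, ← hvcd, hv2.mul_left_dvd, hu2.dvd_mul_left, neg_dvd]
    intro h
    exact hlam.not_isUnit (hcop.isUnit_of_dvd' dvd_rfl h)
end
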